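/- arXiv:1110.6239 — 2 statements merged into one kernel-verified Lean document; each statement's English description precedes it below -/
import Mathlib

section
/- Let (A, m) be a noetherian local ring with infinite residue field, M a finitely generated A-module of Krull dimension d > 0, J an m-primary ideal, and I_1, ..., I_s ideals of A. Set I = I_1···I_s. Assume ht((I + Ann_A M)/Ann_A M) = h > 0 and that k_0, k_1, ..., k_s are non-negative integers with k_0 + k_1 + ··· + k_s = d − 1 and k_1 + ··· + k_s < h. Let R = {x_1, ..., x_d} be a joint reduction of (I_1, ..., I_s, J) with respect to M of the type (k_1, ..., k_s, k_0+1) such that R is a system of parameters for M. Then e_A(J^{[k_0+1]}, I_1^{[k_1]}, ..., I_s^{[k_s]}, M) = e_A(R, M), i.e., the mixed multiplicity of type (k_1, ..., k_s, k_0+1) equals the Hilbert–Samuel multiplicity of the parameter ideal (x_1, ..., x_d) on M. -/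
open IsLocalRing

section MixedMultDefs

variable (A : Type*) [CommRing A]

/-- The length of an `A`-module `M`, defined as the height of `⊤` in the lattice of
submodules of `M` (i.e. the supremum of lengths of chains of submodules). -/
noncomputable def modLength (M : Type*) [AddCommGroup M] [Module A M] : ℕ∞ :=
  Order.height (⊤ : Submodule A M)

/-- The length of a module as a natural number (`0` if the length is infinite). -/
noncomputable def lenNat (M : Type*) [AddCommGroup M] [Module A M] : ℕ :=
  (modLength A M).toNat

/-- The height of an ideal: the infimum of the heights of the prime ideals containing it. -/
noncomputable def idealHeight (I : Ideal A) : ℕ∞ :=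
  ⨅ (p : PrimeSpectrum A) (_ : I ≤ p.asIdeal), Order.height p

/-- The Krull dimension of a module `M`, i.e. the Krull dimension of `A / Ann_A M`. -/
noncomputable def modDim (M : Type*) [AddCommGroup M] [Module A M] : WithBot ℕ∞ :=
  ringKrullDim (A ⧸ Module.annihilator A M)

/-- `x` is a Rees superficial element of the family of ideals `I = (I 0, …, I (t-1))` with
respect to `M`, as an element of the ideal `I i`:  `x ∈ I i` and
`xM ∩ I_1^{n_1} ⋯ I_i^{n_i + 1} ⋯ I_t^{n_t} M = x I_1^{n_1} ⋯ I_i^{n_i} ⋯ I_t^{n_t} M`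
for all sufficiently large `n i` and arbitrary other exponents. -/
def IsReesSuperficial (M : Type*) [AddCommGroup M] [Module A M] {t : ℕ}
    (I : Fin t → Ideal A) (i : Fin t) (x : A) : Prop :=
  x ∈ I i ∧ ∃ N : ℕ, ∀ n : Fin t → ℕ, N ≤ n i →
    (Ideal.span {x} • (⊤ : Submodule A M)) ⊓
        ((∏ j, I j ^ (n j + if j = i then 1 else 0)) • (⊤ : Submodule A M)) =
      Ideal.span {x} • ((∏ j, I j ^ (n j)) • (⊤ : Submodule A M))

/-- `x 0, …, x (t-1)` is a Rees superficial sequence of the family `I` with respect to `M`,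
where the assignment `c` records to which ideal each element of the sequence belongs:
`x i` is a Rees superficial element of `I`, as an element of `I (c i)`, with respect to
`M / (x 0, …, x (i-1)) M`. -/
def IsReesSuperficialSeq (M : Type*) [AddCommGroup M] [Module A M] {t s : ℕ}
    (I : Fin s → Ideal A) (x : Fin t → A) (c : Fin t → Fin s) : Prop :=
  ∀ i : Fin t,
    IsReesSuperficial A
      (M ⧸ ((Ideal.span (x '' {j | (j : ℕ) < (i : ℕ)})) • (⊤ : Submodule A M)))
      I (c i) (x i)

/-- The assignment `c` has type `(k 0, …, k (s-1))`: for each `i`, exactly `k i` members of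
the sequence are assigned to the ideal indexed by `i`. -/
def OfTypeCount {t s : ℕ} (c : Fin t → Fin s) (k : Fin s → ℕ) : Prop :=
  ∀ i : Fin s, (Finset.univ.filter fun j => c j = i).card = k i

/-- The ideal generated by the members of the sequence `x` assigned (by `c`) to index `i`. -/
def jrIdeal {t s : ℕ} (x : Fin t → A) (c : Fin t → Fin s) (i : Fin s) : Ideal A :=
  Ideal.span (x '' {j | c j = i})

/-- The defining equation of a joint reduction:  all members of the sequence lie in their
assigned ideals, and `I_1^{n_1+1} ⋯ I_s^{n_s+1} M = Σ_i (𝔍_i) I_1^{n_1+1} ⋯ I_i^{n_i} ⋯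
I_s^{n_s+1} M` for all sufficiently large `n_1, …, n_s`, where `𝔍_i` consists of the
members of the sequence assigned to `I i`. -/
def IsJointReductionEq (M : Type*) [AddCommGroup M] [Module A M] {t s : ℕ}
    (I : Fin s → Ideal A) (x : Fin t → A) (c : Fin t → Fin s) : Prop :=
  (∀ j, x j ∈ I (c j)) ∧
  ∃ N : ℕ, ∀ n : Fin s → ℕ, (∀ i, N ≤ n i) →
    ((∏ i, I i ^ (n i + 1)) • (⊤ : Submodule A M)) =
      ∑ i : Fin s, jrIdeal A x c i •
        ((∏ j, I j ^ (n j + if j = i then 0 else 1)) • (⊤ : Submodule A M))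

/-- A joint reduction of the family `I` with respect to `M` of type `k`. -/
def IsJointReduction (M : Type*) [AddCommGroup M] [Module A M] {t s : ℕ}
    (I : Fin s → Ideal A) (x : Fin t → A) (c : Fin t → Fin s) (k : Fin s → ℕ) : Prop :=
  IsJointReductionEq A M I x c ∧ OfTypeCount c k

/-- `x 1, …, x d` is a system of parameters for `M`:  `d = dim M`, the `x j` lie in the
maximal ideal, and `M / (x 1, …, x d) M` has finite length. -/
def IsSOP [IsLocalRing A] (M : Type*) [AddCommGroup M] [Module A M] {d : ℕ}
    (x : Fin d → A) : Prop :=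
  modDim A M = (d : ℕ∞) ∧ (∀ j, x j ∈ maximalIdeal A) ∧
    IsFiniteLength A (M ⧸ ((Ideal.span (Set.range x)) • (⊤ : Submodule A M)))

/-- `e` is the Hilbert–Samuel multiplicity of the ideal `q` on the `d`-dimensional module
`M`: the function `n ↦ ℓ_A(M / q^n M)` is eventually given by a polynomial of degree at
most `d` with `n^d`-coefficient `e / d!`. -/
def IsHSMult (M : Type*) [AddCommGroup M] [Module A M] (q : Ideal A) (d : ℕ) (e : ℕ) :
    Prop :=
  ∃ P : Polynomial ℚ, P.natDegree ≤ d ∧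
    (∃ N : ℕ, ∀ n : ℕ, N ≤ n →
      IsFiniteLength A (M ⧸ (q ^ n • (⊤ : Submodule A M))) ∧
      (lenNat A (M ⧸ (q ^ n • (⊤ : Submodule A M))) : ℚ) = P.eval (n : ℚ)) ∧
    (e : ℚ) = P.coeff d * (Nat.factorial d : ℚ)

/-- The subquotient `J^{n_0} I_1^{n_1} ⋯ I_s^{n_s} M / J^{n_0+1} I_1^{n_1} ⋯ I_s^{n_s} M`. -/
abbrev mixedSub (M : Type*) [AddCommGroup M] [Module A M] {s : ℕ} (J : Ideal A)
    (I : Fin s → Ideal A) (n : Fin (s + 1) → ℕ) : Submodule A M :=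
  (J ^ (n 0) * ∏ i : Fin s, I i ^ (n i.succ)) • (⊤ : Submodule A M)

/-- continued -/
abbrev mixedPiece (M : Type*) [AddCommGroup M] [Module A M] {s : ℕ} (J : Ideal A)
    (I : Fin s → Ideal A) (n : Fin (s + 1) → ℕ) :=
  ↥(mixedSub A M J I n) ⧸
    (Submodule.comap (mixedSub A M J I n).subtype
      ((J ^ (n 0 + 1) * ∏ i : Fin s, I i ^ (n i.succ)) • (⊤ : Submodule A M)))

/-- `e` is the mixed multiplicity `e_A(J^{[k_0+1]}, I_1^{[k_1]}, …, I_s^{[k_s]}; M)`: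
the function `(n_0, …, n_s) ↦ ℓ_A(J^{n_0} I_1^{n_1} ⋯ I_s^{n_s} M / J^{n_0+1} I_1^{n_1}
⋯ I_s^{n_s} M)` is, for all sufficiently large `n_0, …, n_s`, given by a polynomial of
total degree at most `k_0 + k_1 + ⋯ + k_s` whose coefficient of
`n_0^{k_0} n_1^{k_1} ⋯ n_s^{k_s}` is `e / (k_0! k_1! ⋯ k_s!)`. -/
def IsMixedMult (M : Type*) [AddCommGroup M] [Module A M] {s : ℕ} (J : Ideal A)
    (I : Fin s → Ideal A) (k0 : ℕ) (k : Fin s → ℕ) (e : ℕ) : Prop :=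
  ∃ P : MvPolynomial (Fin (s + 1)) ℚ, P.totalDegree ≤ k0 + ∑ i, k i ∧
    (∃ N : ℕ, ∀ n : Fin (s + 1) → ℕ, (∀ i, N ≤ n i) →
      IsFiniteLength A (mixedPiece A M J I n) ∧
      (lenNat A (mixedPiece A M J I n) : ℚ) =
        MvPolynomial.eval (fun i => (n i : ℚ)) P) ∧
    (e : ℚ) = MvPolynomial.coeff (Finsupp.equivFunOnFinite.symm (Fin.cons k0 k)) P *
      ((Nat.factorial k0 * ∏ i, Nat.factorial (k i) : ℕ) : ℚ)

/-- `e` is the mixed multiplicity `e_A(I_1^{[k_1]}, …, I_s^{[k_s]}; M)` of a family of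
`m`-primary ideals: the function `(n_1, …, n_s) ↦ ℓ_A(M / I_1^{n_1} ⋯ I_s^{n_s} M)` is, for
all sufficiently large `n_1, …, n_s`, given by a polynomial of total degree at most
`k_1 + ⋯ + k_s` whose coefficient of `n_1^{k_1} ⋯ n_s^{k_s}` is `e / (k_1! ⋯ k_s!)`. -/
def IsMixedMultPrimary (M : Type*) [AddCommGroup M] [Module A M] {s : ℕ}
    (I : Fin s → Ideal A) (k : Fin s → ℕ) (e : ℕ) : Prop :=
  ∃ P : MvPolynomial (Fin s) ℚ, P.totalDegree ≤ ∑ i, k i ∧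
    (∃ N : ℕ, ∀ n : Fin s → ℕ, (∀ i, N ≤ n i) →
      IsFiniteLength A (M ⧸ ((∏ i, I i ^ (n i)) • (⊤ : Submodule A M))) ∧
      (lenNat A (M ⧸ ((∏ i, I i ^ (n i)) • (⊤ : Submodule A M))) : ℚ) =
        MvPolynomial.eval (fun i => (n i : ℚ)) P) ∧
    (e : ℚ) = MvPolynomial.coeff (Finsupp.equivFunOnFinite.symm k) P *
      ((∏ i, Nat.factorial (k i) : ℕ) : ℚ)

/-- The submodule `(0_M : I^∞) = ⋃_n (0_M : I^n)` of `M`. -/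
def satSub (M : Type*) [AddCommGroup M] [Module A M] (I : Ideal A) : Submodule A M :=
  ⨆ n : ℕ, Submodule.torsionBySet A M ((I ^ n : Ideal A) : Set A)

/-- A polynomial function on an `A`-module `V` with values in the residue field of `A`:
an element of the subalgebra of functions generated by the linear ones. -/
def IsPolyFun [IsLocalRing A] (V : Type*) [AddCommGroup V] [Module A V]
    (f : V → ResidueField A) : Prop :=
  f ∈ Algebra.adjoin A {g : V → ResidueField A | ∃ l : V →ₗ[A] ResidueField A, g = ⇑l}

/-- A Zariski open subset of an `A`-module `V` (for `V` a finite-dimensional vector space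
over the residue field, this is the usual Zariski topology): the complement of the common
zero locus of a set of polynomial functions. -/
def IsZariskiOpen [IsLocalRing A] (V : Type*) [AddCommGroup V] [Module A V]
    (U : Set V) : Prop :=
  ∃ S : Set (V → ResidueField A), (∀ f ∈ S, IsPolyFun A V f) ∧
    U = {v | ∃ f ∈ S, f v ≠ 0}

end MixedMultDefs

section Part1
universe u v

/-- Two-periodic complexes of modules. -/
structure PC (A : Type u) [CommRing A] where
  C0 : Type v
  C1 : Type v
  [g0 : AddCommGroup C0]
  [g1 : AddCommGroup C1]
  [m0 : Module A C0]
  [m1 : Module A C1]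
  d0 : C0 →ₗ[A] C1
  d1 : C1 →ₗ[A] C0
  h0 : ∀ v, d1 (d0 v) = 0
  h1 : ∀ v, d0 (d1 v) = 0

attribute [instance] PC.g0 PC.g1 PC.m0 PC.m1

namespace PC
variable {A : Type u} [CommRing A]

/-- Exchange the two parities. -/
abbrev swap (X : PC.{u, v} A) : PC.{u, v} A where
  C0 := X.C1
  C1 := X.C0
  d0 := X.d1
  d1 := X.d0
  h0 := X.h1
  h1 := X.h0

/-- Homology in even degree. -/
abbrev H (X : PC.{u, v} A) : Type v :=
  (LinearMap.ker X.d0) ⧸ (LinearMap.range X.d1).submoduleOf (LinearMap.ker X.d0)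

/-- Morphisms of two-periodic complexes. -/
structure Hom (X Y : PC.{u, v} A) where
  f0 : X.C0 →ₗ[A] Y.C0
  f1 : X.C1 →ₗ[A] Y.C1
  c0 : ∀ v, Y.d0 (f0 v) = f1 (X.d0 v)
  c1 : ∀ v, Y.d1 (f1 v) = f0 (X.d1 v)

/-- Exchange parities of a morphism. -/
abbrev Hom.swap {X Y : PC.{u, v} A} (f : Hom X Y) : Hom X.swap Y.swap where
  f0 := f.f1
  f1 := f.f0
  c0 := f.c1
  c1 := f.c0

/-- the class of a cycle -/
def cls (X : PC.{u, v} A) : LinearMap.ker X.d0 →ₗ[A] X.H := Submodule.mkQ _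

lemma cls_surj (X : PC.{u, v} A) : Function.Surjective X.cls := Submodule.mkQ_surjective _

lemma cls_eq_zero (X : PC.{u, v} A) (z : LinearMap.ker X.d0) :
    X.cls z = 0 ↔ ∃ w, X.d1 w = z.1 := by
  simp only [cls, Submodule.mkQ_apply]
  rw [Submodule.Quotient.mk_eq_zero, Submodule.submoduleOf, Submodule.mem_comap]
  simp

/-- the map on cycles -/
def Hom.Zmap {X Y : PC.{u, v} A} (f : Hom X Y) : LinearMap.ker X.d0 →ₗ[A] LinearMap.ker Y.d0 :=
  f.f0.restrict (fun v hv => by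
    rw [LinearMap.mem_ker] at hv ⊢
    rw [f.c0, hv, map_zero])

lemma Hom.Zmap_coe {X Y : PC.{u, v} A} (f : Hom X Y) (z : LinearMap.ker X.d0) :
    ((f.Zmap z : LinearMap.ker Y.d0) : Y.C0) = f.f0 z.1 := rfl

/-- the map on homology -/
def Hom.Hmap {X Y : PC.{u, v} A} (f : Hom X Y) : X.H →ₗ[A] Y.H :=
  Submodule.mapQ _ _ f.Zmap (by
    rintro ⟨z, hz⟩ hz'
    rw [Submodule.submoduleOf, Submodule.mem_comap] at hz'
    obtain ⟨w, hw⟩ := hz'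
    rw [Submodule.mem_comap, Submodule.submoduleOf, Submodule.mem_comap]
    refine ⟨f.f1 w, ?_⟩
    rw [f.c1, hw]
    rfl)

lemma Hom.Hmap_cls {X Y : PC.{u, v} A} (f : Hom X Y) (z : LinearMap.ker X.d0) :
    f.Hmap (X.cls z) = Y.cls (f.Zmap z) := rfl

/-- Short exact sequences. -/
structure SES {X Y Z : PC.{u, v} A} (i : Hom X Y) (p : Hom Y Z) : Prop where
  inj0 : Function.Injective i.f0
  inj1 : Function.Injective i.f1
  ex0 : Function.Exact i.f0 p.f0
  ex1 : Function.Exact i.f1 p.f1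
  surj0 : Function.Surjective p.f0
  surj1 : Function.Surjective p.f1

lemma SES.swap {X Y Z : PC.{u, v} A} {i : Hom X Y} {p : Hom Y Z} (h : SES i p) :
    SES i.swap p.swap :=
  ⟨h.inj1, h.inj0, h.ex1, h.ex0, h.surj1, h.surj0⟩

lemma SES.exactH {X Y Z : PC.{u, v} A} {i : Hom X Y} {p : Hom Y Z} (h : SES i p) :
    Function.Exact i.Hmap p.Hmap := by
  intro y
  obtain ⟨⟨y, hy⟩, rfl⟩ := Y.cls_surj y
  rw [Hom.Hmap_cls, cls_eq_zero, Hom.Zmap_coe]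
  constructor
  · rintro ⟨w, hw⟩
    obtain ⟨w, rfl⟩ := h.surj1 w
    rw [p.c1] at hw
    obtain ⟨x, hx⟩ := (h.ex0 (y - Y.d1 w)).1 (by rw [map_sub, hw]; simp)
    have hxk : X.d0 x = 0 := by
      apply h.inj1
      rw [← i.c0, hx, map_sub, Y.h1, LinearMap.mem_ker.1 hy]; simp
    refine ⟨X.cls ⟨x, hxk⟩, ?_⟩
    rw [Hom.Hmap_cls, ← sub_eq_zero, ← map_sub, cls_eq_zero]
    refine ⟨-w, ?_⟩
    rw [AddSubgroupClass.coe_sub, Hom.Zmap_coe, hx]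
    simp
  · rintro ⟨x, hx⟩
    obtain ⟨⟨x, hxk⟩, rfl⟩ := X.cls_surj x
    rw [Hom.Hmap_cls, ← sub_eq_zero, ← map_sub, cls_eq_zero] at hx
    obtain ⟨w, hw⟩ := hx
    rw [AddSubgroupClass.coe_sub, Hom.Zmap_coe] at hw
    refine ⟨-p.f1 w, ?_⟩
    rw [map_neg, p.c1, hw, map_sub, h.ex0.apply_apply_eq_zero]
    simp

lemma SES.length_coker {X Y Z : PC.{u, v} A} {i : Hom X Y} {p : Hom Y Z} (h : SES i p) :
    Module.length A (Z.H ⧸ LinearMap.range p.Hmap) =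
      Module.length A (LinearMap.ker i.swap.Hmap) := by
  let W : Submodule A (Y.C0) := LinearMap.ker (Z.d0.comp p.f0)
  let ψ0 : W →ₗ[A] LinearMap.ker Z.d0 := p.f0.restrict (fun v hv => hv)
  let ψ : W →ₗ[A] Z.H ⧸ LinearMap.range p.Hmap := (Submodule.mkQ _).comp (Z.cls.comp ψ0)
  have hW : ∀ w : W, ∃ x : LinearMap.ker X.swap.d0, i.f1 x.1 = Y.d0 w.1 := by
    rintro ⟨w, hw⟩
    have hw' : Z.d0 (p.f0 w) = 0 := hw
    rw [p.c0] at hw'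
    obtain ⟨x, hx⟩ := (h.ex1 _).1 hw'
    refine ⟨⟨x, ?_⟩, hx⟩
    rw [LinearMap.mem_ker]
    apply h.inj0
    have : i.f0 (X.d1 x) = 0 := by rw [← i.c1, hx, Y.h0]
    rw [map_zero]; exact this
  choose g hg using hW
  let φ0 : W →ₗ[A] LinearMap.ker X.swap.d0 :=
    { toFun := g
      map_add' := fun a b => by
        apply Subtype.ext
        apply h.inj1
        rw [hg, Submodule.coe_add, Submodule.coe_add, map_add, map_add, hg, hg]
      map_smul' := fun a b => by
        apply Subtype.ext
        apply h.inj1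
        rw [hg, RingHom.id_apply, SetLike.val_smul, SetLike.val_smul, map_smul, map_smul, hg] }
  let φ : W →ₗ[A] X.swap.H := X.swap.cls.comp φ0
  have hr : LinearMap.range φ = LinearMap.ker i.swap.Hmap := by
    apply le_antisymm
    · rintro _ ⟨w, rfl⟩
      rw [LinearMap.mem_ker]
      change i.swap.Hmap (X.swap.cls (φ0 w)) = 0
      rw [Hom.Hmap_cls, cls_eq_zero]
      exact ⟨w.1, (hg w).symm⟩
    · intro x hx
      obtain ⟨x, rfl⟩ := X.swap.cls_surj x
      rw [LinearMap.mem_ker, Hom.Hmap_cls, cls_eq_zero] at hx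
      obtain ⟨w, hw⟩ := hx
      have hw' : Y.d0 w = i.f1 x.1 := hw
      refine ⟨⟨w, ?_⟩, ?_⟩
      · change Z.d0 (p.f0 w) = 0
        rw [p.c0, hw', h.ex1.apply_apply_eq_zero]
      · change X.swap.cls (g _) = _
        congr 1
        apply Subtype.ext
        apply h.inj1
        rw [hg, hw']
  have hk : LinearMap.ker ψ = LinearMap.ker φ := by
    ext w
    rw [LinearMap.mem_ker, LinearMap.mem_ker]
    change Submodule.mkQ _ (Z.cls (ψ0 w)) = 0 ↔ X.swap.cls (g w) = 0
    rw [Submodule.mkQ_apply, Submodule.Quotient.mk_eq_zero, cls_eq_zero]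
    constructor
    · rintro ⟨y, hy⟩
      obtain ⟨y, rfl⟩ := Y.cls_surj y
      rw [Hom.Hmap_cls, ← sub_eq_zero, ← map_sub, cls_eq_zero] at hy
      obtain ⟨v, hv⟩ := hy
      obtain ⟨v, rfl⟩ := h.surj1 v
      rw [AddSubgroupClass.coe_sub, Hom.Zmap_coe, p.c1] at hv
      have hv' : p.f0 (Y.d1 v) = p.f0 y.1 - p.f0 w.1 := hv
      obtain ⟨x, hx⟩ := (h.ex0 (w.1 - y.1 + Y.d1 v)).1 (by rw [map_add, map_sub, hv']; abel)
      refine ⟨x, ?_⟩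
      apply h.inj1
      rw [hg]
      change i.f1 (X.d0 x) = _
      rw [← i.c0, hx, map_add, map_sub, Y.h1, LinearMap.mem_ker.1 y.2]; simp
    · rintro ⟨x, hx⟩
      have hx' : X.d0 x = (g w).1 := hx
      refine ⟨Y.cls ⟨w.1 - i.f0 x, ?_⟩, ?_⟩
      · rw [LinearMap.mem_ker, map_sub, i.c0, hx', hg, sub_self]
      · rw [Hom.Hmap_cls]
        congr 1
        apply Subtype.ext
        rw [Hom.Zmap_coe, map_sub, h.ex0.apply_apply_eq_zero, sub_zero]
        rfl
  have hs : Function.Surjective ψ := by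
    intro z
    obtain ⟨z, rfl⟩ := Submodule.mkQ_surjective _ z
    obtain ⟨⟨z, hz⟩, rfl⟩ := Z.cls_surj z
    obtain ⟨y, rfl⟩ := h.surj0 z
    exact ⟨⟨y, hz⟩, rfl⟩
  rw [← hr, ← (LinearMap.quotKerEquivRange φ).length_eq,
    ← (LinearMap.quotKerEquivOfSurjective ψ hs).length_eq, hk]

lemma len_ker_range {N P : Type*} [AddCommGroup N] [Module A N] [AddCommGroup P] [Module A P]
    (f : N →ₗ[A] P) : Module.length A N =
      Module.length A (LinearMap.ker f) + Module.length A (LinearMap.range f) :=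
  Module.length_eq_add_of_exact (LinearMap.ker f).subtype f.rangeRestrict
    (Submodule.subtype_injective _) f.surjective_rangeRestrict
    (by
      intro y
      constructor
      · intro hy
        exact ⟨⟨y, by simpa using congrArg Subtype.val hy⟩, rfl⟩
      · rintro ⟨y, rfl⟩
        exact Subtype.ext (by simp))

lemma len_sub_quot {N : Type*} [AddCommGroup N] [Module A N] (S : Submodule A N) :
    Module.length A N = Module.length A S + Module.length A (N ⧸ S) :=
  Module.length_eq_add_of_exact S.subtype S.mkQ (Submodule.subtype_injective _)
    (Submodule.mkQ_surjective _) (by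
      intro y
      simp)

/-- six numbers governing the long exact sequence -/
lemma SES.six {X Y Z : PC.{u, v} A} {i : Hom X Y} {p : Hom Y Z} (h : SES i p) :
    ∃ r1 r2 r3 r4 r5 r6 : ℕ∞,
      Module.length A X.H = r6 + r1 ∧ Module.length A Y.H = r1 + r2 ∧
      Module.length A Z.H = r2 + r3 ∧ Module.length A X.swap.H = r3 + r4 ∧
      Module.length A Y.swap.H = r4 + r5 ∧ Module.length A Z.swap.H = r5 + r6 := by
  refine ⟨Module.length A (LinearMap.range i.Hmap), Module.length A (LinearMap.range p.Hmap),
    Module.length A (LinearMap.ker i.swap.Hmap), Module.length A (LinearMap.range i.swap.Hmap),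
    Module.length A (LinearMap.range p.swap.Hmap), Module.length A (LinearMap.ker i.Hmap),
    len_ker_range _, ?_, ?_, len_ker_range _, ?_, ?_⟩
  · rw [len_ker_range p.Hmap, h.exactH.linearMap_ker_eq]
  · rw [len_sub_quot (LinearMap.range p.Hmap), h.length_coker]
  · rw [len_ker_range p.swap.Hmap, h.swap.exactH.linearMap_ker_eq]
  · rw [len_sub_quot (LinearMap.range p.swap.Hmap), h.swap.length_coker]

/-- finite length homology -/
def fin (X : PC.{u, v} A) : Prop := Module.length A X.H ≠ ⊤ ∧ Module.length A X.swap.H ≠ ⊤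

/-- Euler characteristic -/
noncomputable def chi (X : PC.{u, v} A) : ℤ :=
  ((Module.length A X.H).toNat : ℤ) - ((Module.length A X.swap.H).toNat : ℤ)

lemma fin.swap {X : PC.{u, v} A} (h : X.fin) : X.swap.fin := ⟨h.2, h.1⟩

lemma chi_swap (X : PC.{u, v} A) : X.swap.chi = - X.chi := by
  simp only [chi]
  rw [neg_sub]

lemma toNat_add' {a b : ℕ∞} (ha : a ≠ ⊤) (hb : b ≠ ⊤) : (a + b).toNat = a.toNat + b.toNat :=
  ENat.toNat_add ha hb

section
variable {X Y Z : PC.{u, v} A} {i : Hom X Y} {p : Hom Y Z}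

lemma SES.fin2 (h : SES i p) (hX : X.fin) (hZ : Z.fin) : Y.fin := by
  obtain ⟨r1, r2, r3, r4, r5, r6, e1, e2, e3, e4, e5, e6⟩ := h.six
  simp only [fin, e1, e2, e3, e4, e5, e6, ne_eq, ENat.add_eq_top] at *
  tauto

lemma SES.fin1 (h : SES i p) (hX : Y.fin) (hZ : Z.fin) : X.fin := by
  obtain ⟨r1, r2, r3, r4, r5, r6, e1, e2, e3, e4, e5, e6⟩ := h.six
  simp only [fin, e1, e2, e3, e4, e5, e6, ne_eq, ENat.add_eq_top] at *
  tauto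

lemma SES.fin3 (h : SES i p) (hX : X.fin) (hZ : Y.fin) : Z.fin := by
  obtain ⟨r1, r2, r3, r4, r5, r6, e1, e2, e3, e4, e5, e6⟩ := h.six
  simp only [fin, e1, e2, e3, e4, e5, e6, ne_eq, ENat.add_eq_top] at *
  tauto

lemma SES.chi (h : SES i p) (hX : X.fin) (hZ : Z.fin) : Y.chi = X.chi + Z.chi := by
  obtain ⟨r1, r2, r3, r4, r5, r6, e1, e2, e3, e4, e5, e6⟩ := h.six
  simp only [fin, PC.chi, e1, e2, e3, e4, e5, e6, ne_eq, ENat.add_eq_top, not_or] at *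
  obtain ⟨⟨a, b⟩, c, d⟩ := hX
  obtain ⟨⟨a', b'⟩, c', d'⟩ := hZ
  lift r1 to ℕ using by assumption
  lift r2 to ℕ using by assumption
  lift r3 to ℕ using by assumption
  lift r4 to ℕ using by assumption
  lift r5 to ℕ using by assumption
  lift r6 to ℕ using by assumption
  simp only [← Nat.cast_add, ENat.toNat_natCast]
  push_cast
  ring
end

lemma H_len (X : PC.{u, v} A) : Module.length A (LinearMap.ker X.d0) =
    Module.length A (LinearMap.range X.d1) + Module.length A X.H := by
  have hle : LinearMap.range X.d1 ≤ LinearMap.ker X.d0 := by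
    rintro _ ⟨w, rfl⟩
    exact X.h1 w
  rw [len_sub_quot ((LinearMap.range X.d1).submoduleOf (LinearMap.ker X.d0)),
    (Submodule.submoduleOfEquivOfLe hle).length_eq]

lemma fin_of_terms (X : PC.{u, v} A) (h0 : Module.length A X.C0 ≠ ⊤)
    (h1 : Module.length A X.C1 ≠ ⊤) :
    X.fin ∧ X.chi = (Module.length A X.C0).toNat - (Module.length A X.C1).toNat := by
  have a1 := len_ker_range X.d0
  have a2 := len_ker_range X.d1
  have b1 := H_len X
  have b2 : Module.length A (LinearMap.ker X.d1) =
    Module.length A (LinearMap.range X.d0) + Module.length A X.swap.H := H_len X.swap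
  generalize Module.length A (LinearMap.ker X.d1) = k1 at *
  generalize Module.length A (LinearMap.ker X.d0) = k0 at *
  simp only [fin, PC.chi]
  generalize Module.length A X.H = r1 at *
  generalize Module.length A X.swap.H = r2 at *
  generalize Module.length A (LinearMap.range X.d0) = r3 at *
  generalize Module.length A (LinearMap.range X.d1) = r4 at *
  subst b1 b2
  rw [a1] at h0
  rw [a2] at h1
  rw [a1, a2]
  simp only [ne_eq, ENat.add_eq_top, not_or] at *
  obtain ⟨⟨a, b⟩, c⟩ := h0
  obtain ⟨⟨a', b'⟩, c'⟩ := h1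
  refine ⟨⟨b, b'⟩, ?_⟩
  lift r1 to ℕ using by assumption
  lift r2 to ℕ using by assumption
  lift r3 to ℕ using by assumption
  lift r4 to ℕ using by assumption
  simp only [← Nat.cast_add, ENat.toNat_natCast]
  push_cast
  ring
end PC

end Part1

section Part2
universe u v
namespace PC
variable {A : Type u} [CommRing A]

/-- the mapping cone of multiplication by `y` -/
abbrev cone (y : A) (X : PC.{u, v} A) : PC.{u, v} A where
  C0 := X.C0 × X.C1
  C1 := X.C1 × X.C0
  d0 := (X.d0.coprod (y • LinearMap.id)).prod (-(X.d1.comp (LinearMap.snd A X.C0 X.C1)))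
  d1 := (X.d1.coprod (y • LinearMap.id)).prod (-(X.d0.comp (LinearMap.snd A X.C1 X.C0)))
  h0 := by
    rintro ⟨a, b⟩
    simp [X.h0, X.h1]
  h1 := by
    rintro ⟨a, b⟩
    simp [X.h0, X.h1]

lemma cone_d0 (y : A) (X : PC.{u, v} A) (a : X.C0) (b : X.C1) :
    (cone y X).d0 (a, b) = (X.d0 a + y • b, - X.d1 b) := rfl
lemma cone_d1 (y : A) (X : PC.{u, v} A) (a : X.C1) (b : X.C0) :
    (cone y X).d1 (a, b) = (X.d1 a + y • b, - X.d0 b) := rfl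

/-- functoriality of the cone -/
abbrev Hom.cone (y : A) {X Y : PC.{u, v} A} (f : Hom X Y) : Hom (cone y X) (cone y Y) where
  f0 := f.f0.prodMap f.f1
  f1 := f.f1.prodMap f.f0
  c0 := by
    rintro ⟨a, b⟩
    simp [f.c0, f.c1]
  c1 := by
    rintro ⟨a, b⟩
    simp [f.c0, f.c1]

/-- a complex into its cone -/
abbrev coneIn (y : A) (X : PC.{u, v} A) : Hom X (cone y X) where
  f0 := LinearMap.inl A _ _
  f1 := LinearMap.inl A _ _
  c0 := by
    intro v
    simp
  c1 := by
    intro v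
    simp

/-- the cone onto the shifted complex -/
abbrev coneOut (y : A) (X : PC.{u, v} A) : Hom (cone y X) X.swap where
  f0 := LinearMap.snd A _ _
  f1 := - LinearMap.snd A _ _
  c0 := by
    rintro ⟨a, b⟩
    simp
  c1 := by
    rintro ⟨a, b⟩
    simp

lemma cone_ses (y : A) (X : PC.{u, v} A) : SES (coneIn y X) (coneOut y X) where
  inj0 := LinearMap.inl_injective
  inj1 := LinearMap.inl_injective
  ex0 := by
    rintro ⟨a, b⟩
    simp [eq_comm]
  ex1 := by
    rintro ⟨a, b⟩
    simp [eq_comm]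
  surj0 := LinearMap.snd_surjective
  surj1 := by
    intro b
    exact ⟨(0, -b), by simp⟩

lemma SES.cone (y : A) {X Y Z : PC.{u, v} A} {i : Hom X Y} {p : Hom Y Z} (h : SES i p) :
    SES (i.cone y) (p.cone y) where
  inj0 := Function.Injective.prodMap h.inj0 h.inj1
  inj1 := Function.Injective.prodMap h.inj1 h.inj0
  ex0 := by
    rintro ⟨a, b⟩
    have := h.ex0 a
    have := h.ex1 b
    simp_all
  ex1 := by
    rintro ⟨a, b⟩
    have := h.ex1 a
    have := h.ex0 b
    simp_all
  surj0 := Function.Surjective.prodMap h.surj0 h.surj1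
  surj1 := Function.Surjective.prodMap h.surj1 h.surj0

section kos
variable {κ : Type*} (x : κ → A)

/-- iterated cones -/
def Kos : List κ → PC.{u, v} A → PC.{u, v} A
  | [], C => C
  | (j :: L), C => Kos L (cone (x j) C)

lemma Kos_swap (L : List κ) (C : PC.{u, v} A) : (Kos x L C).swap = Kos x L C.swap := by
  induction L generalizing C with
  | nil => rfl
  | cons j L ih =>
    simp only [Kos]
    rw [ih]

lemma Kos_append (L L' : List κ) (C : PC.{u, v} A) :
    Kos x (L ++ L') C = Kos x L' (Kos x L C) := by
  induction L generalizing C with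
  | nil => rfl
  | cons j L ih => exact ih _

/-- functoriality -/
def Hom.kos : (L : List κ) → {C D : PC.{u, v} A} → (f : Hom C D) → Hom (Kos x L C) (Kos x L D)
  | [], _, _, f => f
  | (j :: L), _, _, f => Hom.kos L (f.cone (x j))

lemma SES.kos (L : List κ) {X Y Z : PC.{u, v} A} {i : Hom X Y} {p : Hom Y Z} (h : SES i p) :
    SES (i.kos x L) (p.kos x L) := by
  induction L generalizing X Y Z with
  | nil => exact h
  | cons j L ih => exact ih (h.cone (x j))

end kos

/-- a module as a complex -/
abbrev of (N : Type v) [AddCommGroup N] [Module A N] : PC.{u, v} A where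
  C0 := N
  C1 := PUnit
  d0 := 0
  d1 := 0
  h0 := by simp
  h1 := by simp

/-- subcomplexes -/
structure SubPC (X : PC.{u, v} A) where
  S0 : Submodule A X.C0
  S1 : Submodule A X.C1
  s0 : ∀ v ∈ S0, X.d0 v ∈ S1
  s1 : ∀ v ∈ S1, X.d1 v ∈ S0

namespace SubPC
variable {X : PC.{u, v} A}

/-- parity exchange -/
abbrev swap (V : SubPC X) : SubPC X.swap := ⟨V.S1, V.S0, V.s1, V.s0⟩

/-- a subcomplex as a complex -/
abbrev pc (V : SubPC X) : PC.{u, v} A where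
  C0 := V.S0
  C1 := V.S1
  d0 := X.d0.restrict V.s0
  d1 := X.d1.restrict V.s1
  h0 := fun v => Subtype.ext (X.h0 v.1)
  h1 := fun v => Subtype.ext (X.h1 v.1)

/-- the inclusion -/
abbrev incl (V : SubPC X) : Hom V.pc X where
  f0 := V.S0.subtype
  f1 := V.S1.subtype
  c0 := fun _ => rfl
  c1 := fun _ => rfl

/-- quotient complex -/
abbrev quot (V : SubPC X) : PC.{u, v} A where
  C0 := X.C0 ⧸ V.S0
  C1 := X.C1 ⧸ V.S1
  d0 := V.S0.mapQ V.S1 X.d0 V.s0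
  d1 := V.S1.mapQ V.S0 X.d1 V.s1
  h0 := fun v => by
    obtain ⟨v, rfl⟩ := Submodule.mkQ_surjective _ v
    simp [X.h0]
  h1 := fun v => by
    obtain ⟨v, rfl⟩ := Submodule.mkQ_surjective _ v
    simp [X.h1]

/-- the projection -/
abbrev proj (V : SubPC X) : Hom X V.quot where
  f0 := V.S0.mkQ
  f1 := V.S1.mkQ
  c0 := fun _ => rfl
  c1 := fun _ => rfl

/-- the full subcomplex -/
abbrev top (X : PC.{u, v} A) : SubPC X := ⟨⊤, ⊤, fun _ _ => trivial, fun _ _ => trivial⟩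

/-- `V` is the kernel of the surjective map `p` -/
structure IsKer {Z : PC.{u, v} A} (V : SubPC X) (p : Hom X Z) : Prop where
  k0 : ∀ v, p.f0 v = 0 ↔ v ∈ V.S0
  k1 : ∀ v, p.f1 v = 0 ↔ v ∈ V.S1
  surj0 : Function.Surjective p.f0
  surj1 : Function.Surjective p.f1

lemma isKer_proj (V : SubPC X) : V.IsKer V.proj where
  k0 := fun v => by simp
  k1 := fun v => by simp
  surj0 := Submodule.mkQ_surjective _
  surj1 := Submodule.mkQ_surjective _

lemma IsKer.ses {Z : PC.{u, v} A} {V : SubPC X} {p : Hom X Z} (h : V.IsKer p) :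
    SES V.incl p where
  inj0 := Submodule.subtype_injective _
  inj1 := Submodule.subtype_injective _
  ex0 := by
    intro v
    rw [h.k0]
    simp
  ex1 := by
    intro v
    rw [h.k1]
    simp
  surj0 := h.surj0
  surj1 := h.surj1

/-- cone of subcomplexes -/
abbrev coneSub (y : A) (U1 U2 : SubPC X) (hy0 : ∀ v ∈ U2.S0, y • v ∈ U1.S0)
    (hy1 : ∀ v ∈ U2.S1, y • v ∈ U1.S1) : SubPC (cone y X) where
  S0 := U1.S0.prod U2.S1
  S1 := U1.S1.prod U2.S0
  s0 := by
    rintro ⟨a, b⟩ ⟨ha, hb⟩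
    exact ⟨add_mem (U1.s0 _ ha) (hy1 _ hb), neg_mem (U2.s1 _ hb)⟩
  s1 := by
    rintro ⟨a, b⟩ ⟨ha, hb⟩
    exact ⟨add_mem (U1.s1 _ ha) (hy0 _ hb), neg_mem (U2.s0 _ hb)⟩

/-- the Koszul construction on a subcomplex -/
def kosSub {κ : Type*} (x : κ → A) : (L : List κ) → {X : PC.{u, v} A} → (V : SubPC X) →
    SubPC (Kos x L X)
  | [], _, V => V
  | (j :: L), _, V => kosSub x L (coneSub (x j) V V (fun _ h => V.S0.smul_mem _ h)
      (fun _ h => V.S1.smul_mem _ h))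

lemma IsKer.cone (y : A) {Z : PC.{u, v} A} {V : SubPC X} {p : Hom X Z} (h : V.IsKer p) :
    (coneSub y V V (fun _ h => V.S0.smul_mem _ h)
      (fun _ h => V.S1.smul_mem _ h)).IsKer (p.cone y) where
  k0 := by
    rintro ⟨a, b⟩
    simp [h.k0, h.k1]
  k1 := by
    rintro ⟨a, b⟩
    simp [h.k0, h.k1]
  surj0 := Function.Surjective.prodMap h.surj0 h.surj1
  surj1 := Function.Surjective.prodMap h.surj1 h.surj0

lemma IsKer.kos {κ : Type*} (x : κ → A) (L : List κ) {X Z : PC.{u, v} A} {V : SubPC X}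
    {p : Hom X Z} (h : V.IsKer p) : (V.kosSub x L).IsKer (p.kos x L) := by
  induction L generalizing X Z with
  | nil => exact h
  | cons j L ih => exact ih (h.cone (x j))

end SubPC

section qlen
variable {N P : Type*} [AddCommGroup N] [Module A N] [AddCommGroup P] [Module A P]

/-- relative length -/
noncomputable def qlen (U V : Submodule A N) : ℕ∞ := Module.length A (U ⧸ V.submoduleOf U)

lemma qlen_self (U : Submodule A N) : qlen U U = 0 := by
  rw [qlen, Module.length_eq_zero_iff, Submodule.submoduleOf_self]
  exact Submodule.Quotient.subsingleton_iff.2 rfl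

lemma qlen_top (V : Submodule A N) : qlen ⊤ V = Module.length A (N ⧸ V) := by
  rw [qlen]
  refine (Submodule.Quotient.equiv _ _ (Submodule.topEquiv) ?_).length_eq
  ext x
  simp [Submodule.submoduleOf]

lemma qlen_trans {U V W : Submodule A N} (h1 : V ≤ U) (h2 : W ≤ V) :
    qlen U W = qlen U V + qlen V W := by
  rw [add_comm]
  have e1 : W.submoduleOf V ≤ (W.submoduleOf U).comap (Submodule.inclusion h1) :=
    fun x hx => hx
  have e2 : W.submoduleOf U ≤ (V.submoduleOf U).comap LinearMap.id :=
    fun x hx => h2 hx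
  refine Module.length_eq_add_of_exact
    (Submodule.mapQ (W.submoduleOf V) (W.submoduleOf U) (Submodule.inclusion h1) e1)
    (Submodule.mapQ (W.submoduleOf U) (V.submoduleOf U) LinearMap.id e2) ?_ ?_ ?_
  · rw [← LinearMap.ker_eq_bot, eq_bot_iff]
    intro z hz
    obtain ⟨z, rfl⟩ := Submodule.mkQ_surjective _ z
    rw [LinearMap.mem_ker, Submodule.mkQ_apply, Submodule.mapQ_apply,
      Submodule.Quotient.mk_eq_zero] at hz
    rw [Submodule.mem_bot, Submodule.mkQ_apply, Submodule.Quotient.mk_eq_zero]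
    exact hz
  · intro z
    obtain ⟨z, rfl⟩ := Submodule.mkQ_surjective _ z
    exact ⟨Submodule.Quotient.mk z, rfl⟩
  · intro z
    obtain ⟨z, rfl⟩ := Submodule.mkQ_surjective _ z
    rw [Submodule.mkQ_apply, Submodule.mapQ_apply, Submodule.Quotient.mk_eq_zero]
    constructor
    · intro hz
      exact ⟨Submodule.Quotient.mk ⟨z.1, hz⟩, rfl⟩
    · rintro ⟨w, hw⟩
      obtain ⟨w, rfl⟩ := Submodule.mkQ_surjective _ w
      rw [Submodule.mkQ_apply, Submodule.mapQ_apply, Submodule.Quotient.eq] at hw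
      have : w.1 - z.1 ∈ W := hw
      have h3 := h2 this
      have : z.1 = w.1 - (w.1 - z.1) := by abel
      change z.1 ∈ V
      rw [this]
      exact sub_mem w.2 h3

lemma qlen_prod (U V : Submodule A N) (U' V' : Submodule A P) :
    qlen (U.prod U') (V.prod V') = qlen U V + qlen U' V' := by
  let a : U.prod U' →ₗ[A] U := (LinearMap.fst A N P).restrict (fun v hv => hv.1)
  let b : U.prod U' →ₗ[A] U' := (LinearMap.snd A N P).restrict (fun v hv => hv.2)
  let f : U.prod U' →ₗ[A] (U ⧸ V.submoduleOf U) × (U' ⧸ V'.submoduleOf U') :=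
    ((Submodule.mkQ _).comp a).prod ((Submodule.mkQ _).comp b)
  have hk : LinearMap.ker f = (V.prod V').submoduleOf (U.prod U') := by
    ext z
    rw [LinearMap.mem_ker]
    change ((Submodule.mkQ (V.submoduleOf U) (a z), Submodule.mkQ (V'.submoduleOf U') (b z)) :
      _ × _) = 0 ↔ _
    rw [Prod.mk_eq_zero]
    simp only [Submodule.mkQ_apply, Submodule.Quotient.mk_eq_zero]
    rfl
  have hs : Function.Surjective f := by
    rintro ⟨p, q⟩
    obtain ⟨p, rfl⟩ := Submodule.mkQ_surjective _ p
    obtain ⟨q, rfl⟩ := Submodule.mkQ_surjective _ q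
    exact ⟨⟨(p.1, q.1), p.2, q.2⟩, rfl⟩
  rw [qlen, qlen, qlen, ← Module.length_prod, ← (LinearMap.quotKerEquivOfSurjective f hs).length_eq, hk]
end qlen

namespace SubPC
variable {X : PC.{u, v} A}

/-- signed relative length -/
structure SL (U V : SubPC X) (z : ℤ) : Prop where
  le0 : V.S0 ≤ U.S0
  le1 : V.S1 ≤ U.S1
  f0 : qlen U.S0 V.S0 ≠ ⊤
  f1 : qlen U.S1 V.S1 ≠ ⊤
  e : ((qlen U.S0 V.S0).toNat : ℤ) - (qlen U.S1 V.S1).toNat = z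

lemma SL.refl (U : SubPC X) : SL U U 0 :=
  ⟨le_rfl, le_rfl, by simp [qlen_self], by simp [qlen_self], by simp [qlen_self]⟩

lemma SL.trans {U V W : SubPC X} {a b : ℤ} (h1 : SL U V a) (h2 : SL V W b) : SL U W (a + b) := by
  refine ⟨h2.le0.trans h1.le0, h2.le1.trans h1.le1, ?_, ?_, ?_⟩
  · rw [qlen_trans h1.le0 h2.le0]
    simp [h1.f0, h2.f0]
  · rw [qlen_trans h1.le1 h2.le1]
    simp [h1.f1, h2.f1]
  · rw [qlen_trans h1.le0 h2.le0, qlen_trans h1.le1 h2.le1, toNat_add' h1.f0 h2.f0,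
      toNat_add' h1.f1 h2.f1, ← h1.e, ← h2.e]
    push_cast
    ring

lemma SL.cone {y : A} {U1 U2 V1 V2 : SubPC X} {a b : ℤ} (h1 : SL U1 V1 a) (h2 : SL U2 V2 b)
    {p q p' q'} :
    SL (coneSub y U1 U2 p q) (coneSub y V1 V2 p' q') (a - b) := by
  refine ⟨Submodule.prod_mono h1.le0 h2.le1, Submodule.prod_mono h1.le1 h2.le0, ?_, ?_, ?_⟩
  · rw [qlen_prod]
    simp [h1.f0, h2.f1]
  · rw [qlen_prod]
    simp [h1.f1, h2.f0]
  · rw [qlen_prod, qlen_prod, toNat_add' h1.f0 h2.f1,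
      toNat_add' h1.f1 h2.f0, ← h1.e, ← h2.e]
    push_cast
    ring

/-- restriction of a subcomplex to a larger one -/
abbrev restr (U V : SubPC X) : SubPC U.pc where
  S0 := V.S0.submoduleOf U.S0
  S1 := V.S1.submoduleOf U.S1
  s0 := fun v hv => V.s0 _ hv
  s1 := fun v hv => V.s1 _ hv

/-- inclusion of subcomplexes -/
abbrev inclLe (U V : SubPC X) (h0 : V.S0 ≤ U.S0) (h1 : V.S1 ≤ U.S1) : Hom V.pc U.pc where
  f0 := Submodule.inclusion h0
  f1 := Submodule.inclusion h1
  c0 := fun _ => rfl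
  c1 := fun _ => rfl

lemma ses_le (U V : SubPC X) (h0 : V.S0 ≤ U.S0) (h1 : V.S1 ≤ U.S1) :
    SES (inclLe U V h0 h1) (U.restr V).proj where
  inj0 := Submodule.inclusion_injective h0
  inj1 := Submodule.inclusion_injective h1
  ex0 := by
    intro v
    rw [Submodule.mkQ_apply, Submodule.Quotient.mk_eq_zero]
    constructor
    · intro hv
      exact ⟨⟨v.1, hv⟩, rfl⟩
    · rintro ⟨w, rfl⟩
      exact w.2
  ex1 := by
    intro v
    rw [Submodule.mkQ_apply, Submodule.Quotient.mk_eq_zero]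
    constructor
    · intro hv
      exact ⟨⟨v.1, hv⟩, rfl⟩
    · rintro ⟨w, rfl⟩
      exact w.2
  surj0 := Submodule.mkQ_surjective _
  surj1 := Submodule.mkQ_surjective _

lemma SL.fin_chi {U V : SubPC X} {z : ℤ} (h : SL U V z) (hU : U.pc.fin) :
    V.pc.fin ∧ V.pc.chi = U.pc.chi - z := by
  have h1 := ses_le U V h.le0 h.le1
  obtain ⟨h2, h3⟩ := fin_of_terms (U.restr V).quot h.f0 h.f1
  have h4 := h1.fin1 hU h2
  refine ⟨h4, ?_⟩
  have h5 := h1.chi h4 h2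
  have h6 : (U.restr V).quot.chi = z := h3.trans h.e
  rw [h5, h6]
  ring

lemma SL.fin_chi' {U V : SubPC X} {z : ℤ} (h : SL U V z) (hV : V.pc.fin) :
    U.pc.fin ∧ V.pc.chi = U.pc.chi - z := by
  have h1 := ses_le U V h.le0 h.le1
  obtain ⟨h2, h3⟩ := fin_of_terms (U.restr V).quot h.f0 h.f1
  have h4 := h1.fin2 hV h2
  exact ⟨h4, (h.fin_chi h4).2⟩

end SubPC

lemma of_subsingleton (X : PC.{u, v} A) [Subsingleton X.C0] [Subsingleton X.C1] :
    X.fin ∧ X.chi = 0 := by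
  have h0 : Module.length A X.C0 = 0 := Module.length_eq_zero_iff.2 inferInstance
  have h1 : Module.length A X.C1 = 0 := Module.length_eq_zero_iff.2 inferInstance
  have := fin_of_terms X (by simp [h0]) (by simp [h1])
  simpa [h0, h1] using this

lemma SubPC.top_fin {X : PC.{u, v} A} (h : (SubPC.top X).pc.fin) :
    X.fin ∧ X.chi = (SubPC.top X).pc.chi := by
  have h1 := (SubPC.top X).isKer_proj.ses
  haveI : Subsingleton (SubPC.top X).quot.C0 := Submodule.Quotient.subsingleton_iff.2 rfl
  haveI : Subsingleton (SubPC.top X).quot.C1 := Submodule.Quotient.subsingleton_iff.2 rfl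
  obtain ⟨h2, h3⟩ := of_subsingleton (SubPC.top X).quot
  refine ⟨h1.fin2 h h2, ?_⟩
  rw [h1.chi h h2, h3, add_zero]

/-- exactness -/
structure Ex (X : PC.{u, v} A) : Prop where
  e0 : ∀ v, X.d0 v = 0 → ∃ w, X.d1 w = v
  e1 : ∀ v, X.d1 v = 0 → ∃ w, X.d0 w = v

lemma Ex.fin {X : PC.{u, v} A} (h : X.Ex) : X.fin ∧ X.chi = 0 := by
  have key : ∀ Y : PC.{u, v} A, (∀ v, Y.d0 v = 0 → ∃ w, Y.d1 w = v) → Module.length A Y.H = 0 := by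
    intro Y hY
    rw [Module.length_eq_zero_iff]
    refine ⟨fun a b => ?_⟩
    have : ∀ a : Y.H, a = 0 := by
      intro a
      obtain ⟨a, rfl⟩ := Y.cls_surj a
      rw [cls_eq_zero]
      exact hY _ a.2
    rw [this a, this b]
  have h0 := key X h.e0
  have h1 := key X.swap h.e1
  refine ⟨⟨by rw [h0]; simp, by rw [h1]; simp⟩, ?_⟩
  rw [chi, h0, h1]; simp

end PC

end Part2

section Part3
universe u v
open IsLocalRing Pointwise
namespace PC
variable {A : Type u} [CommRing A]

section loc
variable [IsNoetherianRing A] [IsLocalRing A]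

/-- support contained in the closed point -/
def Supp0 (A : Type u) [CommRing A] [IsLocalRing A] (N : Type v) [AddCommGroup N] [Module A N] :
    Prop :=
  ∀ p ∈ Module.support A N, p.asIdeal = maximalIdeal A

lemma supp0_of_finiteLength {N : Type v} [AddCommGroup N] [Module A N]
    (h : IsFiniteLength A N) : Supp0 A N := by
  induction h with
  | of_subsingleton =>
    intro p hp
    rw [Module.support_eq_empty] at hp
    exact hp.elim
  | @of_simple_quotient M _ _ N' _ _ ih =>
    intro p hp
    rw [Module.support_of_exact (f := N'.subtype) (g := N'.mkQ) (by intro y; simp)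
      (Submodule.subtype_injective _) (Submodule.mkQ_surjective _)] at hp
    rcases hp with hp | hp
    · exact ih p hp
    · have h1 := Module.annihilator_le_of_mem_support hp
      have h2 : (Module.annihilator A (M ⧸ N')).IsMaximal :=
        IsSimpleModule.annihilator_isMaximal
      rw [IsLocalRing.eq_maximalIdeal h2] at h1
      exact (le_antisymm (IsLocalRing.le_maximalIdeal p.2.ne_top) h1)

lemma length_of_supp0 {N : Type v} [AddCommGroup N] [Module A N] [hN : Module.Finite A N]
    (h : Supp0 A N) : Module.length A N ≠ ⊤ := by
  revert h
  induction hN using IsNoetherianRing.induction_on_isQuotientEquivQuotientPrime A with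
  | subsingleton N =>
    intro _
    rw [Module.length_eq_zero]; simp
  | quotient N p e =>
    intro h
    have hp : p.asIdeal = maximalIdeal A := by
      apply h
      rw [e.support_eq, Module.support_eq_zeroLocus, Ideal.annihilator_quotient]
      exact (PrimeSpectrum.mem_zeroLocus _ _).2 (fun a ha => ha)
    rw [e.length_eq]
    have hm : p.1.IsMaximal := by rw [hp]; infer_instance
    have : IsSimpleModule A (A ⧸ p.1) := by
      rw [isSimpleModule_iff_isCoatom]
      exact hm.out
    rw [Module.length_eq_one]; simp
  | exact N₁ N₂ N₃ f g hf hg hfg h₁ h₃ =>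
    intro h
    rw [Supp0, Module.support_of_exact hfg hf hg] at h
    rw [Module.length_eq_add_of_exact f g hf hg hfg]
    have a := h₁ (fun p hp => h p (Or.inl hp))
    have b := h₃ (fun p hp => h p (Or.inr hp))
    simp [a, b]

variable {κ : Type*} (x : κ → A)

/-- common zeros of a list on the support -/
def Good (L : List κ) (N : Type v) [AddCommGroup N] [Module A N] : Prop :=
  ∀ p ∈ Module.support A N, (∀ j ∈ L, x j ∈ p.asIdeal) → p.asIdeal = maximalIdeal A

lemma Good.mono {L : List κ} {N N' : Type*} [AddCommGroup N] [Module A N]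
    [AddCommGroup N'] [Module A N'] (h : Good x L N) 
    (hs : Module.support A N' ⊆ Module.support A N) : Good x L N' :=
  fun p hp => h p (hs hp)

lemma good_nil_iff {N : Type v} [AddCommGroup N] [Module A N] [Module.Finite A N] :
    Good x [] N ↔ Module.length A N ≠ ⊤ := by
  constructor
  · intro h
    exact length_of_supp0 (fun p hp => h p hp (by simp))
  · intro h p hp _
    exact supp0_of_finiteLength (Module.length_ne_top_iff.1 h) p hp

lemma good_exact {L : List κ} {N₁ N₂ N₃ : Type v} [AddCommGroup N₁] [Module A N₁]
    [AddCommGroup N₂] [Module A N₂] [AddCommGroup N₃] [Module A N₃]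
    {f : N₁ →ₗ[A] N₂} {g : N₂ →ₗ[A] N₃} (hf : Function.Injective f)
    (hg : Function.Surjective g) (hfg : Function.Exact f g) :
    Good x L N₂ ↔ Good x L N₁ ∧ Good x L N₃ := by
  simp only [Good, Module.support_of_exact hfg hf hg]
  constructor
  · intro h
    exact ⟨fun p hp => h p (Or.inl hp), fun p hp => h p (Or.inr hp)⟩
  · rintro ⟨h1, h2⟩ p (hp | hp)
    · exact h1 p hp
    · exact h2 p hp

/-- the kernel of multiplication -/
abbrev Nk (y : A) (N : Type v) [AddCommGroup N] [Module A N] :=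
  LinearMap.ker (LinearMap.lsmul A N y)

lemma good_quot {j : κ} {L : List κ} {N : Type v} [AddCommGroup N] [Module A N]
    [Module.Finite A N] :
    Good x L (QuotSMulTop (x j) N) ↔ Good x (j :: L) N := by
  simp only [Good, Module.support_quotSMulTop]
  constructor
  · intro h p hp hL
    refine h p ⟨hp, ?_⟩ (fun i hi => hL i (List.mem_cons_of_mem _ hi))
    rw [PrimeSpectrum.mem_zeroLocus, Set.singleton_subset_iff]
    exact hL j List.mem_cons_self
  · rintro h p ⟨hp, hp'⟩ hL
    rw [PrimeSpectrum.mem_zeroLocus, Set.singleton_subset_iff] at hp'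
    refine h p hp (fun i hi => ?_)
    rcases List.mem_cons.1 hi with rfl | hi
    · exact hp'
    · exact hL i hi

lemma good_ker {j : κ} {L : List κ} {N : Type v} [AddCommGroup N] [Module A N]
    [Module.Finite A N] (h : Good x (j :: L) N) : Good x L (Nk (x j) N) := by
  intro p hp hL
  refine h p (Module.support_subset_of_injective (Submodule.subtype _)
    (Submodule.subtype_injective _) hp) (fun i hi => ?_)
  rcases List.mem_cons.1 hi with rfl | hi
  · apply Module.annihilator_le_of_mem_support hp
    rw [Module.mem_annihilator]
    intro m
    exact Subtype.ext m.2
  · exact hL i hi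

end loc

section coneH
variable (y : A) (C : PC.{u, v} A)

/-- left map of the cone sequence in homology -/
noncomputable def coneHL : QuotSMulTop y C.H →ₗ[A] (cone y C).H :=
  Submodule.liftQ _ (coneIn y C).Hmap (by
    intro z hz
    rw [Submodule.mem_smul_pointwise_iff_exists] at hz
    obtain ⟨z, -, rfl⟩ := hz
    obtain ⟨z, rfl⟩ := C.cls_surj z
    rw [LinearMap.mem_ker, ← map_smul, Hom.Hmap_cls, cls_eq_zero]
    refine ⟨(0, z.1), ?_⟩
    change (C.d1 0 + y • z.1, - C.d0 z.1) = (y • z.1, 0)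
    rw [LinearMap.mem_ker.1 z.2]
    simp)

lemma coneHL_inj : Function.Injective (coneHL y C) := by
  rw [← LinearMap.ker_eq_bot, coneHL, Submodule.ker_liftQ_eq_bot']
  apply le_antisymm
  · intro z hz
    rw [Submodule.mem_smul_pointwise_iff_exists] at hz
    obtain ⟨z, -, rfl⟩ := hz
    obtain ⟨z, rfl⟩ := C.cls_surj z
    rw [LinearMap.mem_ker, ← map_smul, Hom.Hmap_cls, cls_eq_zero]
    refine ⟨(0, z.1), ?_⟩
    change (C.d1 0 + y • z.1, - C.d0 z.1) = (y • z.1, 0)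
    rw [LinearMap.mem_ker.1 z.2]
    simp
  · intro z hz
    obtain ⟨z, rfl⟩ := C.cls_surj z
    rw [LinearMap.mem_ker, Hom.Hmap_cls, cls_eq_zero] at hz
    obtain ⟨⟨a, b⟩, hab⟩ := hz
    change (C.d1 a + y • b, - C.d0 b) = (z.1, 0) at hab
    rw [Prod.mk.injEq, neg_eq_zero] at hab
    rw [Submodule.mem_smul_pointwise_iff_exists]
    refine ⟨C.cls ⟨b, hab.2⟩, trivial, ?_⟩
    rw [← map_smul, ← sub_eq_zero, ← map_sub, cls_eq_zero]
    refine ⟨-a, ?_⟩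
    change C.d1 (-a) = y • b - z.1
    rw [map_neg, ← hab.1]
    abel

/-- right map of the cone sequence in homology -/
noncomputable def coneHR : (cone y C).H →ₗ[A] Nk y C.swap.H :=
  (coneOut y C).Hmap.codRestrict _ (by
    intro z
    obtain ⟨⟨⟨a, b⟩, hz⟩, rfl⟩ := (cone y C).cls_surj z
    have hz' : (C.d0 a + y • b, - C.d1 b) = 0 := hz
    rw [LinearMap.mem_ker, LinearMap.lsmul_apply, ← map_smul, ← map_smul, Hom.Hmap_cls,
      cls_eq_zero]
    refine ⟨-a, ?_⟩
    change C.d0 (-a) = y • b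
    rw [Prod.mk_eq_zero] at hz'
    rw [map_neg, neg_eq_iff_add_eq_zero, hz'.1])

lemma coneHR_surj : Function.Surjective (coneHR y C) := by
  rintro ⟨z, hz⟩
  obtain ⟨⟨b, hb⟩, rfl⟩ := C.swap.cls_surj z
  rw [LinearMap.mem_ker, LinearMap.lsmul_apply, ← map_smul, cls_eq_zero] at hz
  obtain ⟨a, ha⟩ := hz
  change C.d0 a = y • b at ha
  change C.d1 b = 0 at hb
  refine ⟨(cone y C).cls ⟨(-a, b), ?_⟩, ?_⟩
  · change (C.d0 (-a) + y • b, - C.d1 b) = 0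
    rw [hb, map_neg, ha]
    simp
  · apply Subtype.ext
    rfl

lemma coneH_exact : Function.Exact (coneHL y C) (coneHR y C) := by
  intro z
  have := (cone_ses y C).exactH z
  have h1 : coneHR y C z = 0 ↔ (coneOut y C).Hmap z = 0 := by
    rw [Subtype.ext_iff]; rfl
  rw [h1, this]
  constructor
  · rintro ⟨w, rfl⟩
    exact ⟨Submodule.Quotient.mk w, rfl⟩
  · rintro ⟨w, rfl⟩
    obtain ⟨w, rfl⟩ := Submodule.mkQ_surjective _ w
    exact ⟨w, rfl⟩
end coneH

/-- finitely generated terms -/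
structure FG (C : PC.{u, v} A) : Prop where
  f0 : Module.Finite A C.C0
  f1 : Module.Finite A C.C1

lemma FG.cone {C : PC.{u, v} A} (h : C.FG) (y : A) : (cone y C).FG := by
  have := h.f0
  have := h.f1
  exact ⟨inferInstance, inferInstance⟩

lemma FG.swap {C : PC.{u, v} A} (h : C.FG) : C.swap.FG := ⟨h.f1, h.f0⟩

lemma FG.of {N : Type v} [AddCommGroup N] [Module A N] [Module.Finite A N] : (PC.of (A := A) N).FG :=
  ⟨inferInstance, inferInstance⟩

lemma FG.H [IsNoetherianRing A] {C : PC.{u, v} A} (h : C.FG) : Module.Finite A C.H := by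
  have := h.f0
  infer_instance

lemma FG.kos {κ : Type*} (x : κ → A) (L : List κ) {C : PC.{u, v} A} (h : C.FG) : (Kos x L C).FG := by
  induction L generalizing C with
  | nil => exact h
  | cons j L ih => exact ih (h.cone _)

section main
variable [IsNoetherianRing A] [IsLocalRing A] {κ : Type*} (x : κ → A)

lemma kos_fin_iff (L : List κ) (C : PC.{u, v} A) (hC : C.FG) :
    (Kos x L C).fin ↔ Good x L C.H ∧ Good x L C.swap.H := by
  have := hC.H
  have := hC.swap.H
  induction L generalizing C with
  | nil => rw [good_nil_iff, good_nil_iff]; rfl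
  | cons j L ih =>
    refine (ih (cone (x j) C) (hC.cone (x j)) (hC.cone (x j)).H (hC.cone (x j)).swap.H).trans ?_
    rw [good_exact x (coneHL_inj (x j) C) (coneHR_surj _ _) (coneH_exact _ _)]
    have := good_exact x (L := L) (coneHL_inj (x j) C.swap) (coneHR_surj _ _) (coneH_exact _ _)
    rw [this, good_quot, good_quot]
    constructor
    · rintro ⟨⟨a, b⟩, c, d⟩
      exact ⟨a, c⟩
    · rintro ⟨a, b⟩
      exact ⟨⟨a, good_ker x b⟩, b, good_ker x a⟩

/-- Koszul Euler characteristic of a module -/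
noncomputable def XX (L : List κ) (N : Type v) [AddCommGroup N] [Module A N] : ℤ :=
  (Kos x L (of (A := A) N)).chi

/-- the homology of a module complex -/
noncomputable def Hof (N : Type v) [AddCommGroup N] [Module A N] : N ≃ₗ[A] (of (A := A) N).H :=
  LinearEquiv.ofBijective ((of (A := A) N).cls.comp
    (LinearMap.id.codRestrict (LinearMap.ker (of (A := A) N).d0) (by intro c; rfl))) (by
    constructor
    · rw [← LinearMap.ker_eq_bot, eq_bot_iff]
      intro z hz
      rw [LinearMap.mem_ker, LinearMap.comp_apply, cls_eq_zero] at hz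
      obtain ⟨w, hw⟩ := hz
      exact hw.symm
    · intro z
      obtain ⟨z, rfl⟩ := (of (A := A) N).cls_surj z
      exact ⟨z.1, rfl⟩)

lemma Hof_swap (N : Type v) [AddCommGroup N] [Module A N] :
    Subsingleton (of (A := A) N).swap.H := by
  refine ⟨fun a b => ?_⟩
  obtain ⟨a, rfl⟩ := PC.cls_surj _ a
  obtain ⟨b, rfl⟩ := PC.cls_surj _ b
  congr 1
  apply Subtype.ext
  exact Subsingleton.elim (α := PUnit) _ _

lemma good_sub (L : List κ) (N : Type v) [AddCommGroup N] [Module A N] [Subsingleton N] :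
    Good x L N := by
  intro p hp
  rw [Module.support_eq_empty] at hp
  exact hp.elim

lemma good_fin {L : List κ} {N : Type v} [AddCommGroup N] [Module A N] [Module.Finite A N]
    (h : Good x L N) : (Kos x L (of (A := A) N)).fin := by
  rw [kos_fin_iff x L _ FG.of]
  have := Hof_swap (A := A) N
  exact ⟨h.mono x (by rw [(Hof (A := A) N).support_eq]), good_sub x L _⟩

lemma kos_subsingleton (L : List κ) (C : PC.{u, v} A) (h0 : Subsingleton C.C0)
    (h1 : Subsingleton C.C1) : (Kos x L C).chi = 0 := by
  induction L generalizing C with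
  | nil => exact (of_subsingleton C).2
  | cons j L ih => exact ih _ inferInstance inferInstance

lemma XX_zero (L : List κ) (N : Type v) [AddCommGroup N] [Module A N] [Subsingleton N] :
    XX x L N = 0 := kos_subsingleton x L _ inferInstance inferInstance

/-- map of module complexes -/
abbrev ofMap {N P : Type v} [AddCommGroup N] [Module A N] [AddCommGroup P] [Module A P]
    (f : N →ₗ[A] P) : Hom (of (A := A) N) (of P) where
  f0 := f
  f1 := LinearMap.id
  c0 := fun _ => rfl
  c1 := fun _ => by simp

lemma XX_add {L : List κ} {N₁ N₂ N₃ : Type v} [AddCommGroup N₁] [Module A N₁]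
    [AddCommGroup N₂] [Module A N₂] [AddCommGroup N₃] [Module A N₃] [Module.Finite A N₂]
    {f : N₁ →ₗ[A] N₂} {g : N₂ →ₗ[A] N₃} (hf : Function.Injective f)
    (hg : Function.Surjective g) (hfg : Function.Exact f g) (h : Good x L N₂) :
    XX x L N₂ = XX x L N₁ + XX x L N₃ := by
  have h' := (good_exact x hf hg hfg).1 h
  have : Module.Finite A N₁ := Module.Finite.of_injective f hf
  have : Module.Finite A N₃ := Module.Finite.of_surjective g hg
  have hs : SES (ofMap f) (ofMap g) :=
    ⟨hf, fun _ _ _ => rfl, hfg, fun _ => ⟨fun _ => ⟨0, rfl⟩, fun _ => rfl⟩, hg, fun a => ⟨a, rfl⟩⟩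
  exact (hs.kos x L).chi (good_fin x h'.1) (good_fin x h'.2)

lemma XX_congr {L : List κ} {N₁ N₂ : Type v} [AddCommGroup N₁] [Module A N₁]
    [AddCommGroup N₂] [Module A N₂] [Module.Finite A N₂] (e : N₁ ≃ₗ[A] N₂) (h : Good x L N₂) :
    XX x L N₁ = XX x L N₂ := by
  have := XX_add x (N₃ := PUnit) (f := e.toLinearMap) (g := 0) e.injective
    (fun a => ⟨0, rfl⟩) (fun a => ⟨fun _ => e.surjective a, fun _ => rfl⟩) h
  rw [this, XX_zero x L PUnit, add_zero]

lemma XX_nil {N : Type v} [AddCommGroup N] [Module A N] (h : Module.length A N ≠ ⊤) :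
    XX x [] N = (Module.length A N).toNat := by
  have h1 : Module.length A (PUnit.{v+1}) = 0 := Module.length_eq_zero
  have := (fin_of_terms (of (A := A) N) h (by simp [h1])).2
  rw [XX, Kos, this, h1]
  simp

/-- the inductive expression -/
lemma chi_cons (j : κ) (L : List κ)
    (ih : ∀ C : PC.{u, v} A, C.FG → (Kos x L C).fin →
      (Kos x L C).chi = XX x L C.H - XX x L C.swap.H)
    (C : PC.{u, v} A) (hC : C.FG) (hf : (Kos x (j :: L) C).fin) :
    (Kos x (j :: L) C).chi = (XX x L (QuotSMulTop (x j) C.H) - XX x L (Nk (x j) C.H))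
      - (XX x L (QuotSMulTop (x j) C.swap.H) - XX x L (Nk (x j) C.swap.H)) := by
  have e1 := ih (cone (x j) C) (hC.cone _) hf
  have := (hC.cone (x j)).H
  have := (hC.cone (x j)).swap.H
  have hg := (kos_fin_iff x L (cone (x j) C) (hC.cone _)).1 hf
  have a1 := XX_add x (coneHL_inj (x j) C) (coneHR_surj _ _) (coneH_exact _ _) hg.1
  have a2 := XX_add x (coneHL_inj (x j) C.swap) (coneHR_surj _ _) (coneH_exact _ _) hg.2
  have e2 : (Kos x (j :: L) C).chi = XX x L (cone (x j) C).H - XX x L (cone (x j) C.swap).H := e1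
  rw [e2, a1, a2]
  ring

lemma good_quot' {j : κ} {L : List κ} {N : Type v} [AddCommGroup N] [Module A N]
    [Module.Finite A N] (h : Good x (j :: L) N) : Good x L (QuotSMulTop (x j) N) :=
  (good_quot x).2 h

/-- the kernel along an equivalence -/
noncomputable def NkCongr (y : A) {N P : Type v} [AddCommGroup N] [Module A N] [AddCommGroup P]
    [Module A P] (e : N ≃ₗ[A] P) : Nk y N ≃ₗ[A] Nk y P :=
  e.ofSubmodules _ _ (by
    ext z
    rw [Submodule.mem_map_equiv, LinearMap.mem_ker, LinearMap.mem_ker, LinearMap.lsmul_apply,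
      LinearMap.lsmul_apply, ← map_smul, LinearEquiv.map_eq_zero_iff])

lemma XX_cons_aux (j : κ) (L : List κ)
    (ih : ∀ C : PC.{u, v} A, C.FG → (Kos x L C).fin →
      (Kos x L C).chi = XX x L C.H - XX x L C.swap.H)
    (N : Type v) [AddCommGroup N] [Module A N] [Module.Finite A N] (hN : Good x (j :: L) N) :
    XX x (j :: L) N = XX x L (QuotSMulTop (x j) N) - XX x L (Nk (x j) N) := by
  have := chi_cons x j L ih (of N) FG.of (good_fin x hN)
  have hs := Hof_swap (A := A) N
  have hf : Module.Finite A (of (A := A) N).H := FG.of.H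
  have hg : Good x (j :: L) (of (A := A) N).H := hN.mono x (by rw [(Hof (A := A) N).support_eq])
  have hq : Subsingleton (QuotSMulTop (x j) (of (A := A) N).swap.H) := inferInstance
  rw [XX, this, XX_zero x L (QuotSMulTop (x j) (of (A := A) N).swap.H),
    XX_zero x L (Nk (x j) (of (A := A) N).swap.H),
    XX_congr x (QuotSMulTop.congr (x j) (Hof (A := A) N)) (good_quot' x hg),
    XX_congr x (NkCongr (x j) (Hof (A := A) N)) (good_ker x hg)]
  ring

theorem chi_kos (L : List κ) (C : PC.{u, v} A) (hC : C.FG) (hf : (Kos x L C).fin) :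
    (Kos x L C).chi = XX x L C.H - XX x L C.swap.H := by
  induction L generalizing C with
  | nil =>
    have h1 : Module.length A C.H ≠ ⊤ := hf.1
    have h2 : Module.length A C.swap.H ≠ ⊤ := hf.2
    rw [XX_nil x h1, XX_nil x h2]; rfl
  | cons j L ih =>
    have := hC.H
    have := hC.swap.H
    have hg := (kos_fin_iff x _ C hC).1 hf
    rw [chi_cons x j L ih C hC hf, XX_cons_aux x j L ih _ hg.1, XX_cons_aux x j L ih _ hg.2]

theorem XX_cons (j : κ) (L : List κ)
    (N : Type v) [AddCommGroup N] [Module A N] [Module.Finite A N] (hN : Good x (j :: L) N) :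
    XX x (j :: L) N = XX x L (QuotSMulTop (x j) N) - XX x L (Nk (x j) N) :=
  XX_cons_aux x j L (fun C => chi_kos x L C) N hN

theorem XX_vanish (L : List κ) (N : Type v) [AddCommGroup N] [Module A N] [hfin : Module.Finite A N]
    (hN : Good x L N) (hdim : Module.supportDim A N < (L.length : WithBot ℕ∞)) : XX x L N = 0 := by
  induction L generalizing N with
  | nil =>
    have : Subsingleton N := by
      rw [← Module.supportDim_eq_bot_iff_subsingleton (R := A)]
      rw [← WithBot.lt_coe_bot]
      exact hdim
    exact XX_zero x _ N
  | cons j L ih =>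
    revert hN hdim
    induction hfin using IsNoetherianRing.induction_on_isQuotientEquivQuotientPrime A with
    | subsingleton N =>
      intro _ _
      exact XX_zero x _ N
    | quotient N p e =>
      intro hN hdim
      rw [XX_cons x j L N hN]
      have hann : Module.annihilator A N = p.1 := by
        rw [e.annihilator_eq, Ideal.annihilator_quotient]
      by_cases hj : x j ∈ p.1
      · have hz : ∀ n : N, x j • n = 0 := by
          rw [← hann, Module.mem_annihilator] at hj
          exact hj
        have hg : Good x L N := by
          have h1 := good_quot' x hN
          refine h1.mono x ?_
          rw [Module.support_quotSMulTop]
          intro q hq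
          refine ⟨hq, ?_⟩
          rw [PrimeSpectrum.mem_zeroLocus, Set.singleton_subset_iff]
          apply Module.annihilator_le_of_mem_support hq
          rw [hann]; exact hj
        have h1 : x j • (⊤ : Submodule A N) = ⊥ := by
          rw [eq_bot_iff]
          intro z hz'
          rw [Submodule.mem_smul_pointwise_iff_exists] at hz'
          obtain ⟨z, -, rfl⟩ := hz'
          exact hz z
        have h2 : LinearMap.ker (LinearMap.lsmul A N (x j)) = ⊤ := by
          rw [eq_top_iff]
          intro z _
          exact hz z
        rw [XX_congr x (Submodule.quotEquivOfEqBot _ h1) hg,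
          XX_congr x (LinearEquiv.ofTop _ h2) hg, sub_self]
      · have hs : Subsingleton (Nk (x j) N) := by
          refine ⟨fun a b => ?_⟩
          have : ∀ a : Nk (x j) N, a = 0 := by
            rintro ⟨a, ha⟩
            apply Subtype.ext
            change a = 0
            have ha' : x j • a = 0 := ha
            apply e.injective
            rw [map_zero]
            have h3 : x j • e a = 0 := by rw [← map_smul, ha', map_zero]
            obtain ⟨r, hr⟩ := Ideal.Quotient.mk_surjective (e a)
            rw [← hr] at h3 ⊢
            rw [Algebra.smul_def, Ideal.Quotient.algebraMap_eq, ← map_mul,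
              Ideal.Quotient.eq_zero_iff_mem] at h3
            rw [Ideal.Quotient.eq_zero_iff_mem]
            exact (p.2.mem_or_mem h3).resolve_left hj
          rw [this a, this b]
        rw [XX_zero x L (Nk (x j) N), sub_zero]
        apply ih _ (good_quot' x hN)
        have h4 : Module.supportDim A (QuotSMulTop (x j) N) + 1 ≤ Module.supportDim A N := by
          apply Module.supportDim_quotSMulTop_succ_le_of_notMem_minimalPrimes
          rw [hann]
          have := p.2
          rw [Ideal.minimalPrimes_eq_subsingleton_self]
          rintro _ rfl
          exact hj
        have h5 := h4.trans_lt hdim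
        rw [List.length_cons] at h5
        push_cast at h5
        exact lt_of_add_lt_add_right h5
    | exact N₁ N₂ N₃ f g hf hg hfg h₁ h₃ =>
      intro hN hdim
      have := (good_exact x hf hg hfg).1 hN
      rw [XX_add x hf hg hfg hN,
        h₁ this.1 ((Module.supportDim_le_of_injective f hf).trans_lt hdim),
        h₃ this.2 ((Module.supportDim_le_of_surjective g hg).trans_lt hdim), add_zero]

/-- vanishing for complexes -/
theorem chi_vanish (L : List κ) (C : PC.{u, v} A) (hC : C.FG) (hf : (Kos x L C).fin)
    (h0 : Module.supportDim A C.C0 < (L.length : WithBot ℕ∞))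
    (h1 : Module.supportDim A C.C1 < (L.length : WithBot ℕ∞)) : (Kos x L C).chi = 0 := by
  have := hC.H
  have := hC.swap.H
  have hg := (kos_fin_iff x _ C hC).1 hf
  rw [chi_kos x L C hC hf, XX_vanish x L _ hg.1, XX_vanish x L _ hg.2, sub_zero]
  · refine lt_of_le_of_lt ?_ h1
    exact (Module.supportDim_le_of_surjective _ (cls_surj C.swap)).trans
      (Module.supportDim_le_of_injective _ (Submodule.subtype_injective _))
  · refine lt_of_le_of_lt ?_ h0
    exact (Module.supportDim_le_of_surjective _ (cls_surj C)).trans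
      (Module.supportDim_le_of_injective _ (Submodule.subtype_injective _))
end main
end PC

end Part3

section Part4
universe u v
open Pointwise

section MAR
variable {A : Type u} [CommRing A] {ι : Type*} [Fintype ι]

/-- mixed powers of ideals -/
def pw (I : ι → Ideal A) (n : ι → ℕ) : Ideal A := ∏ i, I i ^ n i

lemma pw_add (I : ι → Ideal A) (a b : ι → ℕ) : pw I (a + b) = pw I a * pw I b := by
  simp [pw, pow_add, Finset.prod_mul_distrib]

lemma pw_zero (I : ι → Ideal A) : pw I 0 = ⊤ := by
  simp [pw]

lemma pw_anti (I : ι → Ideal A) {a b : ι → ℕ} (h : a ≤ b) : pw I b ≤ pw I a := by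
  obtain ⟨c, rfl⟩ := exists_add_of_le h
  rw [pw_add]
  exact Ideal.mul_le_left (I := pw I a) (J := pw I c)

lemma pw_nsmul (I : ι → Ideal A) (a : ι → ℕ) (k : ℕ) : pw I (k • a) = pw I a ^ k := by
  induction k with
  | zero => simp [pw_zero]
  | succ k ih => rw [succ_nsmul, pw_add, ih, pow_succ]

lemma pw_single [DecidableEq ι] (I : ι → Ideal A) (i : ι) : pw I (Pi.single i 1) = I i := by
  rw [pw, Finset.prod_eq_single i]
  · simp
  · intro j _ hj
    simp [Pi.single_eq_of_ne hj]
  · simp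

variable [DecidableEq ι] [IsNoetherianRing A]

/-- generators of the multi-Rees algebra -/
noncomputable def reesGen (I : ι → Ideal A) : Set (MvPolynomial ι A) :=
  ⋃ i, (fun a => MvPolynomial.monomial (Finsupp.single i 1) a) ''
    ((IsNoetherian.noetherian (I i)).choose : Set A)

/-- the multi-Rees algebra -/
noncomputable abbrev mrees (I : ι → Ideal A) : Subalgebra A (MvPolynomial ι A) :=
  Algebra.adjoin A (reesGen I)

lemma reesGen_finite (I : ι → Ideal A) : (reesGen I).Finite :=
  Set.finite_iUnion (fun _ => Set.Finite.image _ (Finset.finite_toSet _))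

lemma mrees_noeth (I : ι → Ideal A) : IsNoetherianRing (mrees I) := by
  have : (mrees I).FG := ⟨(reesGen_finite I).toFinset, by simp⟩
  exact (Subalgebra.fg_iff_finiteType _).1 this |>.isNoetherianRing A _

lemma mrees_coeff (I : ι → Ideal A) (f : MvPolynomial ι A) (hf : f ∈ mrees I) (n : ι →₀ ℕ) :
    f.coeff n ∈ pw I n := by
  induction hf using Algebra.adjoin_induction generalizing n with
  | mem f hf =>
    obtain ⟨i, a, ha, rfl⟩ := Set.mem_iUnion.1 hf
    rw [MvPolynomial.coeff_monomial]
    split_ifs with h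
    · subst h
      have h2 : ((Finsupp.single i 1 : ι →₀ ℕ) : ι → ℕ) = Pi.single i 1 := Finsupp.single_eq_pi_single i 1
      rw [h2, pw_single, ← (IsNoetherian.noetherian (I i)).choose_spec]
      exact Submodule.subset_span ha
    · exact zero_mem _
  | algebraMap r =>
    rw [MvPolynomial.algebraMap_eq, MvPolynomial.coeff_C]
    split_ifs with h
    · subst h
      rw [Finsupp.coe_zero, pw_zero]; trivial
    · exact zero_mem _
  | add f g _ _ hf hg =>
    rw [MvPolynomial.coeff_add]
    exact add_mem (hf n) (hg n)
  | mul f g _ _ hf hg =>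
    rw [MvPolynomial.coeff_mul]
    refine sum_mem fun p hp => ?_
    rw [Finset.HasAntidiagonal.mem_antidiagonal] at hp
    rw [← hp, Finsupp.coe_add, pw_add]
    exact Ideal.mul_mem_mul (hf _) (hg _)

/-- the ideal of leading coefficients -/
noncomputable def mrP (I : ι → Ideal A) (n : ι →₀ ℕ) : Ideal A where
  carrier := {a | MvPolynomial.monomial n a ∈ mrees I}
  zero_mem' := by simp
  add_mem' := by
    intro a b ha hb
    simp only [Set.mem_setOf_eq, map_add] at *
    exact add_mem ha hb
  smul_mem' := by
    intro c a ha
    simp only [Set.mem_setOf_eq] at *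
    rw [← MvPolynomial.smul_monomial]
    exact Subalgebra.smul_mem _ ha c

lemma mrP_mul (I : ι → Ideal A) (n m : ι →₀ ℕ) : mrP I n * mrP I m ≤ mrP I (n + m) := by
  rw [Ideal.mul_le]
  intro a ha b hb
  change MvPolynomial.monomial (n + m) (a * b) ∈ mrees I
  rw [← MvPolynomial.monomial_mul]
  exact mul_mem ha hb

lemma mrP_single (I : ι → Ideal A) (i : ι) (k : ℕ) : I i ^ k ≤ mrP I (Finsupp.single i k) := by
  induction k with
  | zero =>
    intro a _
    change MvPolynomial.monomial (Finsupp.single i 0) a ∈ mrees I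
    rw [Finsupp.single_zero]
    exact Subalgebra.algebraMap_mem _ a
  | succ k ih =>
    rw [pow_succ, Finsupp.single_add]
    refine le_trans (Ideal.mul_mono ih ?_) (mrP_mul _ _ _)
    rw [← (IsNoetherian.noetherian (I i)).choose_spec, Submodule.span_le]
    intro a ha
    exact Algebra.subset_adjoin (Set.mem_iUnion.2 ⟨i, a, ha, rfl⟩)

lemma pw_le_mrP (I : ι → Ideal A) (n : ι →₀ ℕ) : pw I n ≤ mrP I n := by
  have key : ∀ s : Finset ι, ∏ i ∈ s, I i ^ n i ≤ mrP I (∑ i ∈ s, Finsupp.single i (n i)) := by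
    intro s
    induction s using Finset.induction_on with
    | empty =>
      intro a _
      exact Subalgebra.algebraMap_mem (mrees I) a
    | insert i s hi ih =>
      rw [Finset.prod_insert hi, Finset.sum_insert hi]
      exact le_trans (Ideal.mul_mono (mrP_single I i _) ih) (mrP_mul _ _ _)
  have := key Finset.univ
  rwa [Finsupp.univ_sum_single] at this

theorem MAR (I : ι → Ideal A) {T : Type*} [AddCommGroup T] [Module A T] [Module.Finite A T]
    (G : (ι → ℕ) → Submodule A T) (h1 : ∀ n, G n ≤ pw I n • ⊤)
    (h2 : ∀ n σ, pw I σ • G n ≤ G (n + σ)) :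
    ∃ N : ℕ, ∀ n : ι → ℕ, (∀ i, N ≤ n i) → ∀ m, G (n + m) ≤ pw I m • G n := by
  obtain ⟨r, π, hπ⟩ := Module.Finite.exists_fin' A T
  have hn := mrees_noeth I
  let D : Set (Fin r → mrees I) := {e | ∃ n : ι →₀ ℕ, ∃ v : Fin r → A,
    π v ∈ G n ∧ ∀ a, (e a : MvPolynomial ι A) = MvPolynomial.monomial n (v a)}
  have hfg : (Submodule.span (mrees I) D).FG := IsNoetherian.noetherian _
  obtain ⟨D', hD', hspan⟩ := (Submodule.fg_span_iff_fg_span_finset_subset D).1 hfg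
  have hD2 : ∀ e : D', ∃ n : ι →₀ ℕ, ∃ v : Fin r → A,
    π v ∈ G n ∧ ∀ a, (e.1 a : MvPolynomial ι A) = MvPolynomial.monomial n (v a) :=
    fun e => hD' e.2
  choose deg vec hvec hmon using hD2
  refine ⟨∑ e : D', ∑ i, deg e i, fun n hN m t ht => ?_⟩
  have hdeg : ∀ e : D', ⇑(deg e) ≤ n := by
    intro e i
    refine le_trans ?_ (hN i)
    refine le_trans (Finset.single_le_sum (f := fun i => deg e i) (fun _ _ => Nat.zero_le _)
      (Finset.mem_univ i)) ?_
    exact Finset.single_le_sum (f := fun e => ∑ i, deg e i) (fun _ _ => Nat.zero_le _)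
      (Finset.mem_univ e)
  -- lift t
  obtain ⟨v, hv, rfl⟩ : ∃ v : Fin r → A, (∀ a, v a ∈ pw I (n + m)) ∧ π v = t := by
    have h3 := h1 _ ht
    have h4 : (⊤ : Submodule A T) = Submodule.map π ⊤ := by
      rw [Submodule.map_top, LinearMap.range_eq_top.2 hπ]
    rw [h4, ← Submodule.map_smul''] at h3
    obtain ⟨v, hv, rfl⟩ := h3
    refine ⟨v, fun a => ?_, rfl⟩
    have h5 : Submodule.map (LinearMap.proj (R := A) (φ := fun _ : Fin r => A) a)
        (pw I (n + m) • (⊤ : Submodule A (Fin r → A))) ≤ pw I (n + m) := by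
      rw [Submodule.map_smul'']
      rw [Submodule.smul_le]
      intro p hp q _
      exact Ideal.mul_mem_right q _ hp
    exact h5 ⟨v, hv, rfl⟩
  let K : ι →₀ ℕ := Finsupp.equivFunOnFinite.symm (n + m)
  have hK : (K : ι → ℕ) = n + m := rfl
  let e : Fin r → mrees I := fun a => ⟨MvPolynomial.monomial K (v a), pw_le_mrP I K (hv a)⟩
  have he : e ∈ Submodule.span (mrees I) (D' : Set (Fin r → mrees I)) := by
    rw [← hspan]
    exact Submodule.subset_span ⟨K, v, ht, fun a => rfl⟩
  let φ : (Fin r → mrees I) →+ T :=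
    { toFun := fun e => π (fun a => (e a : MvPolynomial ι A).coeff K)
      map_zero' := by
        have : (fun a : Fin r => (((0 : Fin r → mrees I) a : mrees I) : MvPolynomial ι A).coeff K)
          = 0 := by ext; simp
        rw [this, map_zero]
      map_add' := by
        intro p q
        rw [← map_add]
        congr 1 }
  have hφ : φ e = π v := by
    change π _ = _
    congr 1
    ext a
    simp [e]
  rw [← hφ]
  obtain ⟨c, hc, hce⟩ := Submodule.mem_span_set.1 he
  rw [← hce, Finsupp.sum, map_sum]
  refine sum_mem fun w hw => ?_
  let w' : D' := ⟨w, hc hw⟩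
  have h6 : φ (c w • w) = ((c w : MvPolynomial ι A).coeff (K - deg w')) • π (vec w') := by
    change π _ = _
    rw [← map_smul]
    congr 1
    ext a
    have := hmon w' a
    change MvPolynomial.coeff K ((c w : MvPolynomial ι A) * (w a : MvPolynomial ι A)) = _
    have e1 : (w a : MvPolynomial ι A) = MvPolynomial.monomial (deg w') (vec w' a) := this
    rw [e1, MvPolynomial.coeff_mul_monomial', if_pos]
    · rfl
    · intro i
      exact (hdeg w' i).trans (by change n i ≤ n i + m i; omega)
  rw [h6]
  have h7 := mrees_coeff I _ (c w).2 (K - deg w')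
  have h8 : ((K - deg w' : ι →₀ ℕ) : ι → ℕ) = m + (n - deg w') := by
    ext i
    have : deg w' i ≤ n i := hdeg w' i
    change n i + m i - deg w' i = m i + (n i - deg w' i)
    omega
  rw [h8, pw_add] at h7
  have h9 : pw I (n - deg w') • G (deg w') ≤ G n := by
    refine (h2 _ _).trans_eq ?_
    congr 1
    exact add_tsub_cancel_of_le (hdeg w')
  have h10 := Submodule.smul_mem_smul h7 (hvec w')
  rw [Submodule.mul_smul] at h10
  exact Submodule.smul_mono le_rfl h9 h10

end MAR

end Part4

section Part5
universe u v
namespace PC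
variable {A : Type u} [CommRing A] {ι : Type*} [Fintype ι]

/-- multi-filtered families of subcomplexes -/
structure Fam (I : ι → Ideal A) (X : PC.{u, v} A) where
  S : (ι → ℕ) → SubPC X
  m0 : ∀ n σ a v, a ∈ pw I σ → v ∈ (S n).S0 → a • v ∈ (S (n + σ)).S0
  m1 : ∀ n σ a v, a ∈ pw I σ → v ∈ (S n).S1 → a • v ∈ (S (n + σ)).S1

namespace Fam
variable {I : ι → Ideal A} {X : PC.{u, v} A}

/-- filtered cone -/
def cone (y : A) (σ : ι → ℕ) (hy : y ∈ pw I σ) (F : Fam I X) : Fam I (cone y X) where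
  S := fun n => SubPC.coneSub y (F.S (n + σ)) (F.S n) (fun v hv => F.m0 n σ y v hy hv)
    (fun v hv => F.m1 n σ y v hy hv)
  m0 := by
    rintro n τ a ⟨v, w⟩ ha ⟨hv, hw⟩
    refine ⟨?_, F.m1 _ _ _ _ ha hw⟩
    rw [add_right_comm]
    exact F.m0 _ _ _ _ ha hv
  m1 := by
    rintro n τ a ⟨v, w⟩ ha ⟨hv, hw⟩
    refine ⟨?_, F.m0 _ _ _ _ ha hw⟩
    rw [add_right_comm]
    exact F.m1 _ _ _ _ ha hv

/-- existence of a filtered contracting homotopy -/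
def Hty (F : Fam I X) (a : A) (τ : ι → ℕ) : Prop :=
  ∃ (h0 : X.C0 →ₗ[A] X.C1) (h1 : X.C1 →ₗ[A] X.C0),
    (∀ v, X.d1 (h0 v) + h1 (X.d0 v) = a • v) ∧ (∀ v, X.d0 (h1 v) + h0 (X.d1 v) = a • v) ∧
    (∀ n, ∀ v ∈ (F.S n).S0, h0 v ∈ (F.S (n + τ)).S1) ∧
    (∀ n, ∀ v ∈ (F.S n).S1, h1 v ∈ (F.S (n + τ)).S0)

lemma Hty.new (y : A) (σ : ι → ℕ) (hy : y ∈ pw I σ) (F : Fam I X) : (F.cone y σ hy).Hty y σ := by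
  refine ⟨(LinearMap.inr A X.C1 X.C0).comp (LinearMap.fst A _ _),
    (LinearMap.inr A X.C0 X.C1).comp (LinearMap.fst A _ _), ?_, ?_, ?_, ?_⟩
  · rintro ⟨a, b⟩
    simp
  · rintro ⟨a, b⟩
    simp
  · rintro n ⟨a, b⟩ ⟨ha, hb⟩
    exact ⟨zero_mem _, ha⟩
  · rintro n ⟨a, b⟩ ⟨ha, hb⟩
    exact ⟨zero_mem _, ha⟩

lemma Hty.cone {F : Fam I X} {a : A} {τ : ι → ℕ} (h : F.Hty a τ) (y : A) (σ : ι → ℕ)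
    (hy : y ∈ pw I σ) : (F.cone y σ hy).Hty a τ := by
  obtain ⟨h0, h1, e0, e1, s0, s1⟩ := h
  refine ⟨h0.prodMap (-h1), h1.prodMap (-h0), ?_, ?_, ?_, ?_⟩
  · rintro ⟨a, b⟩
    ext
    · simp [← e0]; abel
    · simp [← e1]
  · rintro ⟨a, b⟩
    ext
    · simp [← e1]; abel
    · simp [← e0]
  · rintro n ⟨a, b⟩ ⟨ha, hb⟩
    refine ⟨?_, neg_mem (s1 _ _ hb)⟩
    change _ ∈ (F.S (n + τ + σ)).S1
    rw [add_right_comm]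
    exact s0 _ _ ha
  · rintro n ⟨a, b⟩ ⟨ha, hb⟩
    refine ⟨?_, neg_mem (s0 _ _ hb)⟩
    change _ ∈ (F.S (n + τ + σ)).S0
    rw [add_right_comm]
    exact s1 _ _ ha

/-- bounded by the adic filtration -/
def Bdd (F : Fam I X) : Prop :=
  (∀ n, (F.S n).S0 ≤ pw I n • ⊤) ∧ (∀ n, (F.S n).S1 ≤ pw I n • ⊤)

lemma prod_smul_top {N P : Type*} [AddCommGroup N] [Module A N] [AddCommGroup P] [Module A P]
    (K : Ideal A) (U : Submodule A N) (V : Submodule A P) (hU : U ≤ K • ⊤) (hV : V ≤ K • ⊤) :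
    U.prod V ≤ K • ⊤ := by
  rintro ⟨a, b⟩ ⟨ha, hb⟩
  have h1 : Submodule.map (LinearMap.inl A N P) (K • ⊤) ≤ K • ⊤ := by
    rw [Submodule.map_smul'']
    exact Submodule.smul_mono le_rfl le_top
  have h2 : Submodule.map (LinearMap.inr A N P) (K • ⊤) ≤ K • ⊤ := by
    rw [Submodule.map_smul'']
    exact Submodule.smul_mono le_rfl le_top
  have h3 : (a, b) = LinearMap.inl A N P a + LinearMap.inr A N P b := by simp
  rw [h3]
  exact add_mem (h1 ⟨a, hU ha, rfl⟩) (h2 ⟨b, hV hb, rfl⟩)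

lemma Bdd.cone {F : Fam I X} (h : F.Bdd) (y : A) (σ : ι → ℕ) (hy : y ∈ pw I σ) :
    (F.cone y σ hy).Bdd := by
  refine ⟨fun n => prod_smul_top _ _ _ ((h.1 _).trans ?_) (h.2 _),
    fun n => prod_smul_top _ _ _ ((h.2 _).trans ?_) (h.1 _)⟩ <;>
  exact Submodule.smul_mono (pw_anti I (by simp)) le_rfl

/-- decreasing families -/
def Anti (F : Fam I X) : Prop :=
  ∀ n m, n ≤ m → (F.S m).S0 ≤ (F.S n).S0 ∧ (F.S m).S1 ≤ (F.S n).S1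

lemma Anti.cone {F : Fam I X} (h : F.Anti) (y : A) (σ : ι → ℕ) (hy : y ∈ pw I σ) :
    (F.cone y σ hy).Anti := by
  intro n m hnm
  exact ⟨Submodule.prod_mono (h _ _ (add_le_add_left hnm σ)).1 (h _ _ hnm).2,
    Submodule.prod_mono (h _ _ (add_le_add_left hnm σ)).2 (h _ _ hnm).1⟩

/-- the ideal of uniform annihilators of homology -/
def bd (F : Fam I X) (m : ι → ℕ) : Ideal A where
  carrier := {a | ∀ n, (∀ v ∈ (F.S n).S0, X.d0 v = 0 → ∃ w ∈ (F.S (n + m)).S1, X.d1 w = a • v) ∧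
    (∀ v ∈ (F.S n).S1, X.d1 v = 0 → ∃ w ∈ (F.S (n + m)).S0, X.d0 w = a • v)}
  zero_mem' := by
    intro n
    exact ⟨fun v _ _ => ⟨0, zero_mem _, by simp⟩, fun v _ _ => ⟨0, zero_mem _, by simp⟩⟩
  add_mem' := by
    intro a b ha hb n
    refine ⟨fun v hv hz => ?_, fun v hv hz => ?_⟩
    · obtain ⟨w, hw, e⟩ := (ha n).1 v hv hz
      obtain ⟨w', hw', e'⟩ := (hb n).1 v hv hz
      exact ⟨w + w', add_mem hw hw', by rw [map_add, e, e', add_smul]⟩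
    · obtain ⟨w, hw, e⟩ := (ha n).2 v hv hz
      obtain ⟨w', hw', e'⟩ := (hb n).2 v hv hz
      exact ⟨w + w', add_mem hw hw', by rw [map_add, e, e', add_smul]⟩
  smul_mem' := by
    intro c a ha n
    refine ⟨fun v hv hz => ?_, fun v hv hz => ?_⟩
    · obtain ⟨w, hw, e⟩ := (ha n).1 v hv hz
      exact ⟨c • w, Submodule.smul_mem _ _ hw, by rw [map_smul, e, smul_eq_mul, mul_smul]⟩
    · obtain ⟨w, hw, e⟩ := (ha n).2 v hv hz
      exact ⟨c • w, Submodule.smul_mem _ _ hw, by rw [map_smul, e, smul_eq_mul, mul_smul]⟩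

lemma Hty.bd {F : Fam I X} {a : A} {τ : ι → ℕ} (h : F.Hty a τ) : a ∈ F.bd τ := by
  obtain ⟨h0, h1, e0, e1, s0, s1⟩ := h
  intro n
  refine ⟨fun v hv hz => ⟨h0 v, s0 n v hv, ?_⟩, fun v hv hz => ⟨h1 v, s1 n v hv, ?_⟩⟩
  · rw [← e0, hz]; simp
  · rw [← e1, hz]; simp

lemma bd_mul (F : Fam I X) (σ τ : ι → ℕ) : F.bd σ * pw I τ ≤ F.bd (σ + τ) := by
  rw [Ideal.mul_le]
  intro a ha b hb n
  refine ⟨fun v hv hz => ?_, fun v hv hz => ?_⟩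
  · obtain ⟨w, hw, e⟩ := (ha n).1 v hv hz
    refine ⟨b • w, ?_, by rw [map_smul, e, mul_comm, mul_smul]⟩
    rw [← add_assoc]
    exact F.m1 _ _ _ _ hb hw
  · obtain ⟨w, hw, e⟩ := (ha n).2 v hv hz
    refine ⟨b • w, ?_, by rw [map_smul, e, mul_comm, mul_smul]⟩
    rw [← add_assoc]
    exact F.m0 _ _ _ _ hb hw

/-- killed complexes -/
def Kill (X : PC.{u, v} A) (a : A) : Prop := (∀ v : X.C0, a • v = 0) ∧ (∀ v : X.C1, a • v = 0)

lemma Kill.bd {a : A} (h : Kill X a) (F : Fam I X) (m : ι → ℕ) : a ∈ F.bd m := by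
  intro n
  exact ⟨fun v _ _ => ⟨0, zero_mem _, by rw [h.1]; simp⟩,
    fun v _ _ => ⟨0, zero_mem _, by rw [h.2]; simp⟩⟩

lemma exists_exact [IsNoetherianRing A] [DecidableEq ι] (F : Fam I X) (hX : X.FG) (hb : F.Bdd)
    (m : ι → ℕ) (hm : pw I m ≤ F.bd m) :
    ∃ N : ℕ, ∀ n : ι → ℕ, (∀ i, N ≤ n i) → (F.S n).pc.Ex := by
  have := hX.f0
  have := hX.f1
  obtain ⟨N0, hN0⟩ := MAR I (fun n => LinearMap.ker X.d0 ⊓ (F.S n).S0)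
    (fun n => inf_le_right.trans (hb.1 n)) (by
      intro n σ
      rw [Submodule.smul_le]
      rintro r hr v ⟨hv, hv'⟩
      exact ⟨Submodule.smul_mem _ _ hv, F.m0 _ _ _ _ hr hv'⟩)
  obtain ⟨N1, hN1⟩ := MAR I (fun n => LinearMap.ker X.d1 ⊓ (F.S n).S1)
    (fun n => inf_le_right.trans (hb.2 n)) (by
      intro n σ
      rw [Submodule.smul_le]
      rintro r hr v ⟨hv, hv'⟩
      exact ⟨Submodule.smul_mem _ _ hv, F.m1 _ _ _ _ hr hv'⟩)
  refine ⟨N0 + N1 + ∑ i, m i, fun n hn => ?_⟩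
  have hmn : ∀ i, N0 + N1 + m i ≤ n i := fun i => le_trans
    (by
      have := Finset.single_le_sum (f := m) (fun _ _ => Nat.zero_le _) (Finset.mem_univ i)
      omega) (hn i)
  obtain ⟨n', rfl⟩ : ∃ n', n = n' + m := ⟨n - m, (tsub_add_cancel_of_le
    (fun i => le_trans (by omega) (hmn i))).symm⟩
  have hn' : ∀ i, N0 + N1 ≤ n' i := fun i => by
    have : N0 + N1 + m i ≤ n' i + m i := hmn i
    omega
  constructor
  · rintro ⟨v, hv⟩ hz
    have hz' : X.d0 v = 0 := congrArg Subtype.val hz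
    have h1 := hN0 n' (fun i => le_trans (by omega) (hn' i)) m ⟨hz', hv⟩
    have h2 : pw I m • (LinearMap.ker X.d0 ⊓ (F.S n').S0) ≤
        Submodule.map X.d1 (F.S (n' + m)).S1 := by
      rw [Submodule.smul_le]
      rintro r hr w ⟨hw, hw'⟩
      obtain ⟨z, hz, e⟩ := (hm hr n').1 w hw' hw
      exact ⟨z, hz, e⟩
    obtain ⟨w, hw, e⟩ := h2 h1
    exact ⟨⟨w, hw⟩, Subtype.ext e⟩
  · rintro ⟨v, hv⟩ hz
    have hz' : X.d1 v = 0 := congrArg Subtype.val hz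
    have h1 := hN1 n' (fun i => le_trans (by omega) (hn' i)) m ⟨hz', hv⟩
    have h2 : pw I m • (LinearMap.ker X.d1 ⊓ (F.S n').S1) ≤
        Submodule.map X.d0 (F.S (n' + m)).S0 := by
      rw [Submodule.smul_le]
      rintro r hr w ⟨hw, hw'⟩
      obtain ⟨z, hz, e⟩ := (hm hr n').2 w hw' hw
      exact ⟨z, hz, e⟩
    obtain ⟨w, hw, e⟩ := h2 h1
    exact ⟨⟨w, hw⟩, Subtype.ext e⟩

section KF
variable {κ : Type*} (x : κ → A) (σ : κ → ι → ℕ) (hx : ∀ j, x j ∈ pw I (σ j))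

/-- filtered Koszul complexes -/
def KF : (L : List κ) → {X : PC.{u, v} A} → Fam I X → Fam I (Kos x L X)
  | [], _, F => F
  | (j :: L), _, F => KF L (F.cone (x j) (σ j) (hx j))

lemma KF_bdd (L : List κ) {X : PC.{u, v} A} {F : Fam I X} (h : F.Bdd) : (KF x σ hx L F).Bdd := by
  induction L generalizing X with
  | nil => exact h
  | cons j L ih => exact ih (h.cone _ _ _)

lemma KF_anti (L : List κ) {X : PC.{u, v} A} {F : Fam I X} (h : F.Anti) :
    (KF x σ hx L F).Anti := by
  induction L generalizing X with
  | nil => exact h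
  | cons j L ih => exact ih (h.cone _ _ _)

lemma KF_hty (L : List κ) {X : PC.{u, v} A} {F : Fam I X} {a : A} {τ : ι → ℕ} (h : F.Hty a τ) :
    (KF x σ hx L F).Hty a τ := by
  induction L generalizing X with
  | nil => exact h
  | cons j L ih => exact ih (h.cone _ _ _)

lemma KF_hty_mem (L : List κ) {X : PC.{u, v} A} (F : Fam I X) (j : κ) (hj : j ∈ L) :
    (KF x σ hx L F).Hty (x j) (σ j) := by
  induction L generalizing X with
  | nil => simp at hj
  | cons i L ih =>
    rcases List.mem_cons.1 hj with rfl | hj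
    · exact KF_hty x σ hx L (Hty.new _ _ _ _)
    · exact ih _ hj

lemma Kill.kos (L : List κ) {X : PC.{u, v} A} {a : A} (h : Kill X a) : Kill (Kos x L X) a := by
  induction L generalizing X with
  | nil => exact h
  | cons j L ih =>
    apply ih
    refine ⟨?_, ?_⟩
    · rintro ⟨v, w⟩
      rw [Prod.smul_mk, h.1, h.2]; rfl
    · rintro ⟨v, w⟩
      rw [Prod.smul_mk, h.1, h.2]; rfl

end KF

/-- the adic family on a module -/
def base (I : ι → Ideal A) (M : Type v) [AddCommGroup M] [Module A M] : Fam I (of (A := A) M) where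
  S := fun n => ⟨pw I n • ⊤, ⊤, fun _ _ => trivial, fun _ _ => zero_mem _⟩
  m0 := by
    intro n σ a v ha hv
    have := Submodule.smul_mem_smul ha hv
    rw [← Submodule.mul_smul, mul_comm, ← pw_add] at this
    exact this
  m1 := fun _ _ _ _ _ _ => trivial

variable (M : Type v) [AddCommGroup M] [Module A M]

lemma base_bdd : (base I M).Bdd :=
  ⟨fun _ => le_rfl, fun n v _ => by
    rw [Subsingleton.elim v 0]
    exact zero_mem _⟩

lemma base_anti : (base I M).Anti := by
  intro n m h
  exact ⟨Submodule.smul_mono (pw_anti I h) le_rfl, le_rfl⟩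

lemma base_kill {a : A} (h : a ∈ Module.annihilator A M) : Kill (of (A := A) M) a :=
  ⟨Module.mem_annihilator.1 h, fun _ => rfl⟩

end Fam
end PC

end Part5

section Part6
universe u v

section DI
variable {ι : Type*} [DecidableEq ι]

/-- iterated differences along a list of directions -/
def DI {R : Type*} [AddCommGroup R] : List ι → ((ι → ℕ) → R) → (ι → ℕ) → R
  | [], p => p
  | (i :: l), p => DI l (fun n => p (n + Pi.single i 1) - p n)

lemma DI_append {R : Type*} [AddCommGroup R] (l l' : List ι) (p : (ι → ℕ) → R) :
    DI (l ++ l') p = DI l' (DI l p) := by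
  induction l generalizing p with
  | nil => rfl
  | cons i l ih => exact ih _

lemma DI_congr {R : Type*} [AddCommGroup R] (l : List ι) (p q : (ι → ℕ) → R) (N : ℕ)
    (h : ∀ n : ι → ℕ, (∀ i, N ≤ n i) → p n = q n) (n : ι → ℕ) (hn : ∀ i, N ≤ n i) :
    DI l p n = DI l q n := by
  induction l generalizing p q with
  | nil => exact h n hn
  | cons i l ih =>
    apply ih
    intro m hm
    rw [h m hm, h _ (fun j => (hm j).trans (by simp))]

lemma DI_cast (l : List ι) (p : (ι → ℕ) → ℤ) (n : ι → ℕ) :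
    ((DI l p n : ℤ) : ℚ) = DI l (fun n => (p n : ℚ)) n := by
  induction l generalizing p with
  | nil => rfl
  | cons i l ih =>
    simp only [DI]
    rw [ih]
    congr 1
    ext n
    push_cast
    rfl

lemma DI_sum {τ : Type*} (l : List ι) (s : Finset τ) (a : τ → ℚ) (p : τ → (ι → ℕ) → ℚ) (n : ι → ℕ) :
    DI l (fun n => ∑ t ∈ s, a t * p t n) n = ∑ t ∈ s, a t * DI l (p t) n := by
  induction l generalizing p with
  | nil => rfl
  | cons i l ih =>
    simp only [DI]
    rw [← ih]
    congr 1
    ext n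
    rw [← Finset.sum_sub_distrib]
    exact Finset.sum_congr rfl (fun _ _ => by ring)

lemma DI_prod [Fintype ι] (l : List ι) (f : ι → ℚ → ℚ) (n : ι → ℕ) :
    DI l (fun n => ∏ j, f j (n j : ℚ)) n = ∏ j, ((fwdDiff (1 : ℚ))^[l.count j] (f j)) (n j : ℚ) := by
  induction l generalizing f with
  | nil => simp [DI]
  | cons i l ih =>
    simp only [DI]
    have e : (fun n : ι → ℕ => ∏ j, f j (((n + Pi.single i 1 : ι → ℕ) j : ℕ) : ℚ) - ∏ j, f j (n j : ℚ)) =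
        fun n : ι → ℕ => ∏ j, (Function.update f i (fwdDiff 1 (f i))) j (n j : ℚ) := by
      ext n
      rw [← Finset.mul_prod_erase _ _ (Finset.mem_univ i), ← Finset.mul_prod_erase _ _ (Finset.mem_univ i),
        ← Finset.mul_prod_erase (a := i) _ (fun j => Function.update f i (fwdDiff 1 (f i)) j (n j : ℚ)) (Finset.mem_univ i)]
      have e1 : ∏ j ∈ Finset.univ.erase i, f j (((n + Pi.single i 1 : ι → ℕ) j : ℕ) : ℚ) =
          ∏ j ∈ Finset.univ.erase i, f j (n j : ℚ) := by
        refine Finset.prod_congr rfl fun j hj => ?_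
        simp [Pi.single_eq_of_ne (Finset.ne_of_mem_erase hj)]
      have e2 : ∏ j ∈ Finset.univ.erase i, Function.update f i (fwdDiff 1 (f i)) j (n j : ℚ) =
          ∏ j ∈ Finset.univ.erase i, f j (n j : ℚ) := by
        refine Finset.prod_congr rfl fun j hj => ?_
        rw [Function.update_of_ne (Finset.ne_of_mem_erase hj)]
      rw [e1, e2, Function.update_self, ← sub_mul]
      simp [fwdDiff]
    rw [e, ih]
    refine Finset.prod_congr rfl fun j _ => ?_
    by_cases hj : j = i
    · subst hj
      rw [Function.update_self, List.count_cons_self, Function.iterate_succ_apply]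
    · rw [Function.update_of_ne hj, List.count_cons_of_ne (Ne.symm hj)]

lemma DI_mono [Fintype ι] (l : List ι) (m : ι → ℕ) (hm : ∑ i, m i ≤ l.length) (n : ι → ℕ) :
    DI l (fun n => ∏ j, (n j : ℚ) ^ m j) n =
      if m = (fun j => l.count j) then ((∏ j, (l.count j).factorial : ℕ) : ℚ) else 0 := by
  rw [DI_prod l (fun j r => r ^ m j)]
  split_ifs with h
  · subst h
    push_cast
    refine Finset.prod_congr rfl fun j _ => ?_
    rw [fwdDiff_iter_eq_factorial]
    simp
  · have hl : ∑ i, l.count i = l.length := by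
      have := Multiset.toFinset_sum_count_eq (l : Multiset ι)
      rw [Multiset.coe_card] at this
      rw [← this]
      simp only [Multiset.coe_count]
      refine (Finset.sum_subset (Finset.subset_univ _) ?_).symm
      intro i _ hi
      exact List.count_eq_zero.2 (by simpa using hi)
    obtain ⟨j, hj⟩ : ∃ j, m j < l.count j := by
      by_contra! hc
      apply h
      have : ∀ i ∈ Finset.univ, l.count i = m i := by
        rw [← Finset.sum_eq_sum_iff_of_le (fun i _ => hc i)]
        exact le_antisymm (Finset.sum_le_sum fun i _ => hc i) (hl ▸ hm)
      exact funext fun i => (this i (Finset.mem_univ i)).symm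
    refine Finset.prod_eq_zero (Finset.mem_univ j) ?_
    rw [fwdDiff_iter_pow_eq_zero_of_lt hj]
    rfl

lemma DI_mvpoly [Fintype ι] (l : List ι) (P : MvPolynomial ι ℚ) (hP : P.totalDegree ≤ l.length)
    (κ : ι →₀ ℕ) (hκ : ∀ j, l.count j = κ j) (n : ι → ℕ) :
    DI l (fun n => MvPolynomial.eval (fun i => (n i : ℚ)) P) n =
      P.coeff κ * ((∏ j, (κ j).factorial : ℕ) : ℚ) := by
  have e : (fun n : ι → ℕ => MvPolynomial.eval (fun i => (n i : ℚ)) P) =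
      fun n => ∑ t ∈ P.support, P.coeff t * ∏ j, (n j : ℚ) ^ t j := by
    ext n
    rw [MvPolynomial.eval_eq']
  rw [e, DI_sum l P.support (fun t => P.coeff t) (fun t n => ∏ j, (n j : ℚ) ^ t j)]
  have e2 : ∀ t ∈ P.support, P.coeff t * DI l (fun n => ∏ j, (n j : ℚ) ^ t j) n =
      if t = κ then P.coeff κ * ((∏ j, (κ j).factorial : ℕ) : ℚ) else 0 := by
    intro t ht
    rw [DI_mono]
    · have : (⇑t = fun j => l.count j) ↔ t = κ := by
        constructor
        · intro h
          ext j
          rw [h, ← hκ]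
        · rintro rfl
          ext j
          rw [hκ]
      by_cases h : t = κ
      · rw [if_pos (this.2 h), if_pos h, h]
        simp only [hκ]
      · rw [if_neg (fun hh => h (this.1 hh)), if_neg h, mul_zero]
    · refine le_trans ?_ ((MvPolynomial.le_totalDegree ht).trans hP)
      rw [Finsupp.sum_fintype _ _ (fun _ => rfl)]
  rw [Finset.sum_congr rfl e2, Finset.sum_ite_eq']
  split_ifs with h
  · rfl
  · rw [MvPolynomial.notMem_support_iff.1 h, zero_mul]

lemma DI_poly (d : ℕ) (P : Polynomial ℚ) (hP : P.natDegree ≤ d) (n : Unit → ℕ) :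
    DI (List.replicate d ()) (fun n => P.eval (n () : ℚ)) n = P.coeff d * (d.factorial : ℚ) := by
  have e : (fun n : Unit → ℕ => P.eval (n () : ℚ)) =
      fun n => ∑ t ∈ Finset.range (d + 1), P.coeff t * ∏ j, (n j : ℚ) ^ ((fun _ : Unit => t) j) := by
    ext n
    rw [Polynomial.eval_eq_sum_range' (Nat.lt_succ_of_le hP)]
    simp
  rw [e, DI_sum _ _ (fun t => P.coeff t) (fun t n => ∏ j, (n j : ℚ) ^ ((fun _ : Unit => t) j))]
  have e2 : ∀ t ∈ Finset.range (d + 1), P.coeff t * DI (List.replicate d ())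
      (fun n => ∏ j, (n j : ℚ) ^ ((fun _ : Unit => t) j)) n =
      if t = d then P.coeff d * (d.factorial : ℚ) else 0 := by
    intro t ht
    rw [DI_mono]
    · simp only [List.count_replicate_self, funext_iff]
      simp
      split_ifs with h
      · rw [h]
      · rfl
    · simpa using Nat.lt_succ_iff.1 (Finset.mem_range.1 ht)
  rw [Finset.sum_congr rfl e2, Finset.sum_ite_eq']
  simp
end DI

end Part6

section Part7
universe u v

namespace PC
namespace Fam
variable {A : Type u} [CommRing A] {ι : Type*} [Fintype ι] [DecidableEq ι]
variable {I : ι → Ideal A}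

section
variable {κ : Type*} (x : κ → A) (c : κ → ι) (hx : ∀ j, x j ∈ pw I (Pi.single (c j) 1))

lemma KF_DF (L : List κ) {X : PC.{u, v} A} (F : Fam I X) (N : ℕ) (e : ι → ℕ) (p : (ι → ℕ) → ℤ)
    (h : ∀ n : ι → ℕ, (∀ i, N ≤ n i) → (F.S n).SL (F.S (n + e)) (p n)) :
    ∀ n : ι → ℕ, (∀ i, N ≤ n i) →
      ((KF x (fun j => Pi.single (c j) 1) hx L F).S n).SL
        ((KF x (fun j => Pi.single (c j) 1) hx L F).S (n + e)) (DI (L.map c) p n) := by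
  induction L generalizing X p with
  | nil => exact h
  | cons j L ih =>
    refine ih (F.cone (x j) _ (hx j)) (fun n => p (n + Pi.single (c j) 1) - p n) ?_
    intro n hn
    refine SubPC.SL.cone (p := fun v hv => F.m0 _ _ _ v (hx j) hv)
      (q := fun v hv => F.m1 _ _ _ v (hx j) hv) (p' := fun v hv => F.m0 _ _ _ v (hx j) hv)
      (q' := fun v hv => F.m1 _ _ _ v (hx j) hv) ?_ (h n hn)
    rw [add_right_comm]
    exact h _ (fun i => (hn i).trans (by simp))

lemma KF_TF (L : List κ) {X : PC.{u, v} A} (F : Fam I X) (N : ℕ) (p : (ι → ℕ) → ℤ)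
    (h : ∀ n : ι → ℕ, (∀ i, N ≤ n i) → (SubPC.top X).SL (F.S n) (p n)) :
    ∀ n : ι → ℕ, (∀ i, N ≤ n i) →
      (SubPC.top (Kos x L X)).SL
        ((KF x (fun j => Pi.single (c j) 1) hx L F).S n) (DI (L.map c) p n) := by
  induction L generalizing X p with
  | nil => exact h
  | cons j L ih =>
    refine ih (F.cone (x j) _ (hx j)) (fun n => p (n + Pi.single (c j) 1) - p n) ?_
    intro n hn
    have h1 := SubPC.SL.cone (y := x j) (h (n + Pi.single (c j) 1)
      (fun i => (hn i).trans (by simp))) (h n hn) (p := fun _ _ => trivial)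
      (q := fun _ _ => trivial) (p' := fun v hv => F.m0 n _ _ v (hx j) hv)
      (q' := fun v hv => F.m1 n _ _ v (hx j) hv)
    have e : SubPC.coneSub (x j) (SubPC.top X) (SubPC.top X) (fun _ _ => trivial)
      (fun _ _ => trivial) = SubPC.top (PC.cone (x j) X) := by
      simp only [SubPC.coneSub, SubPC.top, Submodule.prod_top]
    rw [e] at h1
    exact h1

lemma KF_kosSub (Y : List κ) (i0 : ι) (hY : ∀ j ∈ Y, c j = i0) {X : PC.{u, v} A} (F : Fam I X)
    (V : SubPC X) (n0 : ι → ℕ) (t : ℕ) (g : ℕ → ℤ)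
    (h : ∀ i ≤ t, (F.S (n0 + i • Pi.single i0 1)).SL V (g i)) :
    ∀ i, i + Y.length ≤ t →
      ((KF x (fun j => Pi.single (c j) 1) hx Y F).S (n0 + i • Pi.single i0 1)).SL
        (V.kosSub x Y) ((fwdDiff 1)^[Y.length] g i) := by
  induction Y generalizing X g t with
  | nil => exact h
  | cons j Y ih =>
    intro i hi
    rw [List.length_cons] at hi
    rw [List.length_cons, Function.iterate_succ_apply]
    refine ih (fun k hk => hY k (List.mem_cons_of_mem _ hk)) (F.cone (x j) _ (hx j))
      (SubPC.coneSub (x j) V V (fun _ h => V.S0.smul_mem _ h)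
      (fun _ h => V.S1.smul_mem _ h)) (t - 1) (fwdDiff 1 g) ?_ i (by omega)
    intro i hi'
    refine SubPC.SL.cone (p := fun v hv => F.m0 _ _ _ v (hx j) hv)
      (q := fun v hv => F.m1 _ _ _ v (hx j) hv) ?_ (h i (by omega))
    have := h (i + 1) (by omega)
    rw [succ_nsmul, ← add_assoc] at this
    rw [hY j (List.mem_cons_self)]
    exact this

lemma iter_DI (k : ℕ) (i0 : ι) (p : (ι → ℕ) → ℤ) (n0 : ι → ℕ) :
    (fwdDiff 1)^[k] (fun u : ℕ => p (n0 + u • Pi.single i0 1)) 0 = DI (List.replicate k i0) p n0 := by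
  induction k generalizing p with
  | zero => simp [DI]
  | succ k ih =>
    rw [Function.iterate_succ_apply, List.replicate_succ]
    simp only [DI]
    rw [← ih]
    have e : fwdDiff 1 (fun u : ℕ => p (n0 + u • Pi.single i0 1)) =
        fun u : ℕ => (fun n => p (n + Pi.single i0 1) - p n) (n0 + u • Pi.single i0 1) := by
      ext u
      simp only [fwdDiff]
      rw [succ_nsmul, ← add_assoc]
    rw [e]

lemma chi_A (k : ℕ) (Y : List κ) (hlen : Y.length = k + 1) (i0 : ι) (hY : ∀ j ∈ Y, c j = i0)
    {X : PC.{u, v} A} (F : Fam I X) (N : ℕ) (p : (ι → ℕ) → ℤ)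
    (h : ∀ n : ι → ℕ, (∀ i, N ≤ n i) → (F.S n).SL (F.S (n + Pi.single i0 1)) (p n))
    (n0 : ι → ℕ) (hn0 : ∀ i, N ≤ n0 i)
    (hex : ((KF x (fun j => Pi.single (c j) 1) hx Y F).S n0).pc.Ex) :
    ((F.S (n0 + (k + 1) • Pi.single i0 1)).kosSub x Y).pc.fin ∧
    ((F.S (n0 + (k + 1) • Pi.single i0 1)).kosSub x Y).pc.chi = DI (List.replicate k i0) p n0 := by
  have hs : ∀ r i : ℕ, (F.S (n0 + i • Pi.single i0 1)).SL (F.S (n0 + (i + r) • Pi.single i0 1))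
      (∑ u ∈ Finset.range (i + r), p (n0 + u • Pi.single i0 1) -
        ∑ u ∈ Finset.range i, p (n0 + u • Pi.single i0 1)) := by
    intro r i
    induction r with
    | zero =>
      rw [add_zero, sub_self]
      exact SubPC.SL.refl _
    | succ r ih =>
      have h2 := h (n0 + (i + r) • Pi.single i0 1) (fun j => (hn0 j).trans (by simp))
      rw [add_assoc, ← succ_nsmul] at h2
      have h3 := ih.trans h2
      rw [← add_assoc, Finset.sum_range_succ, add_sub_right_comm]
      exact h3
  let C : ℤ := ∑ u ∈ Finset.range (k + 1), p (n0 + u • Pi.single i0 1)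
  let g : ℕ → ℤ := fun i => C - ∑ u ∈ Finset.range i, p (n0 + u • Pi.single i0 1)
  have h1 := KF_kosSub x c hx Y i0 hY F (F.S (n0 + (k + 1) • Pi.single i0 1)) n0 (k + 1) g (by
    intro i hi
    have := hs (k + 1 - i) i
    rw [Nat.add_sub_cancel' hi] at this
    exact this) 0 (by omega)
  rw [zero_nsmul, add_zero] at h1
  obtain ⟨h2, h3⟩ := hex.fin
  obtain ⟨h4, h5⟩ := h1.fin_chi h2
  refine ⟨h4, ?_⟩
  rw [h5, h3, hlen, Function.iterate_succ_apply, ← iter_DI]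
  have e : fwdDiff 1 g = (-1 : ℤ) • (fun u => p (n0 + u • Pi.single i0 1)) := by
    ext u
    simp [fwdDiff, g, Finset.sum_range_succ]
  rw [e, fwdDiff_iter_const_smul]
  simp

lemma chi_T (L : List κ) {X : PC.{u, v} A} (F : Fam I X) (N : ℕ) (p : (ι → ℕ) → ℤ)
    (h : ∀ n : ι → ℕ, (∀ i, N ≤ n i) → (SubPC.top X).SL (F.S n) (p n))
    (n : ι → ℕ) (hn : ∀ i, N ≤ n i)
    (hex : ((KF x (fun j => Pi.single (c j) 1) hx L F).S n).pc.Ex) :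
    (Kos x L X).fin ∧ (Kos x L X).chi = DI (L.map c) p n := by
  have h1 := KF_TF x c hx L F N p h n hn
  obtain ⟨h2, h3⟩ := hex.fin
  obtain ⟨h4, h5⟩ := h1.fin_chi' h2
  obtain ⟨h6, h7⟩ := SubPC.top_fin h4
  refine ⟨h6, ?_⟩
  rw [h7]
  rw [h3] at h5
  omega

end
end Fam
end PC

end Part7

section Part8
universe u v
open Pointwise

section CH
variable {A : Type u} [CommRing A]

lemma prod_sub_mem {κ : Type*} [DecidableEq κ] (K Q : Ideal A) (hQ : Q ≤ K) (r q : κ → A)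
    (hr : ∀ i, r i ∈ K) (hq : ∀ i, q i ∈ Q) (s : Finset κ) :
    ∏ i ∈ s, (r i - q i) - ∏ i ∈ s, r i ∈ Q * K ^ (s.card - 1) := by
  induction s using Finset.induction_on with
  | empty => simp
  | insert a s ha ih =>
    rw [Finset.prod_insert ha, Finset.prod_insert ha, Finset.card_insert_of_notMem ha]
    have e : (r a - q a) * ∏ i ∈ s, (r i - q i) - r a * ∏ i ∈ s, r i =
      (r a - q a) * (∏ i ∈ s, (r i - q i) - ∏ i ∈ s, r i) - q a * ∏ i ∈ s, r i := by ring
    rw [e, Nat.add_sub_cancel]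
    refine sub_mem ?_ ?_
    · have h1 : K * (Q * K ^ (s.card - 1)) ≤ Q * K ^ s.card := by
        rw [mul_left_comm, ← pow_succ']
        exact Ideal.mul_mono le_rfl (Ideal.pow_le_pow_right (by omega))
      exact h1 (Ideal.mul_mem_mul (sub_mem (hr a) (hQ (hq a))) ih)
    · refine Ideal.mul_mem_mul (hq a) ?_
      have := Ideal.prod_mem_prod (s := s) (I := fun _ => K) (x := r) (fun i _ => hr i)
      rwa [Finset.prod_const] at this

lemma det_mem {n : ℕ} (K Q : Ideal A) (hQ : Q ≤ K) (r : Fin n → A) (q : Matrix (Fin n) (Fin n) A)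
    (hr : ∀ i, r i ∈ K) (hq : ∀ i j, q i j ∈ Q) :
    (Matrix.diagonal r - q).det - ∏ i, r i ∈ Q * K ^ (n - 1) := by
  rw [Matrix.det_apply, ← Finset.add_sum_erase _ _ (Finset.mem_univ (1 : Equiv.Perm (Fin n))),
    add_sub_right_comm]
  refine add_mem ?_ (sum_mem fun σ hσ => ?_)
  · have := prod_sub_mem K Q hQ r (fun i => q i i) hr (fun i => hq i i) Finset.univ
    simpa using this
  · have hs : σ ≠ 1 := Finset.ne_of_mem_erase hσ
    obtain ⟨i, hi⟩ : ∃ i, σ i ≠ i := by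
      by_contra! hc
      exact hs (Equiv.ext hc)
    rw [Units.smul_def]
    refine zsmul_mem ?_ _
    rw [← Finset.mul_prod_erase _ _ (Finset.mem_univ i)]
    refine Ideal.mul_mem_mul ?_ ?_
    · rw [Matrix.sub_apply, Matrix.diagonal_apply_ne _ hi, zero_sub]
      exact neg_mem (hq _ _)
    · have := Ideal.prod_mem_prod (s := Finset.univ.erase i) (I := fun _ => K)
        (x := fun j => (Matrix.diagonal r - q) (σ j) j) (fun j _ => by
          rw [Matrix.sub_apply, Matrix.diagonal_apply]
          refine sub_mem ?_ (hQ (hq _ _))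
          split_ifs
          · exact hr _
          · exact zero_mem _)
      rwa [Finset.prod_const, Finset.card_erase_of_mem (Finset.mem_univ i), Finset.card_univ,
        Fintype.card_fin] at this

lemma pow_le_of_smul_le {W : Type v} [AddCommGroup W] [Module A W] [Module.Finite A W]
    (K Q : Ideal A) (hQ : Q ≤ K) (h : K • (⊤ : Submodule A W) ≤ Q • ⊤) :
    ∃ n : ℕ, K ^ n ≤ Q * K ^ (n - 1) ⊔ Module.annihilator A W := by
  obtain ⟨n, w, hw⟩ := Module.Finite.exists_fin (R := A) (M := W)
  refine ⟨n, ?_⟩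
  rw [Submodule.pow_eq_span_pow_set, Submodule.span_le]
  intro a ha
  obtain ⟨f, rfl⟩ := Set.mem_pow.1 ha
  rw [List.prod_ofFn]
  have h1 : ∀ i, ∃ a : Fin n → A, (∀ j, a j ∈ Q) ∧ ∑ j, a j • w j = (f i : A) • w i := by
    intro i
    have h2 : (f i : A) • w i ∈ Q • Submodule.span A (Set.range w) := by
      rw [hw]
      exact h (Submodule.smul_mem_smul (f i).2 trivial)
    obtain ⟨a, ha, e⟩ := (Submodule.mem_ideal_smul_span_iff_exists_sum Q w _).1 h2
    refine ⟨a, ha, ?_⟩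
    rw [← e, Finsupp.sum_fintype a (fun i c => c • w i) (fun _ => zero_smul _ _)]
  choose q hq hqe using h1
  have h3 := det_mem K Q hQ (fun i => (f i : A)) (Matrix.of q) (fun i => (f i).2) hq
  set E := Matrix.diagonal (fun i => (f i : A)) - Matrix.of q with hE
  have h4 : ∀ i, ∑ j, E i j • w j = 0 := by
    intro i
    simp only [hE, Matrix.sub_apply, sub_smul, Finset.sum_sub_distrib]
    rw [sub_eq_zero]
    refine Eq.trans ?_ (hqe i).symm
    rw [Finset.sum_eq_single i]
    · simp
    · intro j _ hj
      rw [Matrix.diagonal_apply_ne _ (Ne.symm hj), zero_smul]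
    · simp
  have h5 : E.det ∈ Module.annihilator A W := by
    have h6 : ∀ k, E.det • w k = 0 := by
      intro k
      have h7 : ∑ i, E.adjugate k i • ∑ j, E i j • w j = 0 := by simp [h4]
      simp only [Finset.smul_sum, smul_smul] at h7
      rw [Finset.sum_comm] at h7
      simp only [← Finset.sum_smul] at h7
      have h8 : ∀ j, ∑ i, E.adjugate k i * E i j = if k = j then E.det else 0 := by
        intro j
        rw [← Matrix.mul_apply, Matrix.adjugate_mul]
        simp [Matrix.one_apply]
      simp only [h8] at h7
      simpa using h7
    rw [Module.mem_annihilator]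
    intro v
    have hv : v ∈ Submodule.span A (Set.range w) := by rw [hw]; trivial
    induction hv using Submodule.span_induction with
    | mem x hx => obtain ⟨k, rfl⟩ := hx; exact h6 k
    | zero => simp
    | add x y _ _ hx hy => rw [smul_add, hx, hy, add_zero]
    | smul a x _ hx => rw [smul_comm, hx, smul_zero]
  have h9 := Submodule.sub_mem_sup (S := Module.annihilator A W) (T := Q * K ^ (n - 1)) h5 h3
  rw [sub_sub_cancel, sup_comm] at h9
  exact h9

lemma red_pow [IsNoetherianRing A] {M : Type v} [AddCommGroup M] [Module A M] [Module.Finite A M]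
    (K Q : Ideal A) (hQ : Q ≤ K) (N : ℕ)
    (h : K • (K ^ N • (⊤ : Submodule A M)) ≤ Q • (K ^ N • (⊤ : Submodule A M))) :
    ∃ m : ℕ, K ^ (m + 1) ≤ Q * K ^ m ⊔ Module.annihilator A M := by
  have hW : K • (⊤ : Submodule A (K ^ N • (⊤ : Submodule A M) : Submodule A M)) ≤ Q • ⊤ := by
    rw [← Submodule.map_le_map_iff_of_injective (Submodule.subtype_injective
      (K ^ N • (⊤ : Submodule A M))), Submodule.map_smul'', Submodule.map_smul'',
      Submodule.map_subtype_top]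
    exact h
  obtain ⟨n, hn⟩ := pow_le_of_smul_le K Q hQ hW
  refine ⟨n + N, ?_⟩
  have h1 : Module.annihilator A (K ^ N • (⊤ : Submodule A M) : Submodule A M) * K ^ N ≤
      Module.annihilator A M := by
    rw [Ideal.mul_le]
    intro a ha b hb
    rw [Module.mem_annihilator] at ha ⊢
    intro v
    have := congrArg Subtype.val (ha ⟨b • v, Submodule.smul_mem_smul hb trivial⟩)
    rw [mul_smul]
    exact this
  calc K ^ (n + N + 1) = K ^ n * (K ^ N * K) := by rw [pow_succ, pow_add, mul_assoc]
    _ ≤ (Q * K ^ (n - 1) ⊔ Module.annihilator A (K ^ N • (⊤ : Submodule A M) : Submodule A M)) *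
      (K ^ N * K) := Ideal.mul_mono_left hn
    _ ≤ _ := by
      rw [Ideal.sup_mul]
      refine sup_le_sup ?_ ?_
      · rw [mul_assoc, ← pow_succ, ← pow_add]
        exact Ideal.mul_mono le_rfl (Ideal.pow_le_pow_right (by omega))
      · rw [← mul_assoc]
        exact Ideal.mul_le_left.trans h1

end CH

namespace PC
namespace Fam
variable {A : Type u} [CommRing A] {ι : Type*} [Fintype ι] [DecidableEq ι]
variable {I : ι → Ideal A}

lemma exists_exact' [IsNoetherianRing A] {X : PC.{u, v} A} (F : Fam I X) (hX : X.FG) (hb : F.Bdd)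
    (M : Type*) [AddCommGroup M] [Module A M] [Module.Finite A M]
    (hk : ∀ a ∈ Module.annihilator A M, Kill X a)
    (Q : Ideal A) (hQ : Q ≤ pw I 1) (hQb : Q ≤ F.bd 1) (N : ℕ)
    (h : pw I 1 • (pw I 1 ^ N • (⊤ : Submodule A M)) ≤ Q • (pw I 1 ^ N • (⊤ : Submodule A M))) :
    ∃ N : ℕ, ∀ n : ι → ℕ, (∀ i, N ≤ n i) → (F.S n).pc.Ex := by
  obtain ⟨m, hm⟩ := red_pow _ Q hQ N h
  refine exists_exact _ hX hb ((m + 1) • 1) ?_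
  rw [pw_nsmul]
  refine hm.trans (sup_le ?_ ?_)
  · rw [← pw_nsmul]
    refine (Ideal.mul_mono_left hQb).trans ((bd_mul _ _ _).trans_eq ?_)
    rw [succ_nsmul, add_comm]
  · intro a ha
    exact Kill.bd (hk a ha) _ _

end Fam
end PC

end Part8

section Part9
universe u v
open IsLocalRing

section supp
variable {A : Type u} [CommRing A]

lemma supp_lt (a P : Ideal A) (h d k0 : ℕ)
    (hP : ∀ p : PrimeSpectrum (A ⧸ a), P.map (Ideal.Quotient.mk a) ≤ p.asIdeal →
      (h : ℕ∞) ≤ Order.height p)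
    (hdim : ringKrullDim (A ⧸ a) = (d : WithBot ℕ∞)) (hk : d ≤ k0 + h)
    (N : Type v) [AddCommGroup N] [Module A N]
    (hN : ∀ p ∈ Module.support A N, a ≤ p.asIdeal ∧ P ≤ p.asIdeal) :
    Module.supportDim A N < ((k0 + 1 : ℕ) : WithBot ℕ∞) := by
  have key : Module.supportDim A N ≤ ((k0 : ℕ) : WithBot ℕ∞) := by
    refine iSup_le fun p => ?_
    let e := a.primeSpectrumQuotientOrderIsoZeroLocus
    let f : Module.support A N → PrimeSpectrum (A ⧸ a) := fun q => e.symm ⟨q.1, (hN q.1 q.2).1⟩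
    have hf : StrictMono f := fun q q' hq => e.symm.strictMono hq
    let p' := p.map f hf
    have h1 : (h : ℕ∞) ≤ Order.height p'.head := by
      apply hP
      rw [Ideal.map_le_iff_le_comap]
      have h2 : p'.head = f p.head := rfl
      have h3 : e (f p.head) = ⟨p.head.1, (hN _ p.head.2).1⟩ := e.apply_symm_apply _
      have h4 : Ideal.comap (Ideal.Quotient.mk a) (f p.head).asIdeal = p.head.1.asIdeal :=
        congrArg (fun z => z.1.asIdeal) h3
      rw [h2, h4]
      exact (hN _ p.head.2).2
    obtain ⟨r, hr, hrl⟩ := Order.exists_series_of_le_height _ h1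
    have h5 := Order.LTSeries.length_le_krullDim (RelSeries.smash r p' hr)
    have h6 : (RelSeries.smash r p' hr).length = h + p.length := by
      change r.length + p.length = _
      rw [hrl]
    rw [h6] at h5
    change _ ≤ ringKrullDim (A ⧸ a) at h5
    rw [hdim] at h5
    have h7 : h + p.length ≤ d := by exact_mod_cast h5
    have : p.length ≤ k0 := by omega
    exact_mod_cast this
  refine lt_of_le_of_lt key ?_
  exact_mod_cast Nat.lt_succ_self k0

end supp

namespace PC
namespace Fam
variable {A : Type u} [CommRing A] {ι : Type*} [Fintype ι] [DecidableEq ι]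
variable {I : ι → Ideal A}

/-- cofinality with the adic filtration -/
def Cof {X : PC.{u, v} A} (F : Fam I X) : Prop :=
  ∀ n, ∃ m, ∀ a ∈ pw I m, (∀ v, a • v ∈ (F.S n).S0) ∧ (∀ v, a • v ∈ (F.S n).S1)

lemma Cof.cone {X : PC.{u, v} A} {F : Fam I X} (h : F.Cof) (y : A) (σ : ι → ℕ)
    (hy : y ∈ pw I σ) : (F.cone y σ hy).Cof := by
  intro n
  obtain ⟨m, hm⟩ := h n
  obtain ⟨m', hm'⟩ := h (n + σ)
  refine ⟨m + m', fun a ha => ?_⟩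
  have h1 := hm a (pw_anti I (by simp) ha)
  have h2 := hm' a (pw_anti I (by simp) ha)
  exact ⟨fun v => ⟨h2.1 v.1, h1.2 v.2⟩, fun v => ⟨h2.2 v.1, h1.1 v.2⟩⟩

lemma KF_cof {κ : Type*} (x : κ → A) (σ : κ → ι → ℕ) (hx : ∀ j, x j ∈ pw I (σ j)) (L : List κ)
    {X : PC.{u, v} A} {F : Fam I X} (h : F.Cof) : (KF x σ hx L F).Cof := by
  induction L generalizing X with
  | nil => exact h
  | cons j L ih => exact ih (h.cone _ _ _)

lemma base_cof (M : Type v) [AddCommGroup M] [Module A M] : (base I M).Cof :=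
  fun n => ⟨n, fun _ ha => ⟨fun _ => Submodule.smul_mem_smul ha trivial, fun _ => trivial⟩⟩

/-- passing from a deep subcomplex to the whole complex -/
lemma chi_quot [IsNoetherianRing A] [IsLocalRing A] {κ : Type*} (x : κ → A)
    (σ : κ → ι → ℕ) (hx : ∀ j, x j ∈ pw I (σ j))
    (X Y : List κ) (M : Type v) [AddCommGroup M] [Module A M] [Module.Finite A M]
    (P : Ideal A) (h d k0 : ℕ)
    (hP : ∀ p : PrimeSpectrum (A ⧸ Module.annihilator A M),
      P.map (Ideal.Quotient.mk (Module.annihilator A M)) ≤ p.asIdeal → (h : ℕ∞) ≤ Order.height p)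
    (hdim : ringKrullDim (A ⧸ Module.annihilator A M) = (d : WithBot ℕ∞)) (hk : d ≤ k0 + h)
    (hI : ∀ (p : Ideal A) [p.IsPrime], ∀ i, I i ≤ p → P ≤ p)
    (hY : Y.length = k0 + 1)
    (hfin : (Kos x Y (Kos x X (of (A := A) M))).fin)
    (n : ι → ℕ) (hn : (((KF x σ hx X (base I M)).S n).kosSub x Y).pc.fin) :
    (((KF x σ hx X (base I M)).S n).kosSub x Y).pc.chi =
      (Kos x Y (Kos x X (of (A := A) M))).chi := by
  set V := (KF x σ hx X (base I M)).S n with hV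
  have hs := (V.isKer_proj.kos x Y).ses
  have h3 := hs.fin3 hn hfin
  have hFG : (Kos x X (of (A := A) M)).FG := FG.kos x X FG.of
  have hq : V.quot.FG := by
    have := hFG.f0
    have := hFG.f1
    exact ⟨inferInstanceAs (Module.Finite A (_ ⧸ _)), inferInstanceAs (Module.Finite A (_ ⧸ _))⟩
  obtain ⟨m, hm⟩ := KF_cof x σ hx X (base_cof M) n
  have hprime : ∀ p : PrimeSpectrum A, Module.annihilator A M ≤ p.asIdeal →
      pw I m ≤ p.asIdeal → Module.annihilator A M ≤ p.asIdeal ∧ P ≤ p.asIdeal := by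
    intro p h1 h2
    refine ⟨h1, ?_⟩
    obtain ⟨i, -, hi⟩ := (Ideal.IsPrime.prod_le p.2).1 h2
    exact hI _ i (Ideal.IsPrime.le_of_pow_le hi)
  have hkill : ∀ a ∈ Module.annihilator A M, Kill (Kos x X (of (A := A) M)) a :=
    fun a ha => Kill.kos x X (base_kill M ha)
  have h0 := chi_vanish x Y V.quot hq h3 (by
    rw [hY]
    refine supp_lt _ P h d k0 hP hdim hk _ ?_
    intro p hp
    have h4 := Module.annihilator_le_of_mem_support hp
    refine hprime p (le_trans (fun a ha => ?_) h4) (le_trans (fun a ha => ?_) h4)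
    · rw [Module.mem_annihilator]
      intro v
      obtain ⟨v, rfl⟩ := Submodule.mkQ_surjective _ v
      rw [← map_smul, (hkill a ha).1, map_zero]
    · rw [Module.mem_annihilator]
      intro v
      obtain ⟨v, rfl⟩ := Submodule.mkQ_surjective _ v
      rw [← map_smul, Submodule.mkQ_apply, Submodule.Quotient.mk_eq_zero]
      exact (hm a ha).1 v) (by
    rw [hY]
    refine supp_lt _ P h d k0 hP hdim hk _ ?_
    intro p hp
    have h4 := Module.annihilator_le_of_mem_support hp
    refine hprime p (le_trans (fun a ha => ?_) h4) (le_trans (fun a ha => ?_) h4)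
    · rw [Module.mem_annihilator]
      intro v
      obtain ⟨v, rfl⟩ := Submodule.mkQ_surjective _ v
      rw [← map_smul, (hkill a ha).2, map_zero]
    · rw [Module.mem_annihilator]
      intro v
      obtain ⟨v, rfl⟩ := Submodule.mkQ_surjective _ v
      rw [← map_smul, Submodule.mkQ_apply, Submodule.Quotient.mk_eq_zero]
      exact (hm a ha).2 v)
  rw [hs.chi hn h3, h0, add_zero]

end Fam
end PC

end Part9

lemma length_filter_finRange {d : ℕ} (p : Fin d → Prop) [DecidablePred p] :
    ((List.finRange d).filter (fun j => decide (p j))).length = (Finset.univ.filter p).card := by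
  rw [← List.toFinset_card_of_nodup ((List.nodup_finRange d).filter _)]
  congr 1
  ext j
  simp

lemma modLength_eq (A : Type*) [CommRing A] (M : Type*) [AddCommGroup M] [Module A M] :
    modLength A M = Module.length A M := by
  rw [Module.length_eq_height]; rfl

section main
open PC PC.Fam
universe u v
variable {A : Type u} [CommRing A]

lemma chi_HS [IsNoetherianRing A] (M : Type v) [AddCommGroup M] [Module A M] [Module.Finite A M]
    {d : ℕ} (x : Fin d → A) (X Y : List (Fin d)) (hlen : X.length + Y.length = d)
    (hmem : ∀ j, j ∈ X ∨ j ∈ Y) (e : ℕ)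
    (he : IsHSMult A M (Ideal.span (Set.range x)) d e) :
    (Kos x Y (Kos x X (of (A := A) M))).fin ∧ (Kos x Y (Kos x X (of (A := A) M))).chi = (e : ℤ) := by
  let Iq : Unit → Ideal A := fun _ => Ideal.span (Set.range x)
  let c : Fin d → Unit := fun _ => ()
  have e1 : (Pi.single () 1 : Unit → ℕ) = 1 := by ext; simp
  have hpw : ∀ n, pw Iq n = Ideal.span (Set.range x) ^ n () := by
    intro n
    simp [pw, Iq]
  have hx : ∀ j, x j ∈ pw Iq (Pi.single (c j) 1) := by
    intro j
    rw [pw_single]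
    exact Ideal.subset_span ⟨j, rfl⟩
  let F := KF x (fun j => Pi.single (c j) 1) hx Y (KF x (fun j => Pi.single (c j) 1) hx X (base Iq M))
  obtain ⟨N, hN⟩ := exists_exact' F (FG.kos x Y (FG.kos x X FG.of))
    (KF_bdd _ _ _ _ (KF_bdd _ _ _ _ (base_bdd M))) M
    (fun a ha => Kill.kos x Y (Kill.kos x X (base_kill M ha))) (Ideal.span (Set.range x))
    (by rw [hpw]; simp) (by
      rw [Ideal.span_le]
      rintro _ ⟨j, rfl⟩
      have h1 : F.Hty (x j) (Pi.single (c j) 1) := by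
        rcases hmem j with hj | hj
        · exact KF_hty _ _ _ _ (KF_hty_mem x (fun j => Pi.single (c j) 1) hx X _ j hj)
        · exact KF_hty_mem x (fun j => Pi.single (c j) 1) hx Y _ j hj
      have h2 := h1.bd
      rwa [show (Pi.single (c j) 1 : Unit → ℕ) = 1 from e1] at h2) 0
    (by rw [hpw]; simp)
  obtain ⟨P, hdeg, ⟨N', hN'⟩, hcoef⟩ := he
  let p : (Unit → ℕ) → ℤ := fun n => ((Module.length A (M ⧸ (pw Iq n • (⊤ : Submodule A M)))).toNat : ℤ)
  have hT : ∀ n : Unit → ℕ, (∀ i, N' ≤ n i) → (SubPC.top (of (A := A) M)).SL ((base Iq M).S n) (p n) := by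
    intro n hn
    refine ⟨le_top, le_top, ?_, ?_, ?_⟩
    · change qlen ⊤ (pw Iq n • (⊤ : Submodule A M)) ≠ ⊤
      rw [qlen_top, hpw]
      exact Module.length_ne_top_iff.2 (hN' _ (hn ())).1
    · change qlen (⊤ : Submodule A PUnit.{v+1}) ⊤ ≠ ⊤
      rw [qlen_self]; simp
    · change ((qlen ⊤ (pw Iq n • (⊤ : Submodule A M))).toNat : ℤ) - (qlen (⊤ : Submodule A PUnit.{v+1}) ⊤).toNat = _
      rw [qlen_self, qlen_top]
      simp [p]
  have hT' := KF_TF x c hx X (base Iq M) N' p hT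
  obtain ⟨h1, h2⟩ := chi_T x c hx Y _ N' _ hT' (fun _ => N + N') (fun _ => by simp)
    (hN _ (fun _ => by simp))
  refine ⟨h1, ?_⟩
  rw [h2, ← DI_append, ← List.map_append]
  have h3 : (X ++ Y).map c = List.replicate d () := by
    rw [List.eq_replicate_iff]
    simp [hlen]
  rw [h3]
  have h4 : ((DI (List.replicate d ()) p (fun _ => N + N') : ℤ) : ℚ) = ((e : ℤ) : ℚ) := by
    rw [DI_cast, DI_congr _ _ (fun n => P.eval (n () : ℚ)) N' _ _ (by simp), DI_poly d P hdeg]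
    · rw [← hcoef]; simp
    · intro n hn
      have := (hN' _ (hn ())).2
      rw [← this, lenNat, modLength_eq]
      simp only [p]
      rw [hpw]
      simp
  exact_mod_cast h4

variable {s : ℕ}

lemma pw_snoc (I : Fin s → Ideal A) (J : Ideal A) (n : Fin (s + 1) → ℕ) :
    pw (Fin.snoc I J : Fin (s + 1) → Ideal A) n = J ^ n (Fin.last s) * ∏ i, I i ^ n i.castSucc := by
  rw [pw, Fin.prod_univ_castSucc, mul_comm]
  simp

lemma jr_exact [IsNoetherianRing A] (M : Type v) [AddCommGroup M] [Module A M] [Module.Finite A M]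
    {d t : ℕ} (I : Fin t → Ideal A) (x : Fin d → A) (c : Fin d → Fin t)
    (hjr : IsJointReductionEq A M I x c) (hx : ∀ j, x j ∈ pw I (Pi.single (c j) 1))
    (X Y : List (Fin d)) (hmem : ∀ j, j ∈ X ∨ j ∈ Y) :
    ∃ N : ℕ, ∀ n : Fin t → ℕ, (∀ i, N ≤ n i) →
      ((KF x (fun j => Pi.single (c j) 1) hx Y
        (KF x (fun j => Pi.single (c j) 1) hx X (base I M))).S n).pc.Ex := by
  let F := KF x (fun j => Pi.single (c j) 1) hx Y (KF x (fun j => Pi.single (c j) 1) hx X (base I M))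
  obtain ⟨hxI, N, hN⟩ := hjr
  let δ : Fin t → Fin t → ℕ := fun i j => if j = i then 0 else 1
  have hδ : ∀ i, Pi.single i 1 + δ i = 1 := by
    intro i
    ext j
    by_cases h : j = i
    · subst h; simp [δ]
    · simp [δ, h]
  have hjrI : ∀ i, jrIdeal A x c i ≤ I i := by
    intro i
    rw [jrIdeal, Ideal.span_le]
    rintro _ ⟨j, rfl, rfl⟩
    exact hxI j
  have hjrb : ∀ i, jrIdeal A x c i ≤ F.bd (Pi.single i 1) := by
    intro i
    rw [jrIdeal, Ideal.span_le]
    rintro _ ⟨j, rfl, rfl⟩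
    have h1 : F.Hty (x j) (Pi.single (c j) 1) := by
      rcases hmem j with hj | hj
      · exact KF_hty _ _ _ _ (KF_hty_mem x (fun j => Pi.single (c j) 1) hx X _ j hj)
      · exact KF_hty_mem x (fun j => Pi.single (c j) 1) hx Y _ j hj
    exact h1.bd
  refine exists_exact' F (FG.kos x Y (FG.kos x X FG.of))
    (KF_bdd _ _ _ _ (KF_bdd _ _ _ _ (base_bdd M))) M
    (fun a ha => Kill.kos x Y (Kill.kos x X (base_kill M ha)))
    (⨆ i, jrIdeal A x c i * pw I (δ i)) ?_ ?_ N ?_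
  · refine iSup_le fun i => ?_
    rw [← hδ i, pw_add, pw_single]
    exact Ideal.mul_mono_left (hjrI i)
  · refine iSup_le fun i => ?_
    rw [← hδ i]
    exact (Ideal.mul_mono_left (hjrb i)).trans (bd_mul _ _ _)
  · have h1 := hN (fun _ => N) (fun _ => le_rfl)
    rw [← Submodule.mul_smul, ← pow_succ', ← pw_nsmul]
    have h2 : pw I ((N + 1) • 1) = ∏ i, I i ^ (N + 1) := by simp [pw]
    rw [h2, h1]
    refine Finset.sum_induction _ (fun U => U ≤ (⨆ i, jrIdeal A x c i * pw I (δ i)) •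
      (pw I 1 ^ N • (⊤ : Submodule A M))) (fun _ _ h h' => sup_le h h') bot_le ?_
    intro i _
    have h3 : ∏ j, I j ^ (N + if j = i then 0 else 1) = pw I (δ i) * pw I 1 ^ N := by
      rw [← pw_nsmul, ← pw_add, pw]
      refine Finset.prod_congr rfl fun j _ => ?_
      congr 1
      simp [δ, add_comm]
    rw [h3, Submodule.mul_smul, ← Submodule.mul_smul]
    exact Submodule.smul_mono (le_iSup (fun i => jrIdeal A x c i * pw I (δ i)) i) le_rfl

lemma DI_mixed (M : Type v) [AddCommGroup M] [Module A M] (J : Ideal A) (I : Fin s → Ideal A)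
    (k0 : ℕ) (k : Fin s → ℕ) (e : ℕ) (he : IsMixedMult A M J I k0 k e)
    (l : List (Fin (s + 1))) (hl : l.length = k0 + ∑ i, k i) (hl0 : l.count (Fin.last s) = k0)
    (hlk : ∀ i : Fin s, l.count i.castSucc = k i) (p : (Fin (s + 1) → ℕ) → ℤ)
    (hp : ∀ n, p n = ((qlen (pw (Fin.snoc I J : Fin (s + 1) → Ideal A) n • (⊤ : Submodule A M))
      (pw (Fin.snoc I J : Fin (s + 1) → Ideal A) (n + Pi.single (Fin.last s) 1) •
        (⊤ : Submodule A M))).toNat : ℤ)) :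
    ∃ N : ℕ, ∀ n : Fin (s + 1) → ℕ, (∀ i, N ≤ n i) →
      qlen (pw (Fin.snoc I J : Fin (s + 1) → Ideal A) n • (⊤ : Submodule A M))
      (pw (Fin.snoc I J : Fin (s + 1) → Ideal A) (n + Pi.single (Fin.last s) 1) •
        (⊤ : Submodule A M)) ≠ ⊤ ∧ DI l p n = (e : ℤ) := by
  obtain ⟨P, hdeg, ⟨N, hN⟩, hcoef⟩ := he
  let ρ : Fin (s + 1) ≃ Fin (s + 1) := (finRotate (s + 1)).symm
  have hρ0 : ρ 0 = Fin.last s := by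
    rw [Equiv.symm_apply_eq, finRotate_last]
  have hρs : ∀ i : Fin s, ρ i.succ = i.castSucc := by
    intro i
    rw [Equiv.symm_apply_eq, finRotate_succ_apply]
    simp
  have hq : ∀ n : Fin (s + 1) → ℕ,
      qlen (pw (Fin.snoc I J : Fin (s + 1) → Ideal A) n • (⊤ : Submodule A M))
      (pw (Fin.snoc I J : Fin (s + 1) → Ideal A) (n + Pi.single (Fin.last s) 1) •
        (⊤ : Submodule A M)) = Module.length A (mixedPiece A M J I (n ∘ ρ)) := by
    intro n
    have e1 : pw (Fin.snoc I J : Fin (s + 1) → Ideal A) n =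
        J ^ ((n ∘ ρ) 0) * ∏ i : Fin s, I i ^ ((n ∘ ρ) i.succ) := by
      rw [pw_snoc]
      simp [hρ0, hρs]
    have e2 : pw (Fin.snoc I J : Fin (s + 1) → Ideal A) (n + Pi.single (Fin.last s) 1) =
        J ^ ((n ∘ ρ) 0 + 1) * ∏ i : Fin s, I i ^ ((n ∘ ρ) i.succ) := by
      rw [pw_snoc]
      simp [hρ0, hρs]
    rw [e1, e2]
    rfl
  refine ⟨N, fun n hn => ⟨?_, ?_⟩⟩
  · rw [hq]
    exact Module.length_ne_top_iff.2 (hN _ (fun i => hn _)).1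
  · have h4 : ((DI l p n : ℤ) : ℚ) = ((e : ℤ) : ℚ) := by
      rw [DI_cast, DI_congr _ _ (fun n => MvPolynomial.eval (fun i => (n i : ℚ))
        (MvPolynomial.rename ρ P)) N _ _ hn, DI_mvpoly l _ _
        (Finsupp.mapDomain ρ (Finsupp.equivFunOnFinite.symm (Fin.cons k0 k)))]
      · rw [MvPolynomial.coeff_rename_mapDomain _ ρ.injective, ← Equiv.prod_comp ρ]
        simp only [Finsupp.mapDomain_apply ρ.injective]
        rw [Fin.prod_univ_succ]
        rw [Int.cast_natCast, hcoef]
        simp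
      · intro j
        obtain ⟨i, rfl⟩ := ρ.surjective j
        rw [Finsupp.mapDomain_apply ρ.injective]
        refine Fin.cases ?_ (fun i => ?_) i
        · rw [hρ0, hl0]; rfl
        · rw [hρs, hlk]; rfl
      · exact (MvPolynomial.totalDegree_rename_le _ _).trans (hdeg.trans hl.ge)
      · intro n hn
        have := (hN (n ∘ ρ) (fun i => hn _)).2
        rw [hp, hq, MvPolynomial.eval_rename]
        rw [lenNat, modLength_eq] at this
        rw [Int.cast_natCast]
        exact this
    exact_mod_cast h4

lemma base_SL {ι : Type*} [Fintype ι] (I : ι → Ideal A) (M : Type v) [AddCommGroup M] [Module A M]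
    (n e : ι → ℕ)
    (h : qlen (pw I n • (⊤ : Submodule A M)) (pw I (n + e) • (⊤ : Submodule A M)) ≠ ⊤) :
    ((base I M).S n).SL ((base I M).S (n + e))
      ((qlen (pw I n • (⊤ : Submodule A M)) (pw I (n + e) • (⊤ : Submodule A M))).toNat : ℤ) := by
  refine ⟨Submodule.smul_mono (pw_anti _ le_self_add) le_rfl, le_rfl, h, ?_, ?_⟩
  · change qlen (⊤ : Submodule A PUnit.{v+1}) ⊤ ≠ ⊤
    rw [qlen_self]; simp
  · change ((qlen (pw I n • (⊤ : Submodule A M)) (pw I (n + e) • (⊤ : Submodule A M))).toNat : ℤ)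
      - ((qlen (⊤ : Submodule A PUnit.{v+1}) ⊤).toNat : ℤ) = _
    rw [qlen_self]; simp

end main

/-- Theorem 3.1, the main theorem.  If `ht((I + Ann_A M)/Ann_A M) = h > 0`,
`k 0 + k 1 + ⋯ + k s = d - 1`, `k 1 + ⋯ + k s < h`, and `R = {x 1, …, x d}` is a joint
reduction of `(I 1, …, I s, J)` with respect to `M` of type `(k 1, …, k s, k 0 + 1)` which
is a system of parameters for `M`, then
`e_A(J^{[k 0 + 1]}, I 1^{[k 1]}, …, I s^{[k s]}; M) = e_A(R; M)`. -/
theorem mixedMult_eq_multiplicity_of_jointReduction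
    (A : Type*) [CommRing A] [IsNoetherianRing A] [IsLocalRing A]
    [Infinite (ResidueField A)]
    (M : Type*) [AddCommGroup M] [Module A M] [Module.Finite A M]
    {s : ℕ} (J : Ideal A) (hJ : J.radical = maximalIdeal A)
    (I : Fin s → Ideal A)
    (d : ℕ) (hd : 0 < d) (hdim : modDim A M = (d : WithBot ℕ∞))
    (h : ℕ) (hh : 0 < h)
    (hht : idealHeight (A ⧸ Module.annihilator A M)
        (Ideal.map (Ideal.Quotient.mk (Module.annihilator A M)) (∏ i, I i)) = (h : ℕ∞))
    (k0 : ℕ) (k : Fin s → ℕ)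
    (hsum : k0 + ∑ i, k i = d - 1) (hlt : ∑ i, k i < h)
    (x : Fin d → A) (c : Fin d → Fin (s + 1))
    (hjr : IsJointReduction A M (Fin.snoc I J) x c (Fin.snoc k (k0 + 1)))
    (hsop : IsSOP A M x) :
    ∀ e₁ e₂ : ℕ, IsMixedMult A M J I k0 k e₁ →
      IsHSMult A M (Ideal.span (Set.range x)) d e₂ → e₁ = e₂ := by
  intro e₁ e₂ h1 h2
  obtain ⟨hjr1, hcnt⟩ := hjr
  have hx : ∀ j, x j ∈ pw (Fin.snoc I J : Fin (s + 1) → Ideal A) (Pi.single (c j) 1) := by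
    intro j
    rw [pw_single]
    exact hjr1.1 j
  have hcl : (Finset.univ.filter fun j => c j = Fin.last s).card = k0 + 1 := by
    have := hcnt (Fin.last s)
    rwa [Fin.snoc_last] at this
  have hci : ∀ i : Fin s, (Finset.univ.filter fun j => c j = i.castSucc).card = k i := by
    intro i
    have := hcnt i.castSucc
    rwa [Fin.snoc_castSucc] at this
  let X := (List.finRange d).filter (fun j => decide (c j ≠ Fin.last s))
  let Y := (List.finRange d).filter (fun j => decide (c j = Fin.last s))
  have hYl : Y.length = k0 + 1 := by
    rw [length_filter_finRange (fun j => c j = Fin.last s), hcl]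
  have hXY : X.length + Y.length = d := by
    rw [length_filter_finRange (fun j => c j = Fin.last s),
      length_filter_finRange (fun j => c j ≠ Fin.last s), add_comm]
    have := Finset.card_filter_add_card_filter_not (s := (Finset.univ : Finset (Fin d)))
      (fun j => c j = Fin.last s)
    simpa using this
  have hmem : ∀ j, j ∈ X ∨ j ∈ Y := by
    intro j
    by_cases hj : c j = Fin.last s
    · right; simp [Y, hj]
    · left; simp [X, hj]
  have hYc : ∀ j ∈ Y, c j = Fin.last s := by
    intro j hj
    simpa [Y] using hj
  let l := X.map c ++ List.replicate k0 (Fin.last s)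
  have hl : l.length = k0 + ∑ i, k i := by
    simp only [l, List.length_append, List.length_map, List.length_replicate]
    omega
  have hl0 : l.count (Fin.last s) = k0 := by
    rw [List.count_append, List.count_replicate_self, List.count_eq_zero_of_not_mem, zero_add]
    simp [X]
  have hlk : ∀ i : Fin s, l.count i.castSucc = k i := by
    intro i
    have hne : (Fin.last s) ≠ i.castSucc := (Fin.castSucc_lt_last i).ne'
    rw [List.count_append, List.count_replicate, ← hci i, ← length_filter_finRange]
    simp only [beq_iff_eq, hne, if_false, add_zero]
    rw [List.count_eq_countP, List.countP_map, List.countP_eq_length_filter, List.filter_filter]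
    congr 1
    refine List.filter_congr fun j _ => ?_
    by_cases hj : c j = i.castSucc
    · simp [hj, hne.symm]
    · simp [hj]
  let p : (Fin (s + 1) → ℕ) → ℤ := fun n =>
    ((PC.qlen (pw (Fin.snoc I J : Fin (s + 1) → Ideal A) n • (⊤ : Submodule A M))
      (pw (Fin.snoc I J : Fin (s + 1) → Ideal A) (n + Pi.single (Fin.last s) 1) •
        (⊤ : Submodule A M))).toNat : ℤ)
  obtain ⟨N1, hN1⟩ := DI_mixed M J I k0 k e₁ h1 l hl hl0 hlk p (fun _ => rfl)
  obtain ⟨N2, hN2⟩ := jr_exact M _ x c hjr1 hx X Y hmem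
  have hSL : ∀ n : Fin (s + 1) → ℕ, (∀ i, N1 ≤ n i) →
      ((PC.Fam.base (Fin.snoc I J : Fin (s + 1) → Ideal A) M).S n).SL
      ((PC.Fam.base (Fin.snoc I J : Fin (s + 1) → Ideal A) M).S (n + Pi.single (Fin.last s) 1))
      (p n) := by
    intro n hn
    exact base_SL _ M n _ (hN1 n hn).1
  have hDF := PC.Fam.KF_DF x c hx X _ N1 _ p hSL
  obtain ⟨hA1, hA2⟩ := PC.Fam.chi_A x c hx k0 Y hYl (Fin.last s) hYc _ N1 _ hDF
    (fun _ => N1 + N2) (fun _ => by simp) (hN2 _ (fun _ => by simp))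
  rw [← DI_append, (hN1 (fun _ => N1 + N2) (fun _ => by simp)).2] at hA2
  obtain ⟨hB1, hB2⟩ := chi_HS M x X Y hXY hmem e₂ h2
  have hPm : (∏ i, I i) ≤ maximalIdeal A := by
    by_contra hcon
    have htop : (∏ i, I i) = ⊤ := by
      by_contra hne
      exact hcon (le_maximalIdeal hne)
    rw [htop, Ideal.map_top] at hht
    have : idealHeight (A ⧸ Module.annihilator A M) ⊤ = ⊤ := by
      simp only [idealHeight, iInf_eq_top]
      intro q hq
      exact absurd (top_le_iff.1 hq) q.2.ne_top
    rw [this] at hht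
    exact ENat.top_ne_coe _ hht
  have hq := PC.Fam.chi_quot x _ hx X Y M (∏ i, I i) h d k0 (by
      intro q hq
      rw [← hht]
      exact iInf₂_le q hq) hdim (by omega) (by
      intro q hqp i hi
      revert hi
      refine Fin.lastCases ?_ (fun i => ?_) i
      · intro hi
        rw [Fin.snoc_last] at hi
        refine hPm.trans ?_
        rw [← hJ]
        exact hqp.radical_le_iff.2 hi
      · intro hi
        rw [Fin.snoc_castSucc] at hi
        exact (Ideal.le_of_dvd (Finset.dvd_prod_of_mem _ (Finset.mem_univ i))).trans hi)
      hYl hB1 _ hA1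
  rw [hA2, hB2] at hq
  exact_mod_cast hq
end

section
/- Let (A, m) be a noetherian local ring with infinite residue field, M a finitely generated A-module of Krull dimension d > 0, J an m-primary ideal, and I_1, ..., I_s ideals of A with I = I_1···I_s satisfying ht((I + Ann_A M)/Ann_A M) > 0. Let R = {x_1, ..., x_d} ⊂ J be a joint reduction of (I_1, ..., I_s, J) with respect to M of the type (0, ..., 0, d) which is a system of parameters for M. Then e_A(J^{[d]}, I_1^{[0]}, ..., I_s^{[0]}, M) = e_A(J, M) = e_A(R, M). -/
open IsLocalRing

section Helpers

variable {A : Type*} [CommRing A] {M : Type*} [AddCommGroup M] [Module A M]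

/-- relative length of `U / (U ∩ V)` -/
noncomputable def rlen (U V : Submodule A M) : ℕ∞ :=
  Module.length A (↥U ⧸ V.comap U.subtype)

/-- length of `M / V` -/
noncomputable def qlen (V : Submodule A M) : ℕ∞ := Module.length A (M ⧸ V)

/-- multiplication image `y M` -/
def yMul (M : Type*) [AddCommGroup M] [Module A M] (y : A) : Submodule A M :=
  LinearMap.range (LinearMap.lsmul A M y)

theorem qlen_anti {V V' : Submodule A M} (h : V ≤ V') : qlen V' ≤ qlen V :=
  Module.length_le_of_surjective (Submodule.factor h) (Submodule.factor_surjective h)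

theorem rlen_anti {U V V' : Submodule A M} (h : U ⊓ V ≤ V') : rlen U V' ≤ rlen U V :=
  have h' : V.comap U.subtype ≤ V'.comap U.subtype := fun x hx => h ⟨x.2, hx⟩
  Module.length_le_of_surjective (Submodule.factor h') (Submodule.factor_surjective _)

theorem qlen_eq (U V : Submodule A M) : qlen V = rlen U V + qlen (U ⊔ V) := by
  refine Module.length_eq_add_of_exact
    (Submodule.mapQ (V.comap U.subtype) V U.subtype le_rfl)
    (Submodule.factor (le_sup_right : V ≤ U ⊔ V)) ?_ (Submodule.factor_surjective _) ?_
  · rw [← LinearMap.ker_eq_bot, Submodule.ker_mapQ]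
    exact Submodule.mkQ_map_self _
  · intro z
    obtain ⟨z, rfl⟩ := Submodule.mkQ_surjective V z
    constructor
    · intro h
      have h : z ∈ U ⊔ V := by simpa using h
      obtain ⟨u, hu, v, hv, rfl⟩ := Submodule.mem_sup.1 h
      refine ⟨Submodule.Quotient.mk ⟨u, hu⟩, ?_⟩
      simp [Submodule.mapQ_apply, hv]
    · rintro ⟨w, hw⟩
      obtain ⟨w, rfl⟩ := Submodule.mkQ_surjective _ w
      rw [← hw]
      simp only [Submodule.mkQ_apply, Submodule.mapQ_apply, Submodule.factor_mk]
      rw [Submodule.Quotient.mk_eq_zero]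
      exact Submodule.mem_sup_left w.2

theorem rlen_add {T U V : Submodule A M} (hVU : V ≤ U) (hUT : U ≤ T) :
    rlen T V = rlen U V + rlen T U := by
  have hle : V.comap U.subtype ≤ (V.comap T.subtype).comap (Submodule.inclusion hUT) :=
    fun x hx => hx
  refine Module.length_eq_add_of_exact
    (Submodule.mapQ (V.comap U.subtype) (V.comap T.subtype) (Submodule.inclusion hUT) hle)
    (Submodule.factor (Submodule.comap_mono hVU)) ?_ (Submodule.factor_surjective _) ?_
  · rw [← LinearMap.ker_eq_bot, Submodule.ker_mapQ]
    exact Submodule.mkQ_map_self _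
  · intro z
    obtain ⟨z, rfl⟩ := Submodule.mkQ_surjective _ z
    constructor
    · intro h
      have h : (z : M) ∈ U := by simpa using h
      exact ⟨Submodule.Quotient.mk ⟨z, h⟩, rfl⟩
    · rintro ⟨w, hw⟩
      obtain ⟨w, rfl⟩ := Submodule.mkQ_surjective _ w
      rw [← hw]
      simp only [Submodule.mkQ_apply, Submodule.mapQ_apply, Submodule.factor_mk]
      rw [Submodule.Quotient.mk_eq_zero]
      exact w.2

theorem qlen_pow_le (V : Submodule A M) (y : A) (k : ℕ) :
    qlen (V ⊔ yMul M (y ^ k)) ≤ k * qlen (V ⊔ yMul M y) := by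
  induction k with
  | zero =>
    have : V ⊔ yMul M (y ^ 0) = ⊤ := by
      rw [eq_top_iff]
      exact fun x _ => Submodule.mem_sup_right ⟨x, by simp⟩
    rw [this]
    have : qlen (⊤ : Submodule A M) = 0 := Module.length_eq_zero
    simp [this]
  | succ k ih =>
    rw [qlen_eq (yMul M y)]
    have h1 : qlen (yMul M y ⊔ (V ⊔ yMul M (y ^ (k + 1)))) ≤ qlen (V ⊔ yMul M y) := by
      refine qlen_anti ?_
      rw [sup_comm V, ]
      exact sup_le_sup_left le_sup_left _
    have h2 : rlen (yMul M y) (V ⊔ yMul M (y ^ (k + 1))) ≤ qlen (V ⊔ yMul M (y ^ k)) := by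
      refine Module.length_le_of_surjective
        (Submodule.mapQ _ _ (LinearMap.lsmul A M y).rangeRestrict ?_) ?_
      · intro z hz
        obtain ⟨v, hv, w, ⟨w', rfl⟩, rfl⟩ := Submodule.mem_sup.1 hz
        refine Submodule.mem_sup.2 ⟨y • v, V.smul_mem _ hv, y ^ (k+1) • w', ⟨w', rfl⟩, ?_⟩
        change y • v + y ^ (k + 1) • w' = y • (v + y ^ k • w')
        rw [smul_add, smul_smul, pow_succ']
      · intro z
        obtain ⟨⟨_, z, rfl⟩, rfl⟩ := Submodule.mkQ_surjective _ z
        exact ⟨Submodule.Quotient.mk z, rfl⟩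
    calc _ ≤ k * qlen (V ⊔ yMul M y) + qlen (V ⊔ yMul M y) := add_le_add (h2.trans ih) h1
      _ = _ := by push_cast; ring

theorem qlen_finset_le (t : Finset A) (k : ℕ) (V : Submodule A M) :
    qlen (V ⊔ ⨆ y ∈ t, yMul M (y ^ k)) ≤ (k : ℕ∞) ^ t.card * qlen (V ⊔ ⨆ y ∈ t, yMul M y) := by
  classical
  induction t using Finset.induction_on generalizing V with
  | empty => simp
  | insert a t ha ih =>
    rw [Finset.card_insert_of_notMem ha, Finset.iSup_insert, Finset.iSup_insert]
    calc qlen (V ⊔ (yMul M (a ^ k) ⊔ ⨆ y ∈ t, yMul M (y ^ k)))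
        = qlen ((V ⊔ ⨆ y ∈ t, yMul M (y ^ k)) ⊔ yMul M (a ^ k)) := by congr 1; ac_rfl
      _ ≤ k * qlen ((V ⊔ ⨆ y ∈ t, yMul M (y ^ k)) ⊔ yMul M a) := qlen_pow_le _ _ _
      _ = k * qlen ((V ⊔ yMul M a) ⊔ ⨆ y ∈ t, yMul M (y ^ k)) := by congr 2; ac_rfl
      _ ≤ k * ((k : ℕ∞) ^ t.card * qlen ((V ⊔ yMul M a) ⊔ ⨆ y ∈ t, yMul M y)) := by
        gcongr; exact ih _
      _ = _ := by rw [pow_succ', mul_assoc, sup_assoc]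

/-- A module with all elements of a finitely generated `m ⊇ Q` nilpotent modulo `X`. -/
theorem qlen_ne_top_of_pow [IsNoetherianRing A] {m : Ideal A} {X : Submodule A M}
    (hm : qlen (m • (⊤ : Submodule A M)) ≠ ⊤)
    (h : ∀ z ∈ m, ∃ c : ℕ, yMul M (z ^ c) ≤ X) : qlen X ≠ ⊤ := by
  classical
  obtain ⟨t, ht⟩ := (IsNoetherian.noetherian m)
  have htm : ∀ z ∈ t, z ∈ m := fun z hz => ht ▸ Submodule.subset_span hz
  choose! c hc using h
  let k := t.sup c
  have hk : ∀ z ∈ t, yMul M (z ^ k) ≤ X := by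
    intro z hz
    refine le_trans ?_ (hc z (htm z hz))
    rintro _ ⟨w, rfl⟩
    refine ⟨z ^ (k - c z) • w, ?_⟩
    have : c z ≤ k := Finset.le_sup hz
    simp [smul_smul, ← pow_add, Nat.add_sub_cancel' this, Nat.sub_add_cancel this]
  have h1 : qlen X ≤ (k : ℕ∞) ^ t.card * qlen (⊥ ⊔ ⨆ y ∈ t, yMul M y) := by
    refine le_trans (qlen_anti ?_) (qlen_finset_le t k ⊥)
    simpa using hk
  have h2 : qlen (⊥ ⊔ ⨆ y ∈ t, yMul M y) ≤ qlen (m • (⊤ : Submodule A M)) := by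
    refine qlen_anti ?_
    rw [bot_sup_eq, ← ht]
    refine Submodule.smul_le.2 fun r hr n _ => ?_
    induction hr using Submodule.span_induction with
    | mem x hx => exact Submodule.mem_iSup_of_mem x (Submodule.mem_iSup_of_mem hx ⟨n, rfl⟩)
    | zero => rw [zero_smul]; exact Submodule.zero_mem _
    | add a b _ _ ha hb => rw [add_smul]; exact Submodule.add_mem _ ha hb
    | smul a b _ hb => rw [smul_assoc]; exact Submodule.smul_mem _ _ hb
  have h3 : (k : ℕ∞) ^ t.card * qlen (⊥ ⊔ ⨆ y ∈ t, yMul M y) ≠ ⊤ := by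
    obtain ⟨q, hq⟩ := ENat.ne_top_iff_exists.1 (ne_top_of_le_ne_top hm h2)
    rw [← hq]
    exact_mod_cast ENat.natCast_ne_top (k ^ t.card * q)
  exact ne_top_of_le_ne_top h3 h1

/-- elements of the maximal ideal act nilpotently on finite length quotients -/
theorem exists_yMul_pow_le [IsLocalRing A] {X : Submodule A M} (hX : IsFiniteLength A (M ⧸ X))
    {z : A} (hz : z ∈ maximalIdeal A) : ∃ k : ℕ, yMul M (z ^ k) ≤ X := by
  obtain ⟨h1, h2⟩ := isFiniteLength_iff_isNoetherian_isArtinian.1 hX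
  obtain ⟨n, hn⟩ := IsArtinian.monotone_stabilizes (R := A) (M := M ⧸ X)
    ⟨fun k => OrderDual.toDual (yMul (M ⧸ X) (z ^ k)), by
      intro a b hab
      show yMul (M ⧸ X) (z ^ b) ≤ yMul (M ⧸ X) (z ^ a)
      rintro _ ⟨w, rfl⟩
      refine ⟨z ^ (b - a) • w, ?_⟩
      simp [smul_smul, ← pow_add, Nat.add_sub_cancel' hab, Nat.sub_add_cancel hab]⟩
  have h3 : yMul (M ⧸ X) (z ^ n) = yMul (M ⧸ X) (z ^ (n + 1)) := hn (n + 1) (Nat.le_succ n)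
  have h4 : yMul (M ⧸ X) (z ^ n) = ⊥ := by
    refine Submodule.eq_bot_of_le_smul_of_le_jacobson_bot (maximalIdeal A) _
      (IsNoetherian.noetherian _) ?_ (IsLocalRing.maximalIdeal_le_jacobson _)
    conv_lhs => rw [h3]
    rintro _ ⟨w, rfl⟩
    rw [LinearMap.lsmul_apply, pow_succ', mul_smul]
    exact Submodule.smul_mem_smul hz ⟨w, rfl⟩
  refine ⟨n, ?_⟩
  rintro _ ⟨w, rfl⟩
  have : z ^ n • (Submodule.Quotient.mk w : M ⧸ X) ∈ yMul (M ⧸ X) (z ^ n) := ⟨_, rfl⟩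
  rw [h4, Submodule.mem_bot, ← Submodule.Quotient.mk_smul, Submodule.Quotient.mk_eq_zero] at this
  exact this

end Helpers


section PolyHelpers
open Polynomial Filter Topology

theorem tendsto_poly_div (P : ℚ[X]) (d : ℕ) (h : P.natDegree ≤ d) :
    Tendsto (fun n : ℕ => P.eval (n : ℚ) / (n : ℚ) ^ d) atTop (𝓝 (P.coeff d)) := by
  have h1 : ∀ n : ℕ, P.eval (n : ℚ) / (n : ℚ) ^ d =
      ∑ i ∈ Finset.range (d + 1), P.coeff i * ((n : ℚ) ^ i / (n : ℚ) ^ d) := by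
    intro n
    rw [Polynomial.eval_eq_sum_range' (Nat.lt_succ_of_le h), Finset.sum_div]
    exact Finset.sum_congr rfl fun i _ => by ring
  simp_rw [h1]
  have h2 : P.coeff d = ∑ i ∈ Finset.range (d + 1), P.coeff i * (if i = d then 1 else 0) := by
    simp
  rw [h2]
  refine tendsto_finsetSum _ fun i hi => Tendsto.const_mul _ ?_
  split_ifs with hid
  · subst hid
    refine tendsto_const_nhds.congr' ?_
    filter_upwards [eventually_gt_atTop 0] with n hn
    rw [div_self (by positivity)]
  · have hlt : i < d := by
      have := Finset.mem_range.1 hi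
      omega
    exact (tendsto_pow_div_pow_atTop_zero hlt).comp tendsto_natCast_atTop_atTop

theorem exists_sum_poly (p : ℚ[X]) (k : ℕ) (hp : p.natDegree ≤ k) :
    ∃ G : ℚ[X], G.natDegree ≤ k + 1 ∧ G.coeff (k + 1) * ((k : ℚ) + 1) = p.coeff k ∧
      ∀ n : ℕ, G.eval (n : ℚ) = ∑ i ∈ Finset.range n, p.eval (i : ℚ) := by
  refine ⟨∑ j ∈ Finset.range (k + 1), C (p.coeff j / ((j : ℚ) + 1)) *
    (Polynomial.bernoulli (j + 1) - C (_root_.bernoulli (j + 1))), ?_, ?_, ?_⟩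
  · refine Polynomial.natDegree_sum_le_of_forall_le _ _ fun j hj => ?_
    refine (Polynomial.natDegree_C_mul_le _ _).trans ?_
    rw [Polynomial.natDegree_sub_C, Polynomial.natDegree_le_iff_coeff_eq_zero]
    intro N hN
    have := Finset.mem_range.1 hj
    rw [Polynomial.coeff_bernoulli, if_neg (by omega)]
  · rw [Polynomial.finsetSum_coeff, Finset.sum_range_succ, Finset.sum_eq_zero]
    · have : (k : ℚ) + 1 ≠ 0 := by positivity
      simp [Polynomial.coeff_bernoulli]
      field_simp
    · intro j hj
      have := Finset.mem_range.1 hj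
      rw [Polynomial.coeff_C_mul, Polynomial.coeff_sub, Polynomial.coeff_bernoulli,
        if_neg (by omega), Polynomial.coeff_C, if_neg (by omega)]
      simp
  · intro n
    rw [Polynomial.eval_finsetSum]
    have : ∀ i ∈ Finset.range n, p.eval (i : ℚ) =
        ∑ j ∈ Finset.range (k + 1), p.coeff j * (i : ℚ) ^ j := fun i _ =>
      Polynomial.eval_eq_sum_range' (Nat.lt_succ_of_le hp) _
    rw [Finset.sum_congr rfl this, Finset.sum_comm]
    refine Finset.sum_congr rfl fun j _ => ?_
    have hj : (j : ℚ) + 1 ≠ 0 := by positivity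
    have := Polynomial.sum_range_pow_eq_bernoulli_sub n j
    rw [Polynomial.eval_mul, Polynomial.eval_C, Polynomial.eval_sub, Polynomial.eval_C,
      ← Finset.mul_sum, ← Nat.succ_eq_add_one, ← this]
    field_simp

theorem mv_to_uni {s : ℕ} (P : MvPolynomial (Fin (s + 1)) ℚ) (k N : ℕ)
    (hP : P.totalDegree ≤ k) :
    ∃ p : ℚ[X], p.natDegree ≤ k ∧
      p.coeff k = MvPolynomial.coeff
        (Finsupp.equivFunOnFinite.symm (Fin.cons k (fun _ => 0) : Fin (s + 1) → ℕ)) P ∧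
      ∀ x : ℚ, p.eval x = MvPolynomial.eval (Fin.cons x (fun _ => (N : ℚ))) P := by
  classical
  let c : (Fin (s + 1) →₀ ℕ) → ℚ := fun m => P.coeff m * ∏ i : Fin s, (N : ℚ) ^ (m i.succ)
  have hdeg : ∀ m ∈ P.support, m 0 + ∑ i : Fin s, m i.succ ≤ k := by
    intro m hm
    have := (MvPolynomial.le_totalDegree hm).trans hP
    rwa [Finsupp.sum_fintype _ _ (fun _ => rfl), Fin.sum_univ_succ] at this
  refine ⟨∑ m ∈ P.support, C (c m) * X ^ (m 0), ?_, ?_, ?_⟩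
  · refine Polynomial.natDegree_sum_le_of_forall_le _ _ fun m hm => ?_
    refine (Polynomial.natDegree_C_mul_X_pow_le _ _).trans ?_
    have := hdeg m hm
    omega
  · set m0 : Fin (s + 1) →₀ ℕ :=
      Finsupp.equivFunOnFinite.symm (Fin.cons k (fun _ => 0) : Fin (s + 1) → ℕ) with hm0
    have h0 : m0 0 = k := by simp [hm0]
    have h1 : ∀ i : Fin s, m0 i.succ = 0 := by simp [hm0]
    rw [Polynomial.finsetSum_coeff]
    simp_rw [Polynomial.coeff_C_mul_X_pow]
    rw [Finset.sum_eq_single m0]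
    · rw [if_pos h0.symm]
      simp [c, h1]
    · intro m hm hne
      rw [if_neg]
      intro hk
      apply hne
      have h2 := hdeg m hm
      have h3 : ∑ i : Fin s, m i.succ = 0 := by omega
      ext i
      refine Fin.cases ?_ (fun i => ?_) i
      · rw [h0, hk]
      · rw [h1]
        exact (Finset.sum_eq_zero_iff.1 h3) i (Finset.mem_univ _)
    · intro hm
      have : P.coeff m0 = 0 := by simpa using hm
      simp [c, this]
  · intro x
    rw [Polynomial.eval_finsetSum, MvPolynomial.eval_eq']
    refine Finset.sum_congr rfl fun m _ => ?_
    rw [Fin.prod_univ_succ]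
    simp only [c, Polynomial.eval_mul, Polynomial.eval_C, Polynomial.eval_pow, Polynomial.eval_X,
      Fin.cons_zero, Fin.cons_succ]
    ring

theorem coeff_le_of_eventually (P Q : ℚ[X]) (d c : ℕ) (K : ℚ) (hd : 0 < d)
    (hP : P.natDegree ≤ d) (hQ : Q.natDegree ≤ d)
    (h : ∃ N : ℕ, ∀ n : ℕ, N ≤ n →
      P.eval (n : ℚ) ≤ Q.eval ((n + c : ℕ) : ℚ) + K * (n : ℚ) ^ (d - 1)) :
    P.coeff d ≤ Q.coeff d := by
  have h1 := tendsto_poly_div P d hP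
  have h2 := (tendsto_poly_div Q d hQ).comp (tendsto_add_atTop_nat c)
  have h3 := tendsto_poly_div (C K * X ^ (d - 1)) d
    ((Polynomial.natDegree_C_mul_X_pow_le _ _).trans (Nat.sub_le _ _))
  rw [Polynomial.coeff_C_mul_X_pow, if_neg (by omega)] at h3
  have h4 : Tendsto (fun n : ℕ => (((n + c : ℕ) : ℚ) / (n : ℚ)) ^ d) atTop (𝓝 1) := by
    have : Tendsto (fun n : ℕ => 1 + (c : ℚ) * ((n : ℚ))⁻¹) atTop (𝓝 (1 + c * 0)) :=
      tendsto_const_nhds.add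
        ((tendsto_inv_atTop_zero.comp tendsto_natCast_atTop_atTop).const_mul _)
    have := this.pow d
    rw [mul_zero, add_zero, one_pow] at this
    refine this.congr' ?_
    filter_upwards [eventually_gt_atTop 0] with n hn
    have : (n : ℚ) ≠ 0 := by positivity
    congr 1
    push_cast
    field_simp
  have h5 := (h2.mul h4).add h3
  rw [mul_one, add_zero] at h5
  refine le_of_tendsto_of_tendsto h1 h5 ?_
  obtain ⟨N, hN⟩ := h
  filter_upwards [eventually_gt_atTop 0, eventually_ge_atTop N] with n hn hnN
  have hn' : (0 : ℚ) < n := by positivity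
  have hn2 : (0 : ℚ) < ((n + c : ℕ) : ℚ) := by positivity
  have := hN n hnN
  have e : Q.eval ((n + c : ℕ) : ℚ) / ((n + c : ℕ) : ℚ) ^ d * (((n + c : ℕ) : ℚ) / (n : ℚ)) ^ d
      = Q.eval ((n + c : ℕ) : ℚ) / (n : ℚ) ^ d := by
    rw [div_pow]
    field_simp
  simp only [Function.comp, e, Polynomial.eval_mul, Polynomial.eval_C, Polynomial.eval_pow,
    Polynomial.eval_X]
  rw [← add_div]
  gcongr

end PolyHelpers

section DimHelpers

theorem ringKrullDim_quotient_succ_le_of_height {C : Type*} [CommRing C] (K : Ideal C)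
    (hK : ∀ p : PrimeSpectrum C, K ≤ p.asIdeal → 0 < Order.height p) :
    ringKrullDim (C ⧸ K) + 1 ≤ ringKrullDim C := by
  by_cases hr' : K = ⊤
  · have : Subsingleton (C ⧸ K) := Ideal.Quotient.subsingleton_iff.2 hr'
    rw [ringKrullDim_eq_bot_of_subsingleton]
    simp
  have : Nonempty (PrimeSpectrum.zeroLocus (R := C) K) := by
    rwa [Set.nonempty_coe_sort, Set.nonempty_iff_ne_empty, ne_eq,
      PrimeSpectrum.zeroLocus_empty_iff_eq_top]
  have := Ideal.Quotient.nontrivial_iff.mpr hr'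
  have := (Ideal.Quotient.mk K).domain_nontrivial
  rw [ringKrullDim_quotient, Order.krullDim_eq_iSup_length, ringKrullDim,
    Order.krullDim_eq_iSup_length, ← WithBot.coe_one, ← WithBot.coe_add,
    ENat.iSup_add, WithBot.coe_le_coe, iSup_le_iff]
  intro l
  have h1 := hK l.head.1 l.head.2
  rw [pos_iff_ne_zero, Ne, Order.height_eq_zero, not_isMin_iff] at h1
  obtain ⟨p', hp'⟩ := h1
  have hp'' : p' < (l.map Subtype.val (fun _ _ ↦ id)).head := hp'
  refine le_trans ?_ (le_iSup _ ((l.map Subtype.val (fun _ _ ↦ id)).cons p' hp''))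
  simp
  exact le_rfl

theorem exists_params {A : Type*} [CommRing A] [IsNoetherianRing A] [IsLocalRing A]
    {B : Type*} [CommRing B] (f : A →+* B) (hf : Function.Surjective f) (d : ℕ)
    (hB : ringKrullDim B + 1 ≤ ((d : ℕ∞) : WithBot ℕ∞)) (hd : 0 < d) :
    ∃ t : Finset A, t.card ≤ d - 1 ∧ (∀ y ∈ t, y ∈ maximalIdeal A) ∧
      ∀ z ∈ maximalIdeal A, ∃ k : ℕ, z ^ k ∈ RingHom.ker f ⊔ Ideal.span (t : Set A) := by
  classical
  rcases subsingleton_or_nontrivial B with hs | hn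
  · exact ⟨∅, by simp, by simp, fun z _ => ⟨0, Ideal.mem_sup_left
      (by rw [RingHom.mem_ker]; exact Subsingleton.elim _ _)⟩⟩
  have : IsNoetherianRing B := isNoetherianRing_of_surjective A B f hf
  have : IsLocalRing B := IsLocalRing.of_surjective' f hf
  have : IsLocalHom f := IsLocalHom.of_surjective f hf
  obtain ⟨s, hs, hcard⟩ :=
    Ideal.exists_finset_card_eq_height_of_isNoetherianRing (maximalIdeal B)
  have hh := IsLocalRing.maximalIdeal_height_eq_ringKrullDim (R := B)
  rw [← hh, ← hcard] at hB
  have hc : s.card + 1 ≤ d := by exact_mod_cast hB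
  have hrad : (Ideal.span (s : Set B)).radical = maximalIdeal B := by
    rw [← Ideal.sInf_minimalPrimes]
    refine le_antisymm (sInf_le hs) (le_sInf ?_)
    rintro p hp
    have h1 : p ≤ maximalIdeal B := IsLocalRing.le_maximalIdeal hp.1.1.ne_top
    exact hs.2 hp.1 h1
  let g := Function.surjInv hf
  have hg : ∀ b, f (g b) = b := Function.surjInv_eq hf
  have hmem : ∀ b ∈ s, b ∈ maximalIdeal B := fun b hb => hs.1.2 (Ideal.subset_span hb)
  refine ⟨s.image g, by have := Finset.card_image_le (s := s) (f := g); omega, ?_, ?_⟩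
  · intro y hy
    obtain ⟨b, hb, rfl⟩ := Finset.mem_image.1 hy
    rw [mem_maximalIdeal, mem_nonunits_iff, ← isUnit_map_iff f, hg]
    exact hmem b hb
  · intro z hz
    have h1 : f z ∈ (Ideal.span (s : Set B)).radical := by
      rw [hrad, mem_maximalIdeal, mem_nonunits_iff, isUnit_map_iff f]
      exact hz
    obtain ⟨k, hk⟩ := h1
    refine ⟨k, ?_⟩
    have h2 : (Ideal.span ((s.image g : Finset A) : Set A)).map f = Ideal.span (s : Set B) := by
      rw [Ideal.map_span, Finset.coe_image, ← Set.image_comp]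
      congr 1
      ext b
      simp [hg]
    rw [← map_pow, ← h2, ← Ideal.mem_comap, Ideal.comap_map_of_surjective f hf] at hk
    rw [sup_comm]
    exact hk

end DimHelpers

section MainHelpers

variable {A : Type*} [CommRing A] {M : Type*} [AddCommGroup M] [Module A M]

theorem coe_lenNat {X : Type*} [AddCommGroup X] [Module A X] (h : IsFiniteLength A X) :
    ((lenNat A X : ℕ) : ℕ∞) = Module.length A X := by
  unfold lenNat modLength
  rw [← Module.length_eq_height]
  exact ENat.natCast_toNat (Module.length_ne_top_iff.2 h)

theorem span_yMul_le {t : Finset A} {r : A} (hr : r ∈ Ideal.span (t : Set A)) (n : M) :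
    r • n ∈ ⨆ y ∈ t, yMul M y := by
  induction hr using Submodule.span_induction with
  | mem x hx => exact Submodule.mem_iSup_of_mem x (Submodule.mem_iSup_of_mem hx ⟨n, rfl⟩)
  | zero => rw [zero_smul]; exact Submodule.zero_mem _
  | add a b _ _ ha hb => rw [add_smul]; exact Submodule.add_mem _ ha hb
  | smul a b _ hb => rw [smul_assoc]; exact Submodule.smul_mem _ _ hb

theorem yMul_pow_le {y : A} {k : ℕ} {Q : Ideal A} (h : yMul M (y ^ k) ≤ Q • ⊤) (n : ℕ) :
    yMul M (y ^ (k * n)) ≤ Q ^ n • (⊤ : Submodule A M) := by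
  induction n with
  | zero => simp
  | succ n ih =>
    rintro _ ⟨w, rfl⟩
    have h1 : y ^ (k * n) • w ∈ Q ^ n • (⊤ : Submodule A M) := ih ⟨w, rfl⟩
    have h2 : y ^ (k * (n + 1)) • w = y ^ k • (y ^ (k * n) • w) := by
      rw [smul_smul, ← pow_add]; congr 2; ring
    rw [LinearMap.lsmul_apply, h2, pow_succ Q n, Submodule.mul_smul]
    refine Submodule.smul_induction_on
      (p := fun v => y ^ k • v ∈ Q ^ n • (Q • (⊤ : Submodule A M))) h1 ?_ ?_
    · intro r hr m _
      change y ^ k • r • m ∈ _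
      rw [smul_comm (y ^ k) r m]
      exact Submodule.smul_mem_smul hr (h ⟨m, rfl⟩)
    · intro a b ha hb
      rw [smul_add]
      exact Submodule.add_mem _ ha hb

/-- Growth of `M / (K M + Q^n M)`. -/
theorem growth [IsNoetherianRing A] [IsLocalRing A] (K Q : Ideal A) (d : ℕ) (hd : 0 < d)
    (hdim : modDim A M = (d : WithBot ℕ∞)) (hQm : Q ≤ maximalIdeal A)
    (hK : ∀ p : PrimeSpectrum (A ⧸ Module.annihilator A M),
      K.map (Ideal.Quotient.mk (Module.annihilator A M)) ≤ p.asIdeal → 0 < Order.height p)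
    (hQ : IsFiniteLength A (M ⧸ (Q • (⊤ : Submodule A M)))) :
    ∃ c : ℕ, ∀ n : ℕ, 0 < n →
      qlen (K • (⊤ : Submodule A M) ⊔ Q ^ n • ⊤) ≤ ((c * n ^ (d - 1) : ℕ) : ℕ∞) := by
  classical
  have h1 := ringKrullDim_quotient_succ_le_of_height _ hK
  have h2 : ringKrullDim (A ⧸ Module.annihilator A M) = (d : WithBot ℕ∞) := hdim
  rw [h2] at h1
  let f := (Ideal.Quotient.mk (K.map (Ideal.Quotient.mk (Module.annihilator A M)))).comp
    (Ideal.Quotient.mk (Module.annihilator A M))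
  have hf : Function.Surjective f := Ideal.Quotient.mk_surjective.comp Ideal.Quotient.mk_surjective
  have hker : ∀ a ∈ RingHom.ker f, ∀ m : M, a • m ∈ K • (⊤ : Submodule A M) := by
    intro a ha m
    have h3 : Ideal.Quotient.mk (Module.annihilator A M) a ∈
        K.map (Ideal.Quotient.mk (Module.annihilator A M)) := Ideal.Quotient.eq_zero_iff_mem.1 ha
    rw [← Ideal.mem_comap, Ideal.comap_map_of_surjective _ Ideal.Quotient.mk_surjective] at h3
    obtain ⟨b, hb, c, hc, rfl⟩ := Submodule.mem_sup.1 h3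
    have hc : c ∈ Module.annihilator A M := by
      rw [Ideal.mem_comap] at hc
      exact Ideal.Quotient.eq_zero_iff_mem.1 hc
    rw [add_smul, Module.mem_annihilator.1 hc, add_zero]
    exact Submodule.smul_mem_smul hb Submodule.mem_top
  obtain ⟨t, ht, htm, hrad⟩ := exists_params f hf d h1 hd
  -- finite length modulo t
  have hfin : qlen (K • (⊤ : Submodule A M) ⊔ ⨆ y ∈ t, yMul M y) ≠ ⊤ := by
    refine qlen_ne_top_of_pow (m := maximalIdeal A) ?_ ?_
    · refine ne_top_of_le_ne_top (Module.length_ne_top_iff.2 hQ) (qlen_anti ?_)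
      exact Submodule.smul_mono_left hQm
    · intro z hz
      obtain ⟨k, hk⟩ := hrad z hz
      refine ⟨k, ?_⟩
      rintro _ ⟨w, rfl⟩
      obtain ⟨b, hb, c, hc, e⟩ := Submodule.mem_sup.1 hk
      rw [LinearMap.lsmul_apply, ← e, add_smul]
      exact Submodule.add_mem_sup (hker b hb w) (span_yMul_le hc w)
  obtain ⟨q, hq⟩ := ENat.ne_top_iff_exists.1 hfin
  have hpow : ∀ y ∈ t, ∃ k : ℕ, yMul M (y ^ k) ≤ Q • ⊤ :=
    fun y hy => exists_yMul_pow_le hQ (htm y hy)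
  choose! c hc using hpow
  let k := t.sup c
  have hk : ∀ z ∈ t, yMul M (z ^ k) ≤ Q • ⊤ := by
    intro z hz
    refine le_trans ?_ (hc z hz)
    rintro _ ⟨w, rfl⟩
    refine ⟨z ^ (k - c z) • w, ?_⟩
    have : c z ≤ k := Finset.le_sup hz
    simp [smul_smul, ← pow_add, Nat.add_sub_cancel' this, Nat.sub_add_cancel this]
  refine ⟨k ^ t.card * q, fun n hn => ?_⟩
  calc qlen (K • (⊤ : Submodule A M) ⊔ Q ^ n • ⊤)
      ≤ qlen (K • (⊤ : Submodule A M) ⊔ ⨆ y ∈ t, yMul M (y ^ (k * n))) :=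
        qlen_anti (sup_le_sup_left (iSup₂_le fun y hy => yMul_pow_le (hk y hy) n) _)
    _ ≤ ((k * n : ℕ) : ℕ∞) ^ t.card * qlen (K • (⊤ : Submodule A M) ⊔ ⨆ y ∈ t, yMul M y) :=
        qlen_finset_le _ _ _
    _ = (((k * n) ^ t.card * q : ℕ) : ℕ∞) := by rw [← hq]; push_cast; rfl
    _ ≤ _ := by
      norm_cast
      rw [mul_pow, mul_right_comm]
      gcongr

/-- primes over a product containing a power of an `m`-primary ideal -/
theorem height_pos_aux [IsLocalRing A] {s : ℕ} (J : Ideal A)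
    (hJ : J.radical = maximalIdeal A) (I : Fin s → Ideal A)
    (d : ℕ) (hd : 0 < d) (hdim : modDim A M = (d : WithBot ℕ∞))
    (hht : 0 < idealHeight (A ⧸ Module.annihilator A M)
        (Ideal.map (Ideal.Quotient.mk (Module.annihilator A M)) (∏ i, I i))) (N : ℕ)
    (p : PrimeSpectrum (A ⧸ Module.annihilator A M))
    (hp : (J ^ N * ∏ i, I i ^ N).map (Ideal.Quotient.mk (Module.annihilator A M)) ≤ p.asIdeal) :
    0 < Order.height p := by
  have hp' := Ideal.map_le_iff_le_comap.1 hp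
  have hprime : (p.asIdeal.comap (Ideal.Quotient.mk (Module.annihilator A M))).IsPrime :=
    Ideal.IsPrime.comap _
  rw [hprime.mul_le] at hp'
  rcases hp' with h | h
  · have h1 : maximalIdeal A ≤ p.asIdeal.comap (Ideal.Quotient.mk (Module.annihilator A M)) := by
      rw [← hJ]
      exact (Ideal.IsPrime.radical_le_iff hprime).2 (hprime.le_of_pow_le h)
    rw [pos_iff_ne_zero, Ne, Order.height_eq_zero]
    intro hmin
    have h2 : ∀ q : PrimeSpectrum (A ⧸ Module.annihilator A M), q = p := by
      intro q
      have h3 : q.asIdeal.comap (Ideal.Quotient.mk (Module.annihilator A M)) ≤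
          p.asIdeal.comap (Ideal.Quotient.mk (Module.annihilator A M)) :=
        (IsLocalRing.le_maximalIdeal (Ideal.IsPrime.comap _).ne_top).trans h1
      have h4 : q ≤ p := by
        intro b hb
        obtain ⟨a, rfl⟩ := Ideal.Quotient.mk_surjective b
        exact h3 hb
      exact le_antisymm h4 (hmin h4)
    have : Subsingleton (PrimeSpectrum (A ⧸ Module.annihilator A M)) :=
      ⟨fun a b => (h2 a).trans (h2 b).symm⟩
    have h4 : ringKrullDim (A ⧸ Module.annihilator A M) ≤ 0 :=
      Order.krullDim_nonpos_of_subsingleton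
    have h5 : ringKrullDim (A ⧸ Module.annihilator A M) = (d : WithBot ℕ∞) := hdim
    rw [h5] at h4
    have : d ≤ 0 := by exact_mod_cast h4
    omega
  · refine hht.trans_le (iInf₂_le p ?_)
    rw [Ideal.map_le_iff_le_comap]
    rw [Finset.prod_pow] at h
    exact hprime.le_of_pow_le h

end MainHelpers

/-- Remark 3.2.  If `ht((I + Ann_A M)/Ann_A M) > 0` and
`R = {x 1, …, x d} ⊆ J` is a joint reduction of `(I 1, …, I s, J)` with respect to `M` of
type `(0, …, 0, d)` which is a system of parameters for `M`, then
`e_A(J^{[d]}, I 1^{[0]}, …, I s^{[0]}; M) = e_A(J; M) = e_A(R; M)`. -/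
theorem mixedMult_type_zero_eq_mult
    (A : Type*) [CommRing A] [IsNoetherianRing A] [IsLocalRing A]
    [Infinite (ResidueField A)]
    (M : Type*) [AddCommGroup M] [Module A M] [Module.Finite A M]
    {s : ℕ} (J : Ideal A) (hJ : J.radical = maximalIdeal A)
    (I : Fin s → Ideal A)
    (d : ℕ) (hd : 0 < d) (hdim : modDim A M = (d : WithBot ℕ∞))
    (hht : 0 < idealHeight (A ⧸ Module.annihilator A M)
        (Ideal.map (Ideal.Quotient.mk (Module.annihilator A M)) (∏ i, I i)))
    (x : Fin d → A) (hxJ : ∀ j, x j ∈ J)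
    (hjr : ∃ N : ℕ, ∀ n : Fin (s + 1) → ℕ, (∀ i, N ≤ n i) →
      (J ^ (n 0 + 1) * ∏ i : Fin s, I i ^ (n i.succ + 1)) • (⊤ : Submodule A M) =
        Ideal.span (Set.range x) •
          ((J ^ (n 0) * ∏ i : Fin s, I i ^ (n i.succ + 1)) • (⊤ : Submodule A M)))
    (hsop : IsSOP A M x) :
    ∀ e₁ e₂ e₃ : ℕ, IsMixedMult A M J I (d - 1) (fun _ => 0) e₁ →
      IsHSMult A M J d e₂ → IsHSMult A M (Ideal.span (Set.range x)) d e₃ →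
        e₁ = e₂ ∧ e₂ = e₃ := by
  intro e₁ e₂ e₃ H1 H2 H3
  obtain ⟨P1, hP1deg, ⟨N1, hN1⟩, he1⟩ := H1
  obtain ⟨P2, hP2deg, ⟨N2, hN2⟩, he2⟩ := H2
  obtain ⟨P3, hP3deg, ⟨N3, hN3⟩, he3⟩ := H3
  obtain ⟨N0, hN0⟩ := hjr
  set Q := Ideal.span (Set.range x) with hQdef
  have hQJ : Q ≤ J := Ideal.span_le.2 (by rintro _ ⟨j, rfl⟩; exact hxJ j)
  have hQm : Q ≤ maximalIdeal A := hQJ.trans (hJ ▸ Ideal.le_radical)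
  let N := max N1 N0 + 1
  let L : Ideal A := ∏ i, I i ^ N
  let W : ℕ → Submodule A M := fun n => (J ^ n * L) • ⊤
  have hWanti : ∀ a b, a ≤ b → W b ≤ W a := fun a b hab =>
    Submodule.smul_mono_left (Ideal.mul_mono_left (Ideal.pow_le_pow_right hab))
  -- univariate polynomial
  have hP1deg' : P1.totalDegree ≤ d - 1 := by simpa using hP1deg
  obtain ⟨p, hpdeg, hpcoeff, hpeval⟩ := mv_to_uni P1 (d - 1) N hP1deg'
  obtain ⟨G, hGdeg, hGcoeff, hGeval⟩ := exists_sum_poly p (d - 1) hpdeg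
  have hd1 : d - 1 + 1 = d := by omega
  rw [hd1] at hGdeg hGcoeff
  have hstep : ∀ n, N ≤ n → ∃ a : ℕ, rlen (W n) (W (n + 1)) = a ∧ (a : ℚ) = p.eval (n : ℚ) := by
    intro n hn
    obtain ⟨hfl, hlen⟩ := hN1 (Fin.cons n (fun _ => N)) (by
      intro i
      refine Fin.cases ?_ (fun i => ?_) i
      · simp only [Fin.cons_zero]; omega
      · simp only [Fin.cons_succ]; omega)
    refine ⟨_, (coe_lenNat hfl).symm, ?_⟩
    rw [hlen, hpeval]
    congr 1
    congr 1
    funext i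
    refine Fin.cases ?_ (fun i => ?_) i <;> simp
  have hsum : ∀ m, ∃ a : ℕ, rlen (W N) (W (N + m)) = a ∧
      (a : ℚ) = G.eval ((N + m : ℕ) : ℚ) - G.eval (N : ℚ) := by
    intro m
    induction m with
    | zero =>
      refine ⟨0, ?_, by simp⟩
      have : Subsingleton (↥(W N) ⧸ (W N).comap (W N).subtype) := by
        rw [Submodule.Quotient.subsingleton_iff, eq_top_iff]
        exact fun z _ => z.2
      exact Module.length_eq_zero
    | succ m ih =>
      obtain ⟨a, ha, ha'⟩ := ih
      obtain ⟨b, hb, hb'⟩ := hstep (N + m) (Nat.le_add_right _ _)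
      refine ⟨b + a, ?_, ?_⟩
      · rw [← Nat.add_assoc, rlen_add (hWanti _ _ (Nat.le_succ (N + m)))
          (hWanti _ _ (Nat.le_add_right N m)), ha]
        rw [hb]; push_cast; rfl
      · rw [← Nat.add_assoc, hGeval (N + m + 1), Finset.sum_range_succ, ← hGeval]
        push_cast at ha' hb' ⊢
        rw [ha', hb']; ring
  let H : Polynomial ℚ := G - Polynomial.C (G.eval (N : ℚ))
  have hHdeg : H.natDegree ≤ d := by rw [Polynomial.natDegree_sub_C]; exact hGdeg
  have hHcoeff : H.coeff d = G.coeff d := by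
    simp [H, Polynomial.coeff_C, hd.ne']
  have hH : ∀ n, N ≤ n → ∃ a : ℕ, rlen (W N) (W n) = a ∧ (a : ℚ) = H.eval (n : ℚ) := by
    intro n hn
    obtain ⟨m, rfl⟩ := Nat.exists_eq_add_of_le hn
    obtain ⟨a, ha, ha'⟩ := hsum m
    exact ⟨a, ha, by simpa [H] using ha'⟩
  have hq2 : ∀ n, N2 ≤ n → ∃ a : ℕ, qlen (J ^ n • (⊤ : Submodule A M)) = a ∧
      (a : ℚ) = P2.eval (n : ℚ) := fun n hn =>
    ⟨_, (coe_lenNat (hN2 n hn).1).symm, (hN2 n hn).2⟩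
  have hq3 : ∀ n, N3 ≤ n → ∃ a : ℕ, qlen (Q ^ n • (⊤ : Submodule A M)) = a ∧
      (a : ℚ) = P3.eval (n : ℚ) := fun n hn =>
    ⟨_, (coe_lenNat (hN3 n hn).1).symm, (hN3 n hn).2⟩
  -- (a)
  have ha : H.coeff d ≤ P2.coeff d := by
    obtain ⟨c, hc⟩ := Ideal.exists_pow_inf_eq_pow_smul J (L • (⊤ : Submodule A M))
    refine coeff_le_of_eventually H P2 d c 0 hd hHdeg hP2deg ⟨max N N2, fun n hn => ?_⟩
    obtain ⟨a, ha, ha'⟩ := hH n (by omega)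
    obtain ⟨b, hb, hb'⟩ := hq2 (n + c) (by omega)
    rw [← ha', ← hb', zero_mul, add_zero]
    have hle : rlen (W N) (W n) ≤ qlen (J ^ (n + c) • (⊤ : Submodule A M)) := by
      refine le_trans (rlen_anti ?_) ((qlen_eq (W N) _).symm ▸ le_self_add)
      have h1 := hc (n + c) (Nat.le_add_left _ _)
      rw [Nat.add_sub_cancel] at h1
      have h2 : W N ≤ L • (⊤ : Submodule A M) := Submodule.smul_mono_left Ideal.mul_le_right
      calc W N ⊓ J ^ (n + c) • ⊤ ≤ J ^ (n + c) • ⊤ ⊓ L • ⊤ := by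
            rw [inf_comm]; exact inf_le_inf_left _ h2
        _ = J ^ n • (J ^ c • ⊤ ⊓ L • ⊤) := h1
        _ ≤ J ^ n • (L • ⊤) := Submodule.smul_mono le_rfl inf_le_right
        _ = W n := (Submodule.mul_smul _ _ _).symm
    rw [ha, hb] at hle
    exact_mod_cast hle
  -- (b)
  have hb : P2.coeff d ≤ P3.coeff d := by
    refine coeff_le_of_eventually P2 P3 d 0 0 hd hP2deg hP3deg ⟨max N2 N3, fun n hn => ?_⟩
    obtain ⟨a, ha, ha'⟩ := hq2 n (by omega)
    obtain ⟨b, hb, hb'⟩ := hq3 n (by omega)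
    rw [← ha', Nat.add_zero, ← hb', zero_mul, add_zero]
    have hle : qlen (J ^ n • (⊤ : Submodule A M)) ≤ qlen (Q ^ n • (⊤ : Submodule A M)) :=
      qlen_anti (Submodule.smul_mono_left (Ideal.pow_right_mono hQJ n))
    rw [ha, hb] at hle
    exact_mod_cast hle
  -- (c)
  have hc : P3.coeff d ≤ H.coeff d := by
    obtain ⟨c, hc⟩ := growth (M := M) (J ^ N * L) Q d hd hdim hQm
      (height_pos_aux J hJ I d hd hdim hht N) hsop.2.2
    have hred : ∀ n, W (N + n) = Q ^ n • W N := by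
      intro n
      induction n with
      | zero => simp
      | succ n ih =>
        have h1 := hN0 (Fin.cons (N + n) (fun _ => N - 1)) (by
          intro i
          refine Fin.cases ?_ (fun i => ?_) i
          · simp only [Fin.cons_zero]; omega
          · simp only [Fin.cons_succ]; omega)
        simp only [Fin.cons_zero, Fin.cons_succ] at h1
        have h2 : W (N + (n + 1)) = Q • W (N + n) := h1
        rw [h2, ih, ← Submodule.mul_smul, ← pow_succ']
    refine coeff_le_of_eventually P3 H d N c hd hP3deg hHdeg ⟨N3 + 1, fun n hn => ?_⟩
    obtain ⟨a, ha, ha'⟩ := hH (n + N) (by omega)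
    obtain ⟨b, hb, hb'⟩ := hq3 n (by omega)
    rw [← ha', ← hb']
    have hle : qlen (Q ^ n • (⊤ : Submodule A M)) ≤
        rlen (W N) (W (n + N)) + ((c * n ^ (d - 1) : ℕ) : ℕ∞) := by
      rw [qlen_eq (W N)]
      refine add_le_add (rlen_anti ?_) (hc n (by omega))
      rw [Nat.add_comm, hred]
      exact inf_le_right.trans (Submodule.smul_mono le_rfl le_top)
    rw [ha, hb] at hle
    exact_mod_cast hle
  have e12 : H.coeff d = P2.coeff d := le_antisymm ha (hb.trans hc)
  have e23 : P2.coeff d = P3.coeff d := le_antisymm hb (hc.trans ha)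
  have hfac : (Nat.factorial d : ℚ) = d * (Nat.factorial (d - 1) : ℚ) := by
    exact_mod_cast (Nat.mul_factorial_pred hd.ne').symm
  have he1' : (e₁ : ℚ) = H.coeff d * (Nat.factorial d : ℚ) := by
    rw [he1, hHcoeff, hfac, ← mul_assoc]
    have : ((d - 1 : ℕ) : ℚ) + 1 = d := by exact_mod_cast hd1
    rw [this] at hGcoeff
    rw [hGcoeff, hpcoeff]
    simp
  constructor
  · have : (e₁ : ℚ) = e₂ := by rw [he1', he2, e12]
    exact_mod_cast this
  · have : (e₂ : ℚ) = e₃ := by rw [he2, he3, e23]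
    exact_mod_cast this
end
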